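/- Let 0 < θ < 1/2, ℓ ∈ ℕ and σ > 0. There exists a constant C, depending only on Ω, θ, ℓ and σ, such that the following holds for every conforming triangulation 𝒯 of Ω with σ_𝒯 ≥ σ. Let w ∈ H¹(Ω) be continuous on the closure of Ω with w = 0 on ∂Ω and |w|_{1+θ,Ω} < ∞, let I_𝒯w be any element of V_𝒯 that agrees with w at every node of 𝒩_ℓ, and set w̃ := w − I_𝒯w. Then for every vertex z ∈ 𝒱 and all x, y ∈ ω_z: |w̃(x) − w̃(y)| ≤ C · |x − y|^θ · |w|_{1+θ, int ω_z}. Moreover, if c = w̃(x^z) for some x^z ∈ ω_z, then for every triangle T ∈ 𝒯 with z ∈ T and every edge E of 𝒯 with z ∈ E: ‖w̃ − c‖_{L²(T)} ≤ C · h_T^{1+θ} · |w|_{1+θ, int ω_z} and ‖w̃ − c‖_{L²(E)} ≤ C · h_E^{1/2+θ} · |w|_{1+θ, int ω_z}, where h_E is the length of E and the integral over E is with respect to the 1-dimensional Hausdorff measure. -/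

import Mathlib

open MeasureTheory Metric Set Filter
open scoped Topology NNReal ENNReal

noncomputable section

abbrev E2 := EuclideanSpace ℝ (Fin 2)

/-- Squared Gagliardo seminorm of order `s` on `G ⊆ ℝ²`. -/
def gagSq (s : ℝ) (G : Set E2) (v : E2 → ℝ) : ℝ :=
  ∫ x in G, ∫ y in G, (v x - v y) ^ 2 / dist x y ^ (2 + 2 * s)

/-- Gagliardo seminorm. -/
def gagSemi (s : ℝ) (G : Set E2) (v : E2 → ℝ) : ℝ := Real.sqrt (gagSq s G v)

/-- Finiteness of the Gagliardo seminorm. -/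
def GagFin (s : ℝ) (G : Set E2) (v : E2 → ℝ) : Prop :=
  Integrable (fun p : E2 × E2 => (v p.1 - v p.2) ^ 2 / dist p.1 p.2 ^ (2 + 2 * s))
    ((volume.restrict G).prod (volume.restrict G))

/-- Test functions: smooth compactly supported functions with support in `G`. -/
def IsTestFun (G : Set E2) (φ : E2 → ℝ) : Prop :=
  ContDiff ℝ (⊤ : ℕ∞) φ ∧ HasCompactSupport φ ∧ tsupport φ ⊆ G

/-- Partial derivative in the `i`-th coordinate direction. -/
def pd (i : Fin 2) (f : E2 → ℝ) (x : E2) : ℝ := fderiv ℝ f x (EuclideanSpace.single i 1)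

/-- Laplacian. -/
def lap (f : E2 → ℝ) (x : E2) : ℝ := ∑ i : Fin 2, pd i (pd i f) x

/-- Weak partial derivative on an open set. -/
def HasWeakPD (G : Set E2) (i : Fin 2) (v g : E2 → ℝ) : Prop :=
  ∀ φ : E2 → ℝ, IsTestFun G φ →
    (∫ x in G, v x * pd i φ x) = - ∫ x in G, g x * φ x

/-- Membership in `H_0^s`, `0 < s < 1`. -/
def MemH0 (s : ℝ) (Ω : Set E2) (v : E2 → ℝ) : Prop :=
  MemLp v 2 (volume.restrict Ω) ∧
  ∃ φ : ℕ → E2 → ℝ, (∀ n, IsTestFun Ω (φ n)) ∧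
    Tendsto (fun n => Real.sqrt ((∫ x in Ω, (v x - φ n x) ^ 2) +
      gagSq s Ω fun x => v x - φ n x)) atTop (nhds 0)

/-- Lipschitz boundary: near every boundary point the set is the region above
the graph of a Lipschitz function in some direction `ν`. -/
def HasLipschitzBoundary (G : Set E2) : Prop :=
  ∀ x ∈ frontier G, ∃ (ν : E2) (L : NNReal) (γ : E2 → ℝ) (U : Set E2),
    ‖ν‖ = 1 ∧ LipschitzWith L γ ∧ IsOpen U ∧ x ∈ U ∧
    G ∩ U = {y ∈ U | γ (y - (inner ℝ y ν : ℝ) • ν) < (inner ℝ y ν : ℝ)}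

/-- Polygonal set: the boundary is a finite union of segments. -/
def IsPolygonal (Ω : Set E2) : Prop :=
  ∃ S : Finset (E2 × E2), frontier Ω = ⋃ p ∈ S, segment ℝ p.1 p.2

/-- The closed triangle spanned by three points. -/
def triSet (t : Fin 3 → E2) : Set E2 := convexHull ℝ (Set.range t)

/-- The edge of a triangle opposite to the vertex `t j`. -/
def edgeSeg (t : Fin 3 → E2) (j : Fin 3) : Set E2 := segment ℝ (t (j + 1)) (t (j + 2))

/-- All interior angles of the triangle `t` are at least `σ`. -/
def angleLB (σ : ℝ) (t : Fin 3 → E2) : Prop :=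
  ∀ i : Fin 3, σ ≤ EuclideanGeometry.angle (t (i + 1)) (t i) (t (i + 2))

/-- A conforming triangulation of `Ω`. -/
structure Triangulation (Ω : Set E2) where
  tris : Finset (Fin 3 → E2)
  nondeg : ∀ t ∈ tris, AffineIndependent ℝ t
  cover : (⋃ t ∈ tris, triSet t) = closure Ω
  conform : ∀ t₁ ∈ tris, ∀ t₂ ∈ tris, t₁ ≠ t₂ →
    triSet t₁ ∩ triSet t₂ = ∅ ∨
    (∃ i j : Fin 3, t₁ i = t₂ j ∧ triSet t₁ ∩ triSet t₂ = {t₁ i}) ∨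
    (∃ i j : Fin 3, edgeSeg t₁ i = edgeSeg t₂ j ∧ triSet t₁ ∩ triSet t₂ = edgeSeg t₁ i)

/-- Minimum-angle condition for a triangulation. -/
def Triangulation.angleGE {Ω : Set E2} (𝒯 : Triangulation Ω) (σ : ℝ) : Prop :=
  ∀ t ∈ 𝒯.tris, angleLB σ t

/-- Local mesh size `h_T = |T|^{1/2}`. -/
def hT (t : Fin 3 → E2) : ℝ := Real.sqrt (volume (triSet t)).toReal

/-- Evaluation of a polynomial in two variables. -/
def pfun (p : MvPolynomial (Fin 2) ℝ) (x : E2) : ℝ := MvPolynomial.eval (fun i => x i) p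

/-- The finite element space `V_𝒯` of continuous piecewise polynomials of degree `≤ ℓ`
vanishing on the boundary. -/
def MemV (Ω : Set E2) (𝒯 : Triangulation Ω) (ℓ : ℕ) (V : E2 → ℝ) : Prop :=
  ContinuousOn V (closure Ω) ∧ (∀ x ∈ frontier Ω, V x = 0) ∧
  ∀ t ∈ 𝒯.tris, ∃ p : MvPolynomial (Fin 2) ℝ, p.totalDegree ≤ ℓ ∧
    ∀ x ∈ triSet t, V x = pfun p x

/-- A Galerkin solution for the point sources `(xs j, α j)`. -/
def IsGalerkin (Ω : Set E2) (𝒯 : Triangulation Ω) (ℓ : ℕ) {N : ℕ}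
    (xs : Fin N → E2) (α : Fin N → ℝ) (U : E2 → ℝ) : Prop :=
  MemV Ω 𝒯 ℓ U ∧ ∀ V : E2 → ℝ, MemV Ω 𝒯 ℓ V →
    (∫ x in Ω, ∑ i : Fin 2, pd i U x * pd i V x) = ∑ j, α j * V (xs j)

/-- The exact solution of `-Δu = Σ α_j δ_{x_j}` in `H_0^s(Ω)`. -/
def IsExact (Ω : Set E2) (s : ℝ) {N : ℕ} (xs : Fin N → E2) (α : Fin N → ℝ)
    (u : E2 → ℝ) : Prop :=
  MemH0 s Ω u ∧ ∀ φ : E2 → ℝ, IsTestFun Ω φ →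
    (∫ x in Ω, u x * (-(lap φ x))) = ∑ j, α j * φ (xs j)

/-- A family of polynomials representing a piecewise polynomial `U` on the triangulation. -/
def PolyRep (Ω : Set E2) (𝒯 : Triangulation Ω) (ℓ : ℕ) (U : E2 → ℝ)
    (P : (Fin 3 → E2) → MvPolynomial (Fin 2) ℝ) : Prop :=
  ∀ t ∈ 𝒯.tris, (P t).totalDegree ≤ ℓ ∧ ∀ x ∈ triSet t, U x = pfun (P t) x

/-- Laplacian of a polynomial. -/
def lapP (p : MvPolynomial (Fin 2) ℝ) : E2 → ℝ :=
  pfun (MvPolynomial.pderiv (0 : Fin 2) (MvPolynomial.pderiv (0 : Fin 2) p) +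
        MvPolynomial.pderiv (1 : Fin 2) (MvPolynomial.pderiv (1 : Fin 2) p))

/-- Gradient of a polynomial. -/
def gradP (p : MvPolynomial (Fin 2) ℝ) (x : E2) : E2 :=
  EuclideanSpace.single 0 (pfun (MvPolynomial.pderiv (0 : Fin 2) p) x) +
  EuclideanSpace.single 1 (pfun (MvPolynomial.pderiv (1 : Fin 2) p) x)

/-- Rotation by 90 degrees. -/
def rot (v : E2) : E2 := EuclideanSpace.single 0 (v 1) - EuclideanSpace.single 1 (v 0)

/-- Outward unit normal of the edge `[a,b]` of the triangle `[a,b,c]`, pointing away from `c`. -/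
def nrml (a b c : E2) : E2 :=
  if (inner ℝ (‖rot (b - a)‖⁻¹ • rot (b - a)) (c - a) : ℝ) ≤ 0 then
    ‖rot (b - a)‖⁻¹ • rot (b - a)
  else -(‖rot (b - a)‖⁻¹ • rot (b - a))

open Classical in
/-- The squared `L²` norm over the edge `edgeSeg t j` of the jump of the normal flux of the
piecewise polynomial with pieces `P`. -/
def jumpSqInt (𝒯 : Finset (Fin 3 → E2)) (P : (Fin 3 → E2) → MvPolynomial (Fin 2) ℝ)
    (t : Fin 3 → E2) (j : Fin 3) : ℝ :=
  if h : ∃ t', t' ∈ 𝒯 ∧ t' ≠ t ∧ triSet t ∩ triSet t' = edgeSeg t j then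
    ∫ x in edgeSeg t j,
      (inner ℝ (gradP (P t) x - gradP (P h.choose) x)
        (‖rot (t (j + 2) - t (j + 1))‖⁻¹ • rot (t (j + 2) - t (j + 1))) : ℝ) ^ 2 ∂(μH[1])
  else 0

/-- Squared error indicator `η_{T,θ}²`. -/
def etaSq (θ : ℝ) {Ω : Set E2} (𝒯 : Triangulation Ω)
    (P : (Fin 3 → E2) → MvPolynomial (Fin 2) ℝ) (t : Fin 3 → E2) : ℝ :=
  hT t ^ (2 + 2 * θ) * (∫ x in triSet t, (lapP (P t) x) ^ 2) +
  hT t ^ (1 + 2 * θ) * ∑ j : Fin 3, jumpSqInt 𝒯.tris P t j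

/-- The vertices of a triangulation. -/
def Triangulation.verts {Ω : Set E2} (𝒯 : Triangulation Ω) : Finset E2 :=
  letI := Classical.decEq E2
  𝒯.tris.biUnion fun t => {t 0, t 1, t 2}

/-- The star `ω_z` around a vertex `z`. -/
def starZ {Ω : Set E2} (𝒯 : Triangulation Ω) (z : E2) : Set E2 :=
  ⋃ t ∈ 𝒯.tris, ⋃ (_ : ∃ i, t i = z), triSet t

/-- The hat function `λ_z`: continuous, piecewise affine, `1` at `z`, `0` at other vertices. -/
def IsHat (Ω : Set E2) (𝒯 : Triangulation Ω) (z : E2) (lam : E2 → ℝ) : Prop :=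
  ContinuousOn lam (closure Ω) ∧
  (∀ t ∈ 𝒯.tris, ∃ f : E2 →ᵃ[ℝ] ℝ, ∀ x ∈ triSet t, lam x = f x) ∧
  lam z = 1 ∧ ∀ z' ∈ 𝒯.verts, z' ≠ z → lam z' = 0

/-- Lagrange nodes of order `ℓ` of a triangle. -/
def lagNodes (ℓ : ℕ) (t : Fin 3 → E2) : Set E2 :=
  {x | ∃ a : Fin 3 → ℕ, (∑ i, a i) = ℓ ∧ x = (ℓ : ℝ)⁻¹ • ∑ i, (a i : ℝ) • t i}

/-- The nodes `𝒩_ℓ` lying in `Ω`. -/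
def nodes (Ω : Set E2) (𝒯 : Triangulation Ω) (ℓ : ℕ) : Set E2 :=
  {x ∈ Ω | ∃ t ∈ 𝒯.tris, x ∈ lagNodes ℓ t}

/-- `N̂_ℓ = 𝒩_ℓ ∪ ∂Ω`. -/
def nodesHat (Ω : Set E2) (𝒯 : Triangulation Ω) (ℓ : ℕ) : Set E2 :=
  nodes Ω 𝒯 ℓ ∪ frontier Ω

open Classical in
/-- `A_z^+`. -/
def Aplus (Ω : Set E2) (𝒯 : Triangulation Ω) (ℓ : ℕ) {N : ℕ}
    (xs : Fin N → E2) (α : Fin N → ℝ) (z : E2) : Finset (Fin N) :=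
  Finset.univ.filter fun j => xs j ∈ starZ 𝒯 z \ nodes Ω 𝒯 ℓ ∧ 0 < α j

open Classical in
/-- `A_z^-`. -/
def Aminus (Ω : Set E2) (𝒯 : Triangulation Ω) (ℓ : ℕ) {N : ℕ}
    (xs : Fin N → E2) (α : Fin N → ℝ) (z : E2) : Finset (Fin N) :=
  Finset.univ.filter fun j => xs j ∈ starZ 𝒯 z \ nodes Ω 𝒯 ℓ ∧ α j < 0

/-- `σ^+_{z,j}`. -/
def sigPlus (Ω : Set E2) (𝒯 : Triangulation Ω) (ℓ : ℕ) (θ : ℝ) {N : ℕ}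
    (xs : Fin N → E2) (α : Fin N → ℝ) (z : E2) (j : Fin N) : ℝ :=
  if h : (Aminus Ω 𝒯 ℓ xs α z).Nonempty then
    min (infDist (xs j) (nodesHat Ω 𝒯 ℓ) ^ θ +
          (Aminus Ω 𝒯 ℓ xs α z).sup' h fun i => infDist (xs i) (nodesHat Ω 𝒯 ℓ) ^ θ)
        ((Aminus Ω 𝒯 ℓ xs α z).sup' h fun i => dist (xs j) (xs i) ^ θ)
  else 0

/-- `σ^-_{z,j}`. -/
def sigMinus (Ω : Set E2) (𝒯 : Triangulation Ω) (ℓ : ℕ) (θ : ℝ) {N : ℕ}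
    (xs : Fin N → E2) (α : Fin N → ℝ) (z : E2) (j : Fin N) : ℝ :=
  if h : (Aplus Ω 𝒯 ℓ xs α z).Nonempty then
    min (infDist (xs j) (nodesHat Ω 𝒯 ℓ) ^ θ +
          (Aplus Ω 𝒯 ℓ xs α z).sup' h fun i => infDist (xs i) (nodesHat Ω 𝒯 ℓ) ^ θ)
        ((Aplus Ω 𝒯 ℓ xs α z).sup' h fun i => dist (xs j) (xs i) ^ θ)
  else 0

open Classical in
/-- Local oscillation `ξ_θ(z)`, given the family `Λ` of hat functions. -/
def xiZ (Ω : Set E2) (𝒯 : Triangulation Ω) (ℓ : ℕ) (θ : ℝ) {N : ℕ}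
    (xs : Fin N → E2) (α : Fin N → ℝ) (Λ : E2 → E2 → ℝ) (z : E2) : ℝ :=
  if z ∈ frontier Ω then
    ∑ j, infDist (xs j) (nodesHat Ω 𝒯 ℓ) ^ θ * |α j| * Λ z (xs j)
  else
    min (∑ j ∈ Aplus Ω 𝒯 ℓ xs α z, sigPlus Ω 𝒯 ℓ θ xs α z j * |α j| * Λ z (xs j))
        (∑ j ∈ Aminus Ω 𝒯 ℓ xs α z, sigMinus Ω 𝒯 ℓ θ xs α z j * |α j| * Λ z (xs j))

/-- Global oscillation `ξ_θ`. -/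
def xiGlob (Ω : Set E2) (𝒯 : Triangulation Ω) (ℓ : ℕ) (θ : ℝ) {N : ℕ}
    (xs : Fin N → E2) (α : Fin N → ℝ) (Λ : E2 → E2 → ℝ) : ℝ :=
  Real.sqrt (∑ z ∈ 𝒯.verts, (xiZ Ω 𝒯 ℓ θ xs α Λ z) ^ 2)


section

/-- homothety -/
def hom (x : E2) (s : ℝ) (y : E2) : E2 := x + s • (y - x)

lemma hom_mem {K : Set E2} (hK : Convex ℝ K) {x y : E2} (hx : x ∈ K) (hy : y ∈ K) {s : ℝ}
    (h0 : 0 ≤ s) (h1 : s ≤ 1) : hom x s y ∈ K :=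
  hK.add_smul_sub_mem hx hy ⟨h0, h1⟩

lemma continuous_hom (x : E2) (s : ℝ) : Continuous (hom x s) := by
  unfold hom; fun_prop

lemma lint_hom {K : Set E2} (hK : Convex ℝ K) (hKm : MeasurableSet K) {x : E2} (hx : x ∈ K)
    {s : ℝ} (h0 : 0 < s) (h1 : s ≤ 1) {φ : E2 → ℝ≥0∞} (hφ : Measurable φ) :
    ∫⁻ y in K, φ (hom x s y) ≤ ENNReal.ofReal ((s ^ 2)⁻¹) * ∫⁻ y in K, φ y := by
  rw [← lintegral_indicator hKm, ← lintegral_indicator hKm]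
  set ψ := K.indicator φ with hψ
  have hψm : Measurable ψ := hφ.indicator hKm
  calc ∫⁻ a, K.indicator (fun y => φ (hom x s y)) a
      ≤ ∫⁻ a, ψ (hom x s a) := by
        apply lintegral_mono
        intro a
        by_cases ha : a ∈ K
        · simp [ha, hψ, hom_mem hK hx ha h0.le h1]
        · simp [ha]
    _ = ∫⁻ u, ψ (x + s • u) := by
        exact lintegral_sub_right_eq_self (fun u => ψ (x + s • u)) x
    _ = ∫⁻ v, ψ (x + v) ∂(Measure.map (fun u : E2 => s • u) volume) := by
        rw [lintegral_map]
        · exact hψm.comp (by fun_prop)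
        · fun_prop
    _ = ENNReal.ofReal ((s ^ 2)⁻¹) * ∫⁻ v, ψ (x + v) := by
        rw [Measure.map_addHaar_smul volume h0.ne', lintegral_smul_measure]
        simp [abs_of_pos h0]
    _ = _ := by rw [lintegral_add_left_eq_self]

/-- the Gagliardo kernel -/
def gk (θ : ℝ) (f : E2 → ℝ) (p : E2 × E2) : ℝ :=
  (f p.1 - f p.2) ^ 2 / dist p.1 p.2 ^ (2 + 2 * θ)

def gagE (θ : ℝ) (G : Set E2) (f : E2 → ℝ) : ℝ≥0∞ :=
  ∫⁻ x in G, ∫⁻ y in G, ENNReal.ofReal (gk θ f (x, y))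

lemma gk_nonneg (θ : ℝ) (f : E2 → ℝ) (p : E2 × E2) : 0 ≤ gk θ f p := by
  unfold gk; positivity

lemma measurable_gk (θ : ℝ) {f : E2 → ℝ} (hf : Measurable f) : Measurable (gk θ f) := by
  unfold gk
  exact (((hf.comp measurable_fst).sub (hf.comp measurable_snd)).pow_const 2).div
    ((measurable_fst.dist measurable_snd).pow_const _)

lemma sq_le_gk {θ : ℝ} (hθ : 0 < θ) (f : E2 → ℝ) {a b : E2} {d : ℝ} (hd : dist a b ≤ d) :
    (f a - f b) ^ 2 ≤ d ^ (2 + 2 * θ) * gk θ f (a, b) := by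
  unfold gk
  rcases eq_or_ne a b with rfl | hab
  · simp
  · have h1 : 0 < dist a b := dist_pos.2 hab
    have h2 : 0 < dist a b ^ (2 + 2 * θ) := Real.rpow_pos_of_pos h1 _
    have h3 : dist a b ^ (2 + 2 * θ) ≤ d ^ (2 + 2 * θ) :=
      Real.rpow_le_rpow h1.le hd (by linarith)
    calc (f a - f b) ^ 2 = dist a b ^ (2 + 2 * θ) * ((f a - f b) ^ 2 / dist a b ^ (2 + 2 * θ)) := by
          field_simp
      _ ≤ _ := by gcongr

lemma dist_hom {K : Set E2} (hK : Convex ℝ K) {x : E2} (hx : x ∈ K) {h s t : ℝ}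
    (hdiam : ∀ a ∈ K, ∀ b ∈ K, dist a b ≤ h) (h0 : 0 < s) (hst : s ≤ t)
    {y y' : E2} (hy : y ∈ K) (hy' : y' ∈ K) :
    dist (hom x s y) (hom x t y') ≤ t * h := by
  have ht : 0 < t := h0.trans_le hst
  have h1 : hom x (s / t) y ∈ K := hom_mem hK hx hy (by positivity) (by rw [div_le_one ht]; exact hst)
  have h2 := hdiam _ h1 _ hy'
  have h3 : hom x s y - hom x t y' = t • (hom x (s / t) y - y') := by
    have : t * (s / t) = s := by field_simp
    unfold hom
    simp only [smul_add, smul_sub, smul_smul, this]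
    module
  rw [dist_eq_norm, h3, norm_smul, Real.norm_of_nonneg ht.le, ← dist_eq_norm]
  gcongr

lemma gag_hom {K : Set E2} (hK : Convex ℝ K) (hKm : MeasurableSet K) {x : E2} (hx : x ∈ K)
    {θ h s t : ℝ} (hθ : 0 < θ) (hh : 0 < h)
    (hdiam : ∀ a ∈ K, ∀ b ∈ K, dist a b ≤ h) (h0 : 0 < s) (hst : s ≤ t) (ht1 : t ≤ 1)
    {F : E2 → ℝ} (hF : Measurable F) :
    ∫⁻ y in K, ∫⁻ y' in K, ENNReal.ofReal ((F (hom x s y) - F (hom x t y')) ^ 2) ≤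
      ENNReal.ofReal ((t * h) ^ (2 + 2 * θ) * (s ^ 2)⁻¹ * (t ^ 2)⁻¹) * gagE θ K F := by
  have ht : 0 < t := h0.trans_le hst
  have hg := measurable_gk θ hF
  have hth : 0 ≤ (t * h) ^ (2 + 2 * θ) := by positivity
  calc _ ≤ ∫⁻ y in K, ∫⁻ y' in K, ENNReal.ofReal ((t * h) ^ (2 + 2 * θ)) *
        ENNReal.ofReal (gk θ F (hom x s y, hom x t y')) := by
        refine setLIntegral_mono' hKm fun y hy => setLIntegral_mono' hKm fun y' hy' => ?_
        rw [← ENNReal.ofReal_mul hth]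
        exact ENNReal.ofReal_le_ofReal
          (sq_le_gk hθ F (dist_hom hK hx hdiam h0 hst hy hy'))
    _ ≤ ∫⁻ y in K, ENNReal.ofReal ((t * h) ^ (2 + 2 * θ)) * (ENNReal.ofReal ((t ^ 2)⁻¹) *
        ∫⁻ y' in K, ENNReal.ofReal (gk θ F (hom x s y, y'))) := by
        refine setLIntegral_mono' hKm fun y hy => ?_
        rw [lintegral_const_mul' _ _ ENNReal.ofReal_ne_top]
        gcongr
        exact lint_hom hK hKm hx ht ht1 (φ := fun y' => ENNReal.ofReal (gk θ F (hom x s y, y')))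
          (hg.comp (by fun_prop)).ennreal_ofReal
    _ = ENNReal.ofReal ((t * h) ^ (2 + 2 * θ)) * (ENNReal.ofReal ((t ^ 2)⁻¹) *
        ∫⁻ y in K, (fun a => ∫⁻ y' in K, ENNReal.ofReal (gk θ F (a, y'))) (hom x s y)) := by
        rw [lintegral_const_mul' _ _ ENNReal.ofReal_ne_top,
          lintegral_const_mul' _ _ ENNReal.ofReal_ne_top]
    _ ≤ ENNReal.ofReal ((t * h) ^ (2 + 2 * θ)) * (ENNReal.ofReal ((t ^ 2)⁻¹) *
        (ENNReal.ofReal ((s ^ 2)⁻¹) * gagE θ K F)) := by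
        gcongr
        exact lint_hom hK hKm hx h0 (hst.trans ht1)
          (φ := (fun a => ∫⁻ y' in K, ENNReal.ofReal (gk θ F (a, y'))))
          (Measurable.lintegral_prod_right' hg.ennreal_ofReal)
    _ = _ := by
        rw [← mul_assoc, ← mul_assoc, ← ENNReal.ofReal_mul hth, ← ENNReal.ofReal_mul (by positivity)]
        congr 2; ring

/-- double average of differences -/
lemma avg_diff {K : Set E2} (hK : Convex ℝ K) (hKc : IsCompact K) {x : E2} (hx : x ∈ K)
    {θ h s t c M : ℝ} (hθ : 0 < θ) (hh : 0 < h) (hc : 0 < c) (hM : 0 < M)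
    (hV : c * h ^ 2 ≤ volume.real K)
    (hdiam : ∀ a ∈ K, ∀ b ∈ K, dist a b ≤ h) (h0 : 0 < s) (hst : s ≤ t) (hts : t ≤ 2 * s)
    (ht1 : t ≤ 1)
    {F : E2 → ℝ} (hF : Continuous F) (hgag : gagE θ K F ≤ ENNReal.ofReal (M ^ 2)) :
    ∫ y in K, ∫ y' in K, |F (hom x s y) - F (hom x t y')| ≤
      volume.real K ^ 2 * (2 / c * (h ^ (θ - 1) * t ^ (θ - 1)) * M) := by
  have ht : 0 < t := h0.trans_le hst
  set V := volume.real K with hVdef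
  have hVpos : 0 < V := lt_of_lt_of_le (by positivity) hV
  set lam : ℝ := 2 / c * (h ^ (θ - 1) * t ^ (θ - 1)) * M with hlam
  have hlampos : 0 < lam := by positivity
  have hKm := hKc.measurableSet
  have : IsFiniteMeasure (volume.restrict K) := ⟨by simpa using hKc.measure_lt_top⟩
  have hc1 : Continuous (fun p : E2 × E2 => F (hom x s p.1) - F (hom x t p.2)) :=
    (hF.comp ((continuous_hom x s).comp continuous_fst)).sub
      (hF.comp ((continuous_hom x t).comp continuous_snd))
  have hIntg : ∀ f : E2 × E2 → ℝ, Continuous f →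
      Integrable f ((volume.restrict K).prod (volume.restrict K)) := by
    intro f hf
    rw [Measure.prod_restrict]
    exact hf.continuousOn.integrableOn_compact (hKc.prod hKc)
  have hsq : ∫ p, (F (hom x s p.1) - F (hom x t p.2)) ^ 2
      ∂((volume.restrict K).prod (volume.restrict K)) ≤ V ^ 2 * lam ^ 2 := by
    rw [integral_eq_lintegral_of_nonneg_ae (Eventually.of_forall fun _ => sq_nonneg _)
      (hc1.pow 2).aestronglyMeasurable]
    apply ENNReal.toReal_le_of_le_ofReal (by positivity)
    have hc2 : Continuous (fun p : E2 × E2 => (F (hom x s p.1) - F (hom x t p.2)) ^ 2) := hc1.pow 2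
    rw [lintegral_prod _ (hc2.measurable.ennreal_ofReal.aemeasurable)]
    refine (gag_hom hK hKm hx hθ hh hdiam h0 hst ht1 hF.measurable).trans ?_
    refine (mul_le_mul_right hgag _).trans ?_
    rw [← ENNReal.ofReal_mul (by positivity)]
    apply ENNReal.ofReal_le_ofReal
    have e1 : (t * h) ^ (2 + 2 * θ) = (t * h) ^ 4 * ((h ^ (θ - 1) * t ^ (θ - 1))) ^ 2 := by
      rw [← Real.mul_rpow hh.le ht.le, ← Real.rpow_natCast, ← Real.rpow_natCast,
        ← Real.rpow_mul (by positivity), mul_comm h t, ← Real.rpow_add (by positivity)]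
      congr 1; push_cast; ring
    rw [e1]
    have hs2 : (s ^ 2)⁻¹ ≤ 4 * (t ^ 2)⁻¹ := by
      rw [inv_eq_one_div, inv_eq_one_div, mul_one_div, div_le_div_iff₀ (by positivity) (by positivity)]
      nlinarith
    have hV2 : 1 ≤ V ^ 2 * (c⁻¹) ^ 2 * (h ^ 4)⁻¹ := by
      have : c ^ 2 * h ^ 4 ≤ V ^ 2 := by
        calc c ^ 2 * h ^ 4 = (c * h ^ 2) ^ 2 := by ring
          _ ≤ _ := by gcongr
      calc (1:ℝ) = (c ^ 2 * h ^ 4) * (c⁻¹) ^ 2 * (h ^ 4)⁻¹ := by field_simp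
        _ ≤ _ := by gcongr
    set r := h ^ (θ - 1) * t ^ (θ - 1) with hr
    calc (t * h) ^ 4 * r ^ 2 * (s ^ 2)⁻¹ * (t ^ 2)⁻¹ * M ^ 2
        ≤ (t * h) ^ 4 * r ^ 2 * (4 * (t ^ 2)⁻¹) * (t ^ 2)⁻¹ * M ^ 2 := by gcongr
      _ = 4 * h ^ 4 * r ^ 2 * M ^ 2 * 1 := by field_simp
      _ ≤ 4 * h ^ 4 * r ^ 2 * M ^ 2 * (V ^ 2 * (c⁻¹) ^ 2 * (h ^ 4)⁻¹) := by gcongr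
      _ = _ := by rw [hlam]; field_simp; ring
  rw [← integral_prod (f := fun p : E2 × E2 => |F (hom x s p.1) - F (hom x t p.2)|)
    (hIntg _ hc1.abs)]
  calc _ ≤ ∫ p, (lam / 2 + (2 * lam)⁻¹ * (F (hom x s p.1) - F (hom x t p.2)) ^ 2)
      ∂((volume.restrict K).prod (volume.restrict K)) := by
        apply integral_mono (hIntg _ hc1.abs)
        · exact hIntg _ (by fun_prop)
        · intro p
          set D := F (hom x s p.1) - F (hom x t p.2)
          show |D| ≤ lam / 2 + (2 * lam)⁻¹ * D ^ 2
          have : lam / 2 + (2 * lam)⁻¹ * D ^ 2 - |D| = (2 * lam)⁻¹ * (lam - |D|) ^ 2 := by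
            rw [← sq_abs D]; field_simp; ring
          have : 0 ≤ (2 * lam)⁻¹ * (lam - |D|) ^ 2 := by positivity
          linarith
    _ = V ^ 2 * (lam / 2) + (2 * lam)⁻¹ * ∫ p, (F (hom x s p.1) - F (hom x t p.2)) ^ 2
      ∂((volume.restrict K).prod (volume.restrict K)) := by
        rw [integral_add (integrable_const _) (hIntg _ (by fun_prop)), integral_const_mul]
        congr 1
        rw [integral_const, Measure.prod_restrict, measureReal_restrict_apply_univ]
        simp only [smul_eq_mul, Measure.real, Measure.prod_prod, ENNReal.toReal_mul]
        rw [hVdef, Measure.real]; ring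
    _ ≤ V ^ 2 * (lam / 2) + (2 * lam)⁻¹ * (V ^ 2 * lam ^ 2) := by gcongr
    _ = _ := by field_simp; ring

end

section

lemma int_hom {K : Set E2} (hKc : IsCompact K) (x : E2) (s : ℝ) {F : E2 → ℝ} (hF : Continuous F) :
    IntegrableOn (fun y => F (hom x s y)) K :=
  (hF.comp (continuous_hom x s)).continuousOn.integrableOn_compact hKc

lemma avg_step {K : Set E2} (hK : Convex ℝ K) (hKc : IsCompact K) {x : E2} (hx : x ∈ K)
    {θ h s t c M : ℝ} (hθ : 0 < θ) (hh : 0 < h) (hc : 0 < c) (hM : 0 < M)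
    (hV : c * h ^ 2 ≤ volume.real K)
    (hdiam : ∀ a ∈ K, ∀ b ∈ K, dist a b ≤ h) (h0 : 0 < s) (hst : s ≤ t) (hts : t ≤ 2 * s)
    (ht1 : t ≤ 1)
    {F : E2 → ℝ} (hF : Continuous F) (hgag : gagE θ K F ≤ ENNReal.ofReal (M ^ 2)) :
    ∫ y in K, |F (hom x s y)| ≤ (∫ y in K, |F (hom x t y)|) +
      volume.real K * (2 / c * (h ^ (θ - 1) * t ^ (θ - 1)) * M) := by
  have h1 := avg_diff hK hKc hx hθ hh hc hM hV hdiam h0 hst hts ht1 hF hgag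
  set V := volume.real K with hVdef
  have hVpos : 0 < V := lt_of_lt_of_le (by positivity) hV
  have : IsFiniteMeasure (volume.restrict K) := ⟨by simpa using hKc.measure_lt_top⟩
  have hc1 : Continuous (fun p : E2 × E2 => |F (hom x s p.1) - F (hom x t p.2)|) :=
    ((hF.comp ((continuous_hom x s).comp continuous_fst)).sub
      (hF.comp ((continuous_hom x t).comp continuous_snd))).abs
  have hIntg : Integrable (fun p : E2 × E2 => |F (hom x s p.1) - F (hom x t p.2)|)
      ((volume.restrict K).prod (volume.restrict K)) := by
    rw [Measure.prod_restrict]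
    exact hc1.continuousOn.integrableOn_compact (hKc.prod hKc)
  have key : ∀ y, V * |F (hom x s y)| ≤ (∫ y' in K, |F (hom x t y')|) +
      ∫ y' in K, |F (hom x s y) - F (hom x t y')| := by
    intro y
    have i1 : IntegrableOn (fun y' => |F (hom x t y')|) K := int_hom hKc x t hF.abs
    have i2 : IntegrableOn (fun y' => |F (hom x s y) - F (hom x t y')|) K :=
      (continuous_const.sub (hF.comp (continuous_hom x t))).abs.continuousOn.integrableOn_compact hKc
    rw [← integral_add i1 i2]
    calc V * |F (hom x s y)| = ∫ y' in K, |F (hom x s y)| := by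
          rw [setIntegral_const, smul_eq_mul]
      _ ≤ _ := by
          refine integral_mono (integrable_const _) (i1.add i2) fun y' => ?_
          have := abs_add_le (F (hom x t y')) (F (hom x s y) - F (hom x t y'))
          simpa using this
  have h2 : V * ∫ y in K, |F (hom x s y)| ≤ V * (∫ y in K, |F (hom x t y)|) +
      ∫ y in K, ∫ y' in K, |F (hom x s y) - F (hom x t y')| := by
    rw [← integral_const_mul]
    calc _ ≤ ∫ y in K, ((∫ y' in K, |F (hom x t y')|) +
      ∫ y' in K, |F (hom x s y) - F (hom x t y')|) := by
          refine integral_mono ?_ ?_ key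
          · exact (int_hom hKc x s hF.abs).const_mul _
          · exact (integrable_const _).add hIntg.integral_prod_left
      _ = _ := by
          rw [integral_add (integrable_const _) hIntg.integral_prod_left, setIntegral_const, smul_eq_mul]
  have h3 : V * (∫ y in K, |F (hom x s y)|) ≤ V * ((∫ y in K, |F (hom x t y)|) +
      V * (2 / c * (h ^ (θ - 1) * t ^ (θ - 1)) * M)) := by
    linarith
  exact le_of_mul_le_mul_left h3 hVpos

lemma avg_one {K : Set E2} (hK : Convex ℝ K) (hKc : IsCompact K) {x : E2} (hx : x ∈ K)
    {θ h c M : ℝ} (hθ : 0 < θ) (hh : 0 < h) (hc : 0 < c) (hM : 0 < M)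
    (hV : c * h ^ 2 ≤ volume.real K)
    (hdiam : ∀ a ∈ K, ∀ b ∈ K, dist a b ≤ h)
    {F : E2 → ℝ} (hF : Continuous F) (hgag : gagE θ K F ≤ ENNReal.ofReal (M ^ 2))
    (hmean : ∫ y in K, F y = 0) :
    ∫ y in K, |F (hom x 1 y)| ≤ volume.real K * (2 / c * (h ^ (θ - 1)) * M) := by
  have h1 := avg_diff hK hKc hx hθ hh hc hM hV hdiam one_pos le_rfl (by norm_num) le_rfl hF hgag
  set V := volume.real K with hVdef
  have hVpos : 0 < V := lt_of_lt_of_le (by positivity) hV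
  have : IsFiniteMeasure (volume.restrict K) := ⟨by simpa using hKc.measure_lt_top⟩
  have hom1 : ∀ y, hom x 1 y = y := fun y => by simp [hom]
  simp only [hom1, Real.one_rpow, mul_one] at h1 ⊢
  have hc1 : Continuous (fun p : E2 × E2 => |F p.1 - F p.2|) := by fun_prop
  have hIntg : Integrable (fun p : E2 × E2 => |F p.1 - F p.2|)
      ((volume.restrict K).prod (volume.restrict K)) := by
    rw [Measure.prod_restrict]
    exact hc1.continuousOn.integrableOn_compact (hKc.prod hKc)
  have iF : IntegrableOn F K := hF.continuousOn.integrableOn_compact hKc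
  have key : ∀ y, V * |F y| ≤ ∫ y' in K, |F y - F y'| := by
    intro y
    have : V * F y = ∫ y' in K, (F y - F y') := by
      rw [integral_sub (integrable_const _) iF, hmean, setIntegral_const, smul_eq_mul, sub_zero]
    rw [← abs_of_pos hVpos, ← abs_mul, this]
    exact abs_integral_le_integral_abs
  have h2 : V * ∫ y in K, |F y| ≤ ∫ y in K, ∫ y' in K, |F y - F y'| := by
    rw [← integral_const_mul]
    exact integral_mono (iF.abs.const_mul _) hIntg.integral_prod_left key
  have h3 : V * (∫ y in K, |F y|) ≤ V * (V * (2 / c * (h ^ (θ - 1)) * M)) := by linarith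
  exact le_of_mul_le_mul_left h3 hVpos

/-- constant -/
def cA (θ c : ℝ) : ℝ := 2 / c * 2 / (1 - 2 ^ (θ - 1))

lemma cA_aux {θ : ℝ} (hθ1 : θ < 1) : 0 < 1 - (2:ℝ) ^ (θ - 1) := by
  have : (2:ℝ) ^ (θ - 1) < 1 := Real.rpow_lt_one_of_one_lt_of_neg (by norm_num) (by linarith)
  linarith

lemma cA_pos {θ c : ℝ} (hθ1 : θ < 1) (hc : 0 < c) : 0 < cA θ c := by
  have := cA_aux hθ1
  unfold cA; positivity

lemma avg_all {K : Set E2} (hK : Convex ℝ K) (hKc : IsCompact K) {x : E2} (hx : x ∈ K)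
    {θ h c M : ℝ} (hθ : 0 < θ) (hθ1 : θ < 1) (hh : 0 < h) (hc : 0 < c) (hM : 0 < M)
    (hV : c * h ^ 2 ≤ volume.real K)
    (hdiam : ∀ a ∈ K, ∀ b ∈ K, dist a b ≤ h)
    {F : E2 → ℝ} (hF : Continuous F) (hgag : gagE θ K F ≤ ENNReal.ofReal (M ^ 2))
    (hmean : ∫ y in K, F y = 0) {t : ℝ} (ht : 0 < t) (ht1 : t ≤ 1) :
    ∫ y in K, |F (hom x t y)| ≤ volume.real K * (cA θ c * h ^ (θ - 1) * M) * t ^ (θ - 1) := by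
  set V := volume.real K with hVdef
  have hVpos : 0 < V := lt_of_lt_of_le (by positivity) hV
  set q : ℝ := (2:ℝ) ^ (θ - 1) with hq
  have hq1 : 0 < 1 - q := cA_aux hθ1
  have hq0 : 0 < q := by positivity
  set D : ℝ := 2 / c * h ^ (θ - 1) * M with hD
  have hDpos : 0 < D := by positivity
  have hB : cA θ c * h ^ (θ - 1) * M = 2 * D / (1 - q) := by
    unfold cA; rw [← hq, hD]; ring
  rw [hB]
  have h1q : 1 ≤ (1 - q)⁻¹ := by
    rw [one_le_inv₀ hq1]; linarith
  have main : ∀ n : ℕ, ∀ t : ℝ, (2⁻¹ : ℝ) ^ n ≤ t → t ≤ 1 →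
      ∫ y in K, |F (hom x t y)| ≤ V * (2 * D / (1 - q)) * t ^ (θ - 1) := by
    intro n
    induction n with
    | zero =>
      intro t h1 h2
      have : t = 1 := le_antisymm h2 (by simpa using h1)
      subst this
      have := avg_one hK hKc hx hθ hh hc hM hV hdiam hF hgag hmean
      rw [Real.one_rpow, mul_one]
      refine this.trans ?_
      rw [← hD, ← hVdef, div_eq_mul_inv]
      have : D * 1 ≤ 2 * D * (1 - q)⁻¹ := mul_le_mul (by linarith) h1q (by norm_num) (by linarith)
      rw [mul_one] at this
      gcongr
    | succ n ih =>
      intro t h1 h2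
      have ht0 : 0 < t := lt_of_lt_of_le (by positivity) h1
      by_cases h3 : t ≤ 1 / 2
      · have h4 := ih (2 * t) (by rw [pow_succ] at h1; linarith) (by linarith)
        have h5 := avg_step hK hKc hx hθ hh hc hM hV hdiam ht0 (by linarith : t ≤ 2 * t) le_rfl
          (by linarith) hF hgag
        refine h5.trans ((add_le_add_left h4 _).trans ?_)
        have e : (2 * t) ^ (θ - 1) = q * t ^ (θ - 1) := by
          rw [Real.mul_rpow (by norm_num) ht0.le]
        rw [e]
        have : V * (2 * D / (1 - q)) * (q * t ^ (θ - 1)) +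
            V * (2 / c * (h ^ (θ - 1) * (q * t ^ (θ - 1))) * M)
            = V * D * t ^ (θ - 1) * (2 / (1 - q) * q + q) := by
          rw [hD]; ring
        rw [this]
        have e2 : 2 / (1 - q) * q + q ≤ 2 / (1 - q) := by
          have : 2 / (1 - q) - (2 / (1 - q) * q + q) = 2 - q := by field_simp; ring
          linarith
        calc _ ≤ V * D * t ^ (θ - 1) * (2 / (1 - q)) := by gcongr
          _ = _ := by ring
      · push Not at h3
        -- t in (1/2, 1]
        have h5 := avg_step hK hKc hx hθ hh hc hM hV hdiam ht0 h2 (by linarith) le_rfl hF hgag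
        have h6 := avg_one hK hKc hx hθ hh hc hM hV hdiam hF hgag hmean
        rw [Real.one_rpow, mul_one, ← hD] at h5
        rw [← hD] at h6
        have h7 : 1 ≤ t ^ (θ - 1) := Real.one_le_rpow_of_pos_of_le_one_of_nonpos ht0 h2 (by linarith)
        calc _ ≤ V * (2 * D * 1) * 1 := by linarith
          _ ≤ V * (2 * D * (1 - q)⁻¹) * t ^ (θ - 1) := by gcongr
          _ = _ := by ring
  obtain ⟨n, hn⟩ := exists_pow_lt_of_lt_one ht (by norm_num : (2⁻¹ : ℝ) < 1)
  exact main n t hn.le ht1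

end

section

lemma path_diff {K : Set E2} (hKc : IsCompact K) {v : E2 → ℝ} (hv : ContDiff ℝ 1 v)
    {γ d : ℝ → E2 → E2} (hγ : Continuous (fun p : ℝ × E2 => γ p.1 p.2))
    (hd : Continuous (fun p : ℝ × E2 => d p.1 p.2))
    (hder : ∀ y τ, HasDerivAt (fun τ => γ τ y) (d τ y) τ)
    {a b : ℝ} (hab : a ≤ b) {B : ℝ → ℝ} (hB : IntervalIntegrable B volume a b)
    (hbd : ∀ τ ∈ Ioc a b, ∫ y in K, |fderiv ℝ v (γ τ y) (d τ y)| ≤ B τ) :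
    |∫ y in K, (v (γ b y) - v (γ a y))| ≤ ∫ τ in a..b, B τ := by
  have hfd : Continuous (fun p : ℝ × E2 => fderiv ℝ v (γ p.1 p.2) (d p.1 p.2)) := by
    have := hv.continuous_fderiv one_ne_zero
    exact (this.comp hγ).clm_apply hd
  have hIntg : Integrable (fun p : ℝ × E2 => fderiv ℝ v (γ p.1 p.2) (d p.1 p.2))
      ((volume.restrict (Ioc a b)).prod (volume.restrict K)) := by
    rw [Measure.prod_restrict]
    exact (hfd.continuousOn.integrableOn_compact (isCompact_Icc.prod hKc)).mono_set
      (prod_mono Ioc_subset_Icc_self subset_rfl)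
  have h1 : ∀ y, v (γ b y) - v (γ a y) = ∫ τ in Ioc a b, fderiv ℝ v (γ τ y) (d τ y) := by
    intro y
    rw [← intervalIntegral.integral_of_le hab]
    symm
    apply intervalIntegral.integral_eq_sub_of_hasDerivAt
    · intro τ _
      have := (hv.differentiable one_ne_zero (γ τ y)).hasFDerivAt.comp_hasDerivAt τ (hder y τ)
      exact this
    · exact (hfd.comp (by fun_prop : Continuous fun τ : ℝ => (τ, y))).intervalIntegrable _ _
  simp_rw [h1]
  rw [← integral_integral_swap (f := fun τ y => fderiv ℝ v (γ τ y) (d τ y)) hIntg,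
    intervalIntegral.integral_of_le hab]
  refine abs_integral_le_integral_abs.trans ?_
  refine setIntegral_mono_on hIntg.integral_prod_left.abs
    ((intervalIntegrable_iff_integrableOn_Ioc_of_le hab).1 hB) measurableSet_Ioc fun τ hτ => ?_
  exact abs_integral_le_integral_abs.trans (hbd τ hτ)

lemma fderiv_apply_pd (v : E2 → ℝ) (p u : E2) :
    fderiv ℝ v p u = u 0 * pd 0 v p + u 1 * pd 1 v p := by
  have : u = u 0 • EuclideanSpace.single 0 (1:ℝ) + u 1 • EuclideanSpace.single 1 (1:ℝ) := by
    ext i; fin_cases i <;> simp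
  conv_lhs => rw [this]
  simp [pd]

lemma abs_coord_le (u : E2) (i : Fin 2) : |u i| ≤ ‖u‖ := PiLp.norm_apply_le u i

lemma fderiv_le (v : E2 → ℝ) (p u : E2) {r : ℝ} (hr : ‖u‖ ≤ r) :
    |fderiv ℝ v p u| ≤ r * (|pd 0 v p| + |pd 1 v p|) := by
  rw [fderiv_apply_pd]
  refine (abs_add_le _ _).trans ?_
  rw [abs_mul, abs_mul, mul_add]
  have h0 := (abs_coord_le u 0).trans hr
  have h1 := (abs_coord_le u 1).trans hr
  gcongr

lemma continuous_pd {v : E2 → ℝ} (hv : ContDiff ℝ 1 v) (i : Fin 2) : Continuous (pd i v) := by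
  unfold pd
  exact (hv.continuous_fderiv one_ne_zero).clm_apply continuous_const

/-- constant -/
def cB (θ c : ℝ) : ℝ := cA θ c * (4 / θ + 2)

lemma cB_pos {θ c : ℝ} (hθ : 0 < θ) (hθ1 : θ < 1) (hc : 0 < c) : 0 < cB θ c := by
  have := cA_pos hθ1 hc
  unfold cB; positivity

lemma morrey0 {K : Set E2} (hK : Convex ℝ K) (hKc : IsCompact K)
    {θ h c M : ℝ} (hθ : 0 < θ) (hθ1 : θ < 1) (hh : 0 < h) (hc : 0 < c) (hM : 0 < M)
    (hV : c * h ^ 2 ≤ volume.real K)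
    (hdiam : ∀ a ∈ K, ∀ b ∈ K, dist a b ≤ h)
    {v : E2 → ℝ} (hv : ContDiff ℝ 1 v)
    (hgag : ∀ i, gagE θ K (pd i v) ≤ ENNReal.ofReal (M ^ 2))
    (hmean : ∀ i, ∫ y in K, pd i v y = 0) {x x' : E2} (hx : x ∈ K) (hx' : x' ∈ K) :
    |v x - v x'| ≤ cB θ c * dist x x' ^ θ * M := by
  rcases eq_or_ne x x' with rfl | hne
  · simp [Real.zero_rpow hθ.ne']
  have hdpos : 0 < dist x x' := dist_pos.2 hne
  set ρ := dist x x' / h with hρ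
  have hρ0 : 0 < ρ := by positivity
  have hρ1 : ρ ≤ 1 := by rw [hρ, div_le_one hh]; exact hdiam _ hx _ hx'
  have hρh : dist x x' = ρ * h := by rw [hρ]; field_simp
  set V := volume.real K with hVdef
  have hVpos : 0 < V := lt_of_lt_of_le (by positivity) hV
  have : IsFiniteMeasure (volume.restrict K) := ⟨by simpa using hKc.measure_lt_top⟩
  set B := cA θ c * h ^ (θ - 1) * M with hB
  have hA := cA_pos hθ1 hc
  have hBpos : 0 < B := by positivity
  have hav : ∀ z ∈ K, ∀ t : ℝ, 0 < t → t ≤ 1 → ∀ r : ℝ, 0 ≤ r →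
      ∫ y in K, r * (|pd 0 v (hom z t y)| + |pd 1 v (hom z t y)|) ≤ r * (2 * (V * B * t ^ (θ - 1))) := by
    intro z hz t ht ht1 r hr
    rw [integral_const_mul, integral_add
      (int_hom hKc z t (continuous_pd hv 0).abs) (int_hom hKc z t (continuous_pd hv 1).abs)]
    have e0 := avg_all hK hKc hz hθ hθ1 hh hc hM hV hdiam (continuous_pd hv 0) (hgag 0) (hmean 0) ht ht1
    have e1 := avg_all hK hKc hz hθ hθ1 hh hc hM hV hdiam (continuous_pd hv 1) (hgag 1) (hmean 1) ht ht1
    gcongr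
    rw [two_mul]
    exact add_le_add e0 e1
  have hintr : ∀ z t r, IntegrableOn (fun y => r * (|pd 0 v (hom z t y)| + |pd 1 v (hom z t y)|)) K := by
    intro z t r
    exact ((int_hom hKc z t (continuous_pd hv 0).abs).add
      (int_hom hKc z t (continuous_pd hv 1).abs)).const_mul r
  -- step 1
  have step1 : ∀ z ∈ K, |∫ y in K, (v (hom z ρ y) - v (hom z 0 y))| ≤ 2 * h * V * B * ρ ^ θ / θ := by
    intro z hz
    have hγ : Continuous (fun p : ℝ × E2 => hom z p.1 p.2) := by unfold hom; fun_prop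
    have hd : Continuous (fun p : ℝ × E2 => p.2 - z) := by fun_prop
    have hIntg : IntervalIntegrable (fun τ : ℝ => h * (2 * (V * B * τ ^ (θ - 1)))) volume 0 ρ :=
      (((intervalIntegral.intervalIntegrable_rpow' (by linarith)).const_mul _).const_mul _).const_mul _
    have := path_diff hKc hv (γ := hom z) (d := fun _ y => y - z) hγ hd
      (fun y τ => by
        unfold hom
        simpa using ((hasDerivAt_id τ).smul_const (y - z)).const_add z) hρ0.le hIntg
      (fun τ hτ => by
        refine le_trans ?_ (hav z hz τ hτ.1 (hτ.2.trans hρ1) h hh.le)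
        refine setIntegral_mono_on ?_ (hintr z τ h) hKc.measurableSet fun y hy => ?_
        · refine ContinuousOn.integrableOn_compact hKc (Continuous.continuousOn ?_)
          have h1 := hv.continuous_fderiv one_ne_zero
          exact ((h1.comp (continuous_hom z τ)).clm_apply (by fun_prop)).abs
        · exact fderiv_le v _ _ (by rw [← dist_eq_norm]; exact hdiam _ hy _ hz))
    refine this.trans (le_of_eq ?_)
    simp only [intervalIntegral.integral_const_mul]
    rw [integral_rpow (Or.inl (by linarith))]
    simp [Real.zero_rpow hθ.ne']
    ring
  -- step 2
  have step2 : |∫ y in K, (v (hom x ρ y) - v (hom x' ρ y))| ≤ dist x x' * (2 * (V * B * ρ ^ (θ - 1))) := by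
    have hγ : Continuous (fun p : ℝ × E2 => hom (hom x' p.1 x) ρ p.2) := by unfold hom; fun_prop
    have hd : Continuous (fun _ : ℝ × E2 => (1 - ρ) • (x - x')) := by fun_prop
    have hIntg : IntervalIntegrable (fun _ : ℝ => dist x x' * (2 * (V * B * ρ ^ (θ - 1)))) volume 0 1 :=
      intervalIntegrable_const
    have := path_diff hKc hv (γ := fun τ y => hom (hom x' τ x) ρ y)
      (d := fun _ _ => (1 - ρ) • (x - x')) hγ hd
      (fun y τ => by
        have e : (fun τ : ℝ => hom (hom x' τ x) ρ y) =
            fun τ : ℝ => hom x' ρ y + τ • ((1 - ρ) • (x - x')) := by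
          funext τ; unfold hom; module
        rw [e]
        simpa using ((hasDerivAt_id τ).smul_const ((1 - ρ) • (x - x'))).const_add (hom x' ρ y))
      zero_le_one hIntg
      (fun τ hτ => by
        refine le_trans ?_ (hav (hom x' τ x) (hom_mem hK hx' hx hτ.1.le hτ.2) ρ hρ0 hρ1 _ dist_nonneg)
        refine setIntegral_mono_on ?_ (hintr _ ρ _) hKc.measurableSet fun y hy => ?_
        · refine ContinuousOn.integrableOn_compact hKc (Continuous.continuousOn ?_)
          have h1 := hv.continuous_fderiv one_ne_zero
          exact ((h1.comp (continuous_hom _ ρ)).clm_apply (by fun_prop)).abs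
        · refine fderiv_le v _ _ ?_
          rw [norm_smul, Real.norm_eq_abs, abs_of_nonneg (by linarith), ← dist_eq_norm]
          exact mul_le_of_le_one_left dist_nonneg (by linarith))
    have e0 : hom x' 0 x = x' := by simp [hom]
    have e1 : hom x' 1 x = x := by simp [hom]
    simpa [e0, e1] using this
  have hc0 : ∀ z y, hom z 0 y = z := by intro z y; simp [hom]
  have hiv : ∀ z t, IntegrableOn (fun y => v (hom z t y)) K := fun z t => int_hom hKc z t hv.continuous
  have s1 := step1 x hx
  have s1' := step1 x' hx'
  simp only [hc0] at s1 s1'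
  rw [integral_sub (hiv _ _) (integrable_const _), setIntegral_const, smul_eq_mul, ← hVdef] at s1 s1'
  rw [integral_sub (hiv _ _) (hiv _ _)] at step2
  have fin : V * |v x - v x'| ≤ V * (2 * (2 * h * B * ρ ^ θ / θ) + dist x x' * (2 * (B * ρ ^ (θ - 1)))) := by
    rw [← abs_of_pos hVpos, ← abs_mul, abs_of_pos hVpos]
    rw [abs_le] at s1 s1' step2 ⊢
    have e : 2 * h * V * B * ρ ^ θ / θ = V * (2 * h * B * ρ ^ θ / θ) := by ring
    rw [e] at s1 s1'
    constructor <;> nlinarith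
  have fin' := le_of_mul_le_mul_left fin hVpos
  refine fin'.trans (le_of_eq ?_)
  have e1 : ρ ^ (θ - 1) = ρ ^ θ / ρ := by rw [Real.rpow_sub_one hρ0.ne']
  have e2 : h ^ (θ - 1) = h ^ θ / h := by rw [Real.rpow_sub_one hh.ne']
  rw [hρh, hB, e1, e2, Real.mul_rpow hρ0.le hh.le]
  unfold cB
  field_simp
  ring

lemma morrey1 {K : Set E2} (hK : Convex ℝ K) (hKc : IsCompact K)
    {θ h c M : ℝ} (hθ : 0 < θ) (hθ1 : θ < 1) (hh : 0 < h) (hc : 0 < c) (hM : 0 < M)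
    (hV : c * h ^ 2 ≤ volume.real K)
    (hdiam : ∀ a ∈ K, ∀ b ∈ K, dist a b ≤ h)
    {v : E2 → ℝ} (hv : ContDiff ℝ 1 v)
    (hgag : ∀ i, gagE θ K (pd i v) ≤ ENNReal.ofReal (M ^ 2)) :
    ∃ a : E2, ∀ x ∈ K, ∀ x' ∈ K,
    |v x - v x' - (inner ℝ a (x - x') : ℝ)| ≤ cB θ c * dist x x' ^ θ * M := by
  have hVpos : 0 < volume.real K := lt_of_lt_of_le (by positivity) hV
  have : IsFiniteMeasure (volume.restrict K) := ⟨by simpa using hKc.measure_lt_top⟩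
  let α : Fin 2 → ℝ := fun i => (volume.real K)⁻¹ * ∫ y in K, pd i v y
  let a : E2 := WithLp.toLp 2 α
  let v0 : E2 → ℝ := fun x => v x - (inner ℝ a x : ℝ)
  have hv0 : ContDiff ℝ 1 v0 := hv.sub (contDiff_const.inner ℝ contDiff_id)
  have hpd : ∀ i, pd i v0 = fun x => pd i v x - α i := by
    intro i; funext x
    unfold pd
    have h1 : HasFDerivAt v0 (fderiv ℝ v x - innerSL ℝ a) x :=
      (hv.differentiable one_ne_zero x).hasFDerivAt.sub (innerSL ℝ a).hasFDerivAt
    rw [h1.fderiv]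
    simp [a, PiLp.inner_apply]
  refine ⟨a, fun x hx x' hx' => ?_⟩
  have := morrey0 hK hKc hθ hθ1 hh hc hM hV hdiam hv0
    (fun i => by
      have : gagE θ K (pd i v0) = gagE θ K (pd i v) := by
        unfold gagE gk; rw [hpd]; simp
      rw [this]; exact hgag i)
    (fun i => by
      rw [hpd, integral_sub ((continuous_pd hv i).continuousOn.integrableOn_compact hKc)
        (integrable_const _), setIntegral_const, smul_eq_mul]
      simp only [α]; field_simp; simp) hx hx'
  have e : v x - v x' - (inner ℝ a (x - x') : ℝ) = v0 x - v0 x' := by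
    simp only [v0, inner_sub_right]; ring
  rw [e]; exact this

end

section
open scoped Convolution

lemma jensen_aux {η D : E2 → ℝ} (hη0 : ∀ t, 0 ≤ η t) (hη1 : ∫ t, η t = 1)
    (hηi : Integrable η) (hD : Integrable (fun t => η t * D t))
    (hDm : Measurable D) (hηm : Measurable η) :
    ENNReal.ofReal ((∫ t, η t * D t) ^ 2) ≤ ∫⁻ t, ENNReal.ofReal (η t) * ENNReal.ofReal (D t ^ 2) := by
  by_cases htop : ∫⁻ t, ENNReal.ofReal (η t) * ENNReal.ofReal (D t ^ 2) = ⊤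
  · rw [htop]; exact le_top
  simp_rw [← ENNReal.ofReal_mul (hη0 _)] at htop ⊢
  have hi : Integrable (fun t => η t * D t ^ 2) := by
    refine ⟨(hηm.mul (hDm.pow_const 2)).aestronglyMeasurable, ?_⟩
    rw [hasFiniteIntegral_iff_ofReal (Eventually.of_forall fun t => mul_nonneg (hη0 t) (sq_nonneg _))]
    exact lt_top_iff_ne_top.2 htop
  rw [← ofReal_integral_eq_lintegral_ofReal hi
    (Eventually.of_forall fun t => mul_nonneg (hη0 t) (sq_nonneg _))]
  apply ENNReal.ofReal_le_ofReal
  set m := ∫ t, η t * D t with hm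
  have h0 : 0 ≤ ∫ t, η t * (D t - m) ^ 2 :=
    integral_nonneg fun t => mul_nonneg (hη0 t) (sq_nonneg _)
  have e : (fun t => η t * (D t - m) ^ 2) =
      fun t => (η t * D t ^ 2 - 2 * m * (η t * D t)) + m ^ 2 * η t := by
    funext t; ring
  have hs : Integrable (fun t => η t * D t ^ 2 - 2 * m * (η t * D t)) := hi.sub (hD.const_mul _)
  rw [e, integral_add hs (hηi.const_mul _), integral_sub hi (hD.const_mul _), integral_const_mul, integral_const_mul, hη1, ← hm] at h0
  nlinarith

lemma lint_shift {K G : Set E2} (hKm : MeasurableSet K) (hGm : MeasurableSet G) {t : E2}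
    (hKG : ∀ a ∈ K, a - t ∈ G) (q : E2 → ℝ≥0∞) :
    ∫⁻ a in K, q (a - t) ≤ ∫⁻ a in G, q a := by
  rw [← lintegral_indicator hKm, ← lintegral_indicator hGm,
    ← lintegral_sub_right_eq_self (G.indicator q) t]
  apply lintegral_mono
  intro a
  by_cases ha : a ∈ K
  · simp [ha, hKG a ha]
  · simp [ha]

lemma gag_moll {K G : Set E2} (hKm : MeasurableSet K) (hGm : MeasurableSet G) {θ : ℝ}
    {η g f : E2 → ℝ} {r : ℝ} (hη0 : ∀ t, 0 ≤ η t) (hη1 : ∫ t, η t = 1)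
    (hηi : Integrable η) (hηm : Measurable η) (hsupp : ∀ t, η t ≠ 0 → ‖t‖ < r)
    (hKG : ∀ a ∈ K, ball a r ⊆ G) (hg : Measurable g)
    (hi : ∀ a ∈ K, Integrable (fun t => η t * G.indicator g (a - t)))
    (hf : ∀ a ∈ K, f a = ∫ t, η t * G.indicator g (a - t)) :
    gagE θ K f ≤ gagE θ G g := by
  set g' := G.indicator g with hg'
  have hg'm : Measurable g' := hg.indicator hGm
  have hgk := measurable_gk θ hg'm
  have step : ∀ a ∈ K, ∀ b ∈ K, ENNReal.ofReal (gk θ f (a, b)) ≤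
      ∫⁻ t, ENNReal.ofReal (η t) * ENNReal.ofReal (gk θ g' (a - t, b - t)) := by
    intro a ha b hb
    have e1 : f a - f b = ∫ t, η t * (g' (a - t) - g' (b - t)) := by
      rw [hf a ha, hf b hb, ← integral_sub (hi a ha) (hi b hb)]
      congr 1; funext t; ring
    have hD : Integrable (fun t => η t * (g' (a - t) - g' (b - t))) := by
      have := (hi a ha).sub (hi b hb)
      refine this.congr (Eventually.of_forall fun t => ?_)
      simp only [Pi.sub_apply]; ring
    have hDm : Measurable fun t => g' (a - t) - g' (b - t) :=
      (hg'm.comp (by fun_prop)).sub (hg'm.comp (by fun_prop))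
    have j := jensen_aux hη0 hη1 hηi hD hDm hηm
    rw [← e1] at j
    have hd : 0 ≤ (dist a b ^ (2 + 2 * θ))⁻¹ := by positivity
    have : ∀ t, ENNReal.ofReal (η t) * ENNReal.ofReal (gk θ g' (a - t, b - t)) =
        ENNReal.ofReal ((dist a b ^ (2 + 2 * θ))⁻¹) *
        (ENNReal.ofReal (η t) * ENNReal.ofReal ((g' (a - t) - g' (b - t)) ^ 2)) := by
      intro t
      simp only [gk, dist_sub_right]
      rw [div_eq_mul_inv, ENNReal.ofReal_mul (sq_nonneg _)]
      ring
    simp_rw [this]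
    rw [lintegral_const_mul' _ _ ENNReal.ofReal_ne_top]
    simp only [gk]
    rw [div_eq_mul_inv, mul_comm, ENNReal.ofReal_mul hd]
    gcongr
  have hmeas3 : Measurable (fun p : (E2 × E2) × E2 =>
      ENNReal.ofReal (η p.2) * ENNReal.ofReal (gk θ g' (p.1.1 - p.2, p.1.2 - p.2))) :=
    (hηm.comp measurable_snd).ennreal_ofReal.mul (hgk.comp (by fun_prop)).ennreal_ofReal
  calc gagE θ K f ≤ ∫⁻ a in K, ∫⁻ b in K, ∫⁻ t,
        ENNReal.ofReal (η t) * ENNReal.ofReal (gk θ g' (a - t, b - t)) :=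
        setLIntegral_mono' hKm fun a ha => setLIntegral_mono' hKm fun b hb => step a ha b hb
    _ = ∫⁻ a in K, ∫⁻ t, ∫⁻ b in K,
        ENNReal.ofReal (η t) * ENNReal.ofReal (gk θ g' (a - t, b - t)) := by
        congr 1; funext a
        exact lintegral_lintegral_swap
          (hmeas3.comp (by fun_prop : Measurable fun p : E2 × E2 => ((a, p.1), p.2))).aemeasurable
    _ = ∫⁻ t, ∫⁻ a in K, ∫⁻ b in K,
        ENNReal.ofReal (η t) * ENNReal.ofReal (gk θ g' (a - t, b - t)) := by
        refine lintegral_lintegral_swap ?_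
        refine Measurable.aemeasurable ?_
        exact Measurable.lintegral_prod_right' (f := fun q : (E2 × E2) × E2 =>
          ENNReal.ofReal (η q.1.2) * ENNReal.ofReal (gk θ g' (q.1.1 - q.1.2, q.2 - q.1.2)))
          (hmeas3.comp (by fun_prop : Measurable fun q : (E2 × E2) × E2 => ((q.1.1, q.2), q.1.2)))
    _ ≤ ∫⁻ t, ENNReal.ofReal (η t) * gagE θ G g := by
        apply lintegral_mono
        intro t
        by_cases ht : η t = 0
        · simp [ht]
        have hsh : ∀ a ∈ K, a - t ∈ G := fun a ha => hKG a ha (by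
          simpa [dist_eq_norm] using hsupp t ht)
        simp only [lintegral_const_mul' _ _ ENNReal.ofReal_ne_top]
        gcongr
        calc ∫⁻ a in K, ∫⁻ b in K, ENNReal.ofReal (gk θ g' (a - t, b - t))
            ≤ ∫⁻ a in K, (fun a' => ∫⁻ b in G, ENNReal.ofReal (gk θ g' (a', b))) (a - t) := by
              refine lintegral_mono fun a => ?_
              exact lint_shift hKm hGm hsh (fun b => ENNReal.ofReal (gk θ g' (a - t, b)))
          _ ≤ ∫⁻ a in G, ∫⁻ b in G, ENNReal.ofReal (gk θ g' (a, b)) :=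
              lint_shift hKm hGm hsh _
          _ = gagE θ G g := by
              unfold gagE
              refine setLIntegral_congr_fun hGm fun a ha => setLIntegral_congr_fun hGm fun b hb => ?_
              simp [gk, hg', ha, hb]
    _ = gagE θ G g := by
        rw [lintegral_mul_const _ hηm.ennreal_ofReal,
          ← ofReal_integral_eq_lintegral_ofReal hηi (Eventually.of_forall hη0), hη1]
        simp

lemma pd_moll {G : Set E2} (hGm : MeasurableSet G) (φ : ContDiffBump (0 : E2))
    {w g : E2 → ℝ} {i : Fin 2} (hw : IntegrableOn w G)
    (hweak : HasWeakPD G i w g) {x : E2} (hx : closedBall x φ.rOut ⊆ G) :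
    pd i (φ.normed volume ⋆[ContinuousLinearMap.lsmul ℝ ℝ, volume] G.indicator w) x =
      ∫ t, φ.normed volume t * G.indicator g (x - t) := by
  set η := φ.normed volume with hη
  have hηc : ContDiff ℝ (⊤ : ℕ∞) η := φ.contDiff_normed
  have hη1 : ContDiff ℝ 1 η := hηc.of_le (by norm_cast)
  have hηs : HasCompactSupport η := φ.hasCompactSupport_normed
  have hwi : LocallyIntegrable (G.indicator w) volume :=
    ((integrable_indicator_iff hGm).2 hw).locallyIntegrable
  unfold pd
  rw [(hηs.hasFDerivAt_convolution_left (ContinuousLinearMap.lsmul ℝ ℝ) hη1 hwi x).fderiv]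
  have hex := (hηs.fderiv ℝ).convolutionExists_left
    ((ContinuousLinearMap.lsmul ℝ ℝ).precompL E2) (hη1.continuous_fderiv one_ne_zero) hwi x
  rw [convolution_eq_swap]
  rw [ContinuousLinearMap.integral_apply]
  swap
  · have := hex.integrable_swap
    exact this
  have e1 : ∀ y, (((ContinuousLinearMap.lsmul ℝ ℝ).precompL E2 (fderiv ℝ η (x - y)))
      (G.indicator w y)) (EuclideanSpace.single i 1) =
      - G.indicator (fun y => w y * pd i (fun y => η (x - y)) y) y := by
    intro y
    have hd : HasFDerivAt (fun y => η (x - y)) ((fderiv ℝ η (x - y)).comp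
        (-(ContinuousLinearMap.id ℝ E2))) y := by
      have h1 := (hη1.differentiable one_ne_zero (x - y)).hasFDerivAt
      exact h1.comp y ((hasFDerivAt_id y).const_sub x)
    by_cases hy : y ∈ G
    · simp only [hy, indicator_of_mem, pd, hd.fderiv]
      simp [ContinuousLinearMap.precompL_apply, mul_comm]
    · simp [hy, ContinuousLinearMap.precompL_apply]
  simp_rw [e1]
  rw [integral_neg, integral_indicator hGm]
  have htest : IsTestFun G (fun y => η (x - y)) := by
    refine ⟨hηc.comp (contDiff_const.sub contDiff_id), ?_, ?_⟩
    · exact hηs.comp_homeomorph (Homeomorph.subLeft x)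
    · have : tsupport (fun y => η (x - y)) = (Homeomorph.subLeft x) ⁻¹' tsupport η :=
        tsupport_comp_eq_preimage η (Homeomorph.subLeft x)
      rw [this, hη, φ.tsupport_normed_eq]
      intro y hy
      apply hx
      simpa [dist_eq_norm, norm_sub_rev] using hy
  rw [hweak _ htest, neg_neg, ← integral_indicator hGm,
    ← integral_sub_left_eq_self _ volume x]
  congr 1; funext t
  by_cases ht : x - t ∈ G
  · simp [ht, mul_comm]
  · simp [ht]

end

section
open scoped Convolution

lemma morrey_step {T : Set E2} (hT : Convex ℝ T) (hTc : IsCompact T) {θ h c M s ε : ℝ}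
    (hθ : 0 < θ) (hθ1 : θ < 1) (hh : 0 < h) (hc : 0 < c) (hM : 0 < M)
    (hV : c * h ^ 2 ≤ volume.real T) (hdiam : ∀ a ∈ T, ∀ b ∈ T, dist a b ≤ h)
    {w : E2 → ℝ} {g : Fin 2 → E2 → ℝ} (hw : ContinuousOn w T)
    (hweak : ∀ i, HasWeakPD (interior T) i w (g i)) (hgm : ∀ i, Measurable (g i))
    (hgi : ∀ i, IntegrableOn (g i) (interior T))
    (hgag : ∀ i, gagE θ (interior T) (g i) ≤ ENNReal.ofReal (M ^ 2))
    {x0 : E2} (hx0 : x0 ∈ interior T) (hs : 0 < s) (hs1 : s < 1) (hε : 0 < ε) :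
    ∃ a : E2, ∀ x ∈ hom x0 s '' T, ∀ x' ∈ hom x0 s '' T,
      |w x - w x' - (inner ℝ a (x - x') : ℝ)| ≤ cB θ c * dist x x' ^ θ * M + 2 * ε := by
  set K := hom x0 s '' T with hK
  set G := interior T with hG
  have hGo : IsOpen G := isOpen_interior
  have hGm : MeasurableSet G := hGo.measurableSet
  have hKG : K ⊆ G := by
    rintro _ ⟨y, hy, rfl⟩
    have := hT.add_smul_sub_mem_interior hy hx0 (t := 1 - s) ⟨by linarith, by linarith⟩
    convert this using 1
    simp only [hom]
    module
  have hKc : IsCompact K := hTc.image (continuous_hom x0 s)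
  have ehom : hom x0 s = AffineMap.homothety x0 s := by
    funext y; simp [hom, AffineMap.homothety_apply, add_comm]
  have hKconv : Convex ℝ K := by
    rw [hK, ehom]; exact hT.affine_image _
  have hVK : c * (s * h) ^ 2 ≤ volume.real K := by
    rw [hK, ehom, Measure.real, Measure.addHaar_image_homothety, ENNReal.toReal_mul,
      ENNReal.toReal_ofReal (abs_nonneg _)]
    simp only [finrank_euclideanSpace, Fintype.card_fin, abs_of_pos (pow_pos hs 2)]
    have : c * (s * h) ^ 2 = s ^ 2 * (c * h ^ 2) := by ring
    rw [this]
    exact mul_le_mul_of_nonneg_left hV (by positivity)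
  have hdK : ∀ a ∈ K, ∀ b ∈ K, dist a b ≤ s * h := by
    rintro _ ⟨a, ha, rfl⟩ _ ⟨b, hb, rfl⟩
    exact dist_hom hT (interior_subset hx0) hdiam hs le_rfl ha hb
  obtain ⟨r, hr, hrK⟩ := hKc.exists_cthickening_subset_open hGo hKG
  have huc := hTc.uniformContinuousOn_of_continuous hw
  rw [Metric.uniformContinuousOn_iff] at huc
  obtain ⟨δ, hδ, hδw⟩ := huc ε hε
  set ρ := min r δ with hρ
  have hρ0 : 0 < ρ := lt_min hr hδ
  let φ : ContDiffBump (0 : E2) := ⟨ρ / 2, ρ, by linarith, by linarith⟩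
  have hφr : φ.rOut = ρ := rfl
  have hball : ∀ a ∈ K, closedBall a φ.rOut ⊆ G := by
    intro a ha
    refine Subset.trans ?_ hrK
    intro y hy
    rw [mem_closedBall] at hy
    exact mem_cthickening_of_dist_le y a r K ha (hy.trans (min_le_left _ _))
  have hwG : IntegrableOn w G := (hw.integrableOn_compact hTc).mono_set interior_subset
  have hwi : Integrable (G.indicator w) volume := (integrable_indicator_iff hGm).2 hwG
  set u := φ.normed volume ⋆[ContinuousLinearMap.lsmul ℝ ℝ, volume] G.indicator w with hu
  have hηc : ContDiff ℝ (1 : ℕ∞) (φ.normed volume) := φ.contDiff_normed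
  have huC : ContDiff ℝ 1 u :=
    φ.hasCompactSupport_normed.contDiff_convolution_left _ hηc hwi.locallyIntegrable
  have hclose : ∀ x ∈ K, |u x - w x| ≤ ε := by
    intro x hx
    have := φ.dist_normed_convolution_le (x₀ := x) (ε := ε) (g := G.indicator w) (μ := volume)
      hwi.aestronglyMeasurable (by
        intro y hy
        have hyG : y ∈ G := hball x hx (ball_subset_closedBall hy)
        rw [indicator_of_mem hyG, indicator_of_mem (hKG hx)]
        refine (hδw y (interior_subset hyG) x (interior_subset (hKG hx)) ?_).le
        exact lt_of_lt_of_le (mem_ball.1 hy) (min_le_right _ _))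
    rw [indicator_of_mem (hKG hx), Real.dist_eq] at this
    exact this
  have hηm : Measurable (φ.normed volume) := hηc.continuous.measurable
  have hg2 : ∀ i, gagE θ K (pd i u) ≤ ENNReal.ofReal (M ^ 2) := by
    intro i
    refine le_trans ?_ (hgag i)
    have hgI : Integrable (G.indicator (g i)) volume := (integrable_indicator_iff hGm).2 (hgi i)
    refine gag_moll (r := φ.rOut) (η := φ.normed volume) hKc.isClosed.measurableSet hGm
      (fun t => φ.nonneg_normed t)
      (φ.integral_normed) φ.integrable_normed hηm ?_ ?_ (hgm i) ?_ ?_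
    · intro t ht
      have : t ∈ Function.support (φ.normed volume) := ht
      rw [φ.support_normed_eq] at this
      simpa using this
    · exact fun a ha => ball_subset_closedBall.trans (hball a ha)
    · intro a ha
      have := (φ.hasCompactSupport_normed (μ := volume)).convolutionExists_left
        (ContinuousLinearMap.lsmul ℝ ℝ) hηc.continuous hgI.locallyIntegrable a
      simpa [ConvolutionExistsAt] using this
    · exact fun a ha => pd_moll hGm φ hwG (hweak i) (hball a ha)
  obtain ⟨a, ha⟩ := morrey1 hKconv hKc hθ hθ1 (mul_pos hs hh) hc hM hVK hdK huC hg2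
  refine ⟨a, fun x hx x' hx' => ?_⟩
  have h1 := abs_le.1 (ha x hx x' hx')
  have h2 := abs_le.1 (hclose x hx)
  have h3 := abs_le.1 (hclose x' hx')
  rw [abs_le]
  constructor <;> linarith [h1.1, h1.2, h2.1, h2.2, h3.1, h3.2]

theorem morrey_tri {T : Set E2} (hT : Convex ℝ T) (hTc : IsCompact T) {θ h c M : ℝ}
    (hθ : 0 < θ) (hθ1 : θ < 1) (hh : 0 < h) (hc : 0 < c) (hM : 0 < M)
    (hV : c * h ^ 2 ≤ volume.real T) (hdiam : ∀ a ∈ T, ∀ b ∈ T, dist a b ≤ h)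
    {w : E2 → ℝ} {g : Fin 2 → E2 → ℝ} (hw : ContinuousOn w T)
    (hweak : ∀ i, HasWeakPD (interior T) i w (g i)) (hgm : ∀ i, Measurable (g i))
    (hgi : ∀ i, IntegrableOn (g i) (interior T))
    (hgag : ∀ i, gagE θ (interior T) (g i) ≤ ENNReal.ofReal (M ^ 2))
    {x0 : E2} (hx0 : x0 ∈ interior T) :
    ∃ a : E2, ∀ x ∈ T, ∀ x' ∈ T,
      |w x - w x' - (inner ℝ a (x - x') : ℝ)| ≤ cB θ c * dist x x' ^ θ * M := by
  set s : ℕ → ℝ := fun n => 1 - 1 / ((n : ℝ) + 2) with hs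
  have hs2 : ∀ n, 1 / 2 ≤ s n := by
    intro n
    have : 1 / ((n : ℝ) + 2) ≤ 1 / 2 := by
      apply one_div_le_one_div_of_le <;> [norm_num; (have := n.cast_nonneg (α := ℝ); linarith)]
    simp only [hs]; linarith
  have hs1 : ∀ n, s n < 1 := by
    intro n
    have : 0 < 1 / ((n : ℝ) + 2) := by positivity
    simp only [hs]; linarith
  have hslim : Tendsto s atTop (𝓝 1) := by
    have h1 : Tendsto (fun n : ℕ => 1 / ((n : ℝ) + 2)) atTop (𝓝 0) := by
      have := (tendsto_add_atTop_iff_nat (f := fun n : ℕ => 1 / ((n : ℝ) + 1)) 1).2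
        tendsto_one_div_add_atTop_nhds_zero_nat
      refine this.congr fun n => ?_
      push_cast; ring_nf
    simpa [hs] using h1.const_sub 1
  have hεlim : Tendsto (fun n : ℕ => 1 / ((n : ℝ) + 1)) atTop (𝓝 0) :=
    tendsto_one_div_add_atTop_nhds_zero_nat
  have step := fun n : ℕ => morrey_step hT hTc hθ hθ1 hh hc hM hV hdiam hw hweak hgm hgi hgag hx0
    (lt_of_lt_of_le (by norm_num) (hs2 n)) (hs1 n) (ε := 1 / ((n : ℝ) + 1)) (by positivity)
  choose a ha using step
  have hx0T : x0 ∈ T := interior_subset hx0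
  obtain ⟨B, hB⟩ := hTc.exists_bound_of_continuousOn hw
  obtain ⟨r, hr, hrT⟩ := Metric.isOpen_iff.1 isOpen_interior x0 hx0
  have hcB := cB_pos hθ hθ1 hc
  set D := (2 * B + cB θ c * h ^ θ * M + 2) / (r / 4) with hD
  have hbd : ∀ n, a n ∈ closedBall (0 : E2) D := by
    intro n
    rw [mem_closedBall, dist_zero_right]
    by_cases h0 : a n = 0
    · rw [h0, norm_zero]
      have := (norm_nonneg _).trans (hB x0 hx0T)
      positivity
    have hn0 : 0 < ‖a n‖ := norm_pos_iff.2 h0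
    set y := x0 + (r / 2 / ‖a n‖) • a n with hy
    have hyT : y ∈ T := by
      apply interior_subset; apply hrT
      rw [mem_ball, dist_eq_norm, hy, add_sub_cancel_left, norm_smul, Real.norm_eq_abs,
        abs_of_pos (by positivity)]
      field_simp; linarith
    have h1 := ha n (hom x0 (s n) y) ⟨y, hyT, rfl⟩ (hom x0 (s n) x0) ⟨x0, hx0T, rfl⟩
    have hsn : 0 < s n := lt_of_lt_of_le (by norm_num) (hs2 n)
    have hm1 : hom x0 (s n) y ∈ T := hom_mem hT hx0T hyT hsn.le (hs1 n).le
    have hm2 : hom x0 (s n) x0 ∈ T := hom_mem hT hx0T hx0T hsn.le (hs1 n).le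
    have e : (inner ℝ (a n) (hom x0 (s n) y - hom x0 (s n) x0) : ℝ) = s n * (r / 2) * ‖a n‖ := by
      have : hom x0 (s n) y - hom x0 (s n) x0 = (s n * (r / 2 / ‖a n‖)) • a n := by
        simp only [hom, hy]; module
      rw [this, inner_smul_right, real_inner_self_eq_norm_sq]
      field_simp
    rw [e] at h1
    have h2 := hB _ hm1
    have h3 := hB _ hm2
    rw [Real.norm_eq_abs, abs_le] at h2 h3
    have h4 : dist (hom x0 (s n) y) (hom x0 (s n) x0) ^ θ ≤ h ^ θ :=
      Real.rpow_le_rpow dist_nonneg (hdiam _ hm1 _ hm2) hθ.le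
    have h5 : cB θ c * dist (hom x0 (s n) y) (hom x0 (s n) x0) ^ θ * M ≤ cB θ c * h ^ θ * M := by
      gcongr
    have h6 : 1 / ((n : ℝ) + 1) ≤ 1 := by
      rw [div_le_one (by positivity)]; have := n.cast_nonneg (α := ℝ); linarith
    have h7 := abs_le.1 h1
    have h8 : 1 / 2 * (r / 2) * ‖a n‖ ≤ s n * (r / 2) * ‖a n‖ := by
      gcongr; exact hs2 n
    rw [hD, le_div_iff₀ (by positivity)]
    nlinarith [h7.1, h7.2, h2.1, h2.2, h3.1, h3.2]
  obtain ⟨a', -, φ, hφ, hlim⟩ := tendsto_subseq_of_bounded isBounded_closedBall hbd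
  refine ⟨a', fun x hx x' hx' => ?_⟩
  have hφt := hφ.tendsto_atTop
  have hmem : ∀ y ∈ T, ∀ n, hom x0 (s (φ n)) y ∈ T := fun y hy n =>
    hom_mem hT hx0T hy ((by norm_num : (0:ℝ) ≤ 1 / 2).trans (hs2 _)) (hs1 _).le
  have hhl : ∀ y ∈ T, Tendsto (fun n => hom x0 (s (φ n)) y) atTop (𝓝 y) := by
    intro y hy
    have : Tendsto (fun n => x0 + s (φ n) • (y - x0)) atTop (𝓝 (x0 + (1 : ℝ) • (y - x0))) :=
      ((hslim.comp hφt).smul_const _).const_add _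
    simpa [hom] using this
  have hwl : ∀ y ∈ T, Tendsto (fun n => w (hom x0 (s (φ n)) y)) atTop (𝓝 (w y)) := by
    intro y hy
    exact (hw y hy).tendsto.comp (tendsto_nhdsWithin_iff.2 ⟨hhl y hy,
      Eventually.of_forall fun n => hmem y hy n⟩)
  have L1 : Tendsto (fun n => |w (hom x0 (s (φ n)) x) - w (hom x0 (s (φ n)) x') -
      (inner ℝ (a (φ n)) (hom x0 (s (φ n)) x - hom x0 (s (φ n)) x') : ℝ)|) atTop
      (𝓝 |w x - w x' - (inner ℝ a' (x - x') : ℝ)|) :=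
    (((hwl x hx).sub (hwl x' hx')).sub (hlim.inner ((hhl x hx).sub (hhl x' hx')))).abs
  have L2 : Tendsto (fun n => cB θ c * dist (hom x0 (s (φ n)) x) (hom x0 (s (φ n)) x') ^ θ * M
      + 2 * (1 / ((φ n : ℝ) + 1))) atTop (𝓝 (cB θ c * dist x x' ^ θ * M + 2 * 0)) :=
    (((((hhl x hx).dist (hhl x' hx')).rpow_const (Or.inr hθ.le)).const_mul _).mul_const _).add
      ((hεlim.comp hφt).const_mul 2)
  have := le_of_tendsto_of_tendsto' L1 L2 fun n => ha (φ n) _ ⟨x, hx, rfl⟩ _ ⟨x', hx', rfl⟩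
  simpa using this

end

section

/-- Newton polynomial at the nodes `r / ℓ`. -/
def Nw (ℓ k : ℕ) (s : ℝ) : ℝ := ∏ r ∈ Finset.range k, ((ℓ : ℝ) * s - r)

/-- Newton product basis. -/
def eN (ℓ k m : ℕ) (p : ℝ × ℝ) : ℝ := Nw ℓ k p.1 * Nw ℓ m p.2

/-- index set -/
abbrev Idx (n : ℕ) := {p : Fin (n + 1) × Fin (n + 1) // (p.1 : ℕ) + (p.2 : ℕ) ≤ n}

def VN (ℓ n : ℕ) : Submodule ℝ (ℝ × ℝ → ℝ) :=
  Submodule.span ℝ (range fun p : Idx n => eN ℓ p.1.1 p.1.2)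

lemma eN_mem {ℓ n k m : ℕ} (h : k + m ≤ n) : eN ℓ k m ∈ VN ℓ n :=
  Submodule.subset_span ⟨⟨(⟨k, by omega⟩, ⟨m, by omega⟩), h⟩, rfl⟩

lemma VN_mono {ℓ n n' : ℕ} (h : n ≤ n') : VN ℓ n ≤ VN ℓ n' := by
  refine Submodule.span_le.2 ?_
  rintro _ ⟨p, rfl⟩
  exact eN_mem (p.2.trans h)

lemma affine_mul_VN {ℓ n : ℕ} (hℓ : 1 ≤ ℓ) (a b c : ℝ) {f : ℝ × ℝ → ℝ} (hf : f ∈ VN ℓ n) :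
    (fun p => (a + b * p.1 + c * p.2) * f p) ∈ VN ℓ (n + 1) := by
  have hℓ0 : (ℓ : ℝ) ≠ 0 := by positivity
  induction hf using Submodule.span_induction with
  | mem f hf =>
    obtain ⟨p, rfl⟩ := hf
    obtain ⟨⟨⟨k, hk⟩, ⟨m, hm⟩⟩, hkm⟩ := p
    simp only at hkm ⊢
    have e : (fun p : ℝ × ℝ => (a + b * p.1 + c * p.2) * eN ℓ k m p) =
        (a + b * k / ℓ + c * m / ℓ) • eN ℓ k m + (b / ℓ) • eN ℓ (k + 1) m
          + (c / ℓ) • eN ℓ k (m + 1) := by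
      funext p
      simp only [eN, Pi.add_apply, Pi.smul_apply, smul_eq_mul, Nw, Finset.prod_range_succ]
      field_simp
      ring
    rw [e]
    exact add_mem (add_mem (Submodule.smul_mem _ _ (eN_mem (by omega)))
      (Submodule.smul_mem _ _ (eN_mem (by omega)))) (Submodule.smul_mem _ _ (eN_mem (by omega)))
  | zero =>
    convert (VN ℓ (n + 1)).zero_mem using 1
    funext p; simp
  | add f g _ _ hf hg =>
    convert add_mem hf hg using 1
    funext p; simp only [Pi.add_apply]; ring
  | smul r f _ hf =>
    convert Submodule.smul_mem _ r hf using 1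
    funext p; simp only [Pi.smul_apply, smul_eq_mul]; ring

lemma pow_mem_VN {ℓ : ℕ} (hℓ : 1 ≤ ℓ) (a b c a' b' c' : ℝ) (k m : ℕ) :
    (fun p : ℝ × ℝ => (a + b * p.1 + c * p.2) ^ k * (a' + b' * p.1 + c' * p.2) ^ m)
      ∈ VN ℓ (k + m) := by
  induction m with
  | zero =>
    induction k with
    | zero =>
      have : (fun p : ℝ × ℝ => (a + b * p.1 + c * p.2) ^ 0 * (a' + b' * p.1 + c' * p.2) ^ 0)
          = eN ℓ 0 0 := by funext p; simp [eN, Nw]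
      rw [this]; exact eN_mem le_rfl
    | succ k ih =>
      have := affine_mul_VN hℓ a b c ih
      convert this using 1
      funext p; ring
  | succ m ih =>
    have := affine_mul_VN hℓ a' b' c' ih
    rw [← add_assoc]
    convert this using 1
    funext p; ring

lemma pfun_mem_VN {ℓ : ℕ} (hℓ : 1 ≤ ℓ) (q : MvPolynomial (Fin 2) ℝ) (hq : q.totalDegree ≤ ℓ)
    (z u v : E2) : (fun p : ℝ × ℝ => pfun q (z + p.1 • u + p.2 • v)) ∈ VN ℓ ℓ := by
  have e : (fun p : ℝ × ℝ => pfun q (z + p.1 • u + p.2 • v)) =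
      ∑ d ∈ q.support, q.coeff d • fun p : ℝ × ℝ =>
        (z 0 + u 0 * p.1 + v 0 * p.2) ^ (d 0) * (z 1 + u 1 * p.1 + v 1 * p.2) ^ (d 1) := by
    funext p
    simp only [pfun, MvPolynomial.eval_eq', Finset.sum_apply, Pi.smul_apply, smul_eq_mul,
      Fin.prod_univ_two]
    refine Finset.sum_congr rfl fun d _ => ?_
    simp [mul_comm]
  rw [e]
  refine Submodule.sum_mem _ fun d hd => Submodule.smul_mem _ _ ?_
  refine VN_mono ?_ (pow_mem_VN hℓ _ _ _ _ _ _ (d 0) (d 1))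
  have := (MvPolynomial.le_totalDegree hd).trans hq
  rwa [Finsupp.sum_fintype _ _ (fun _ => rfl), Fin.sum_univ_two] at this

/-- Lipschitz and bounded on the unit square. -/
def LipB (f : ℝ × ℝ → ℝ) : Prop := ∃ L : ℝ, 0 ≤ L ∧ ∀ p ∈ Icc (0 : ℝ) 1 ×ˢ Icc (0 : ℝ) 1,
  ∀ q ∈ Icc (0 : ℝ) 1 ×ˢ Icc (0 : ℝ) 1, |f p| ≤ L ∧
    |f p - f q| ≤ L * (|p.1 - q.1| + |p.2 - q.2|)

lemma LipB.mul {f g : ℝ × ℝ → ℝ} (hf : LipB f) (hg : LipB g) : LipB (fun p => f p * g p) := by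
  obtain ⟨L, hL, h⟩ := hf
  obtain ⟨L', hL', h'⟩ := hg
  refine ⟨2 * L * L', by positivity, fun p hp q hq => ⟨?_, ?_⟩⟩
  · rw [abs_mul]
    have := mul_le_mul (h p hp q hq).1 (h' p hp q hq).1 (abs_nonneg _) hL
    nlinarith [mul_nonneg hL hL']
  · have e : f p * g p - f q * g q = f p * (g p - g q) + g q * (f p - f q) := by ring
    rw [e]
    refine (abs_add_le _ _).trans ?_
    rw [abs_mul, abs_mul]
    have h1 := mul_le_mul (h p hp q hq).1 (h' p hp q hq).2 (abs_nonneg _) hL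
    have h2 := mul_le_mul (h' q hq q hq).1 (h p hp q hq).2 (abs_nonneg _) hL'
    linarith

lemma LipB_affine (a b c : ℝ) : LipB (fun p => a + b * p.1 + c * p.2) := by
  refine ⟨|a| + |b| + |c|, by positivity, fun p hp q hq => ⟨?_, ?_⟩⟩
  · have h1 : |p.1| ≤ 1 := abs_le.2 ⟨by linarith [hp.1.1], hp.1.2⟩
    have h2 : |p.2| ≤ 1 := abs_le.2 ⟨by linarith [hp.2.1], hp.2.2⟩
    refine (abs_add_le _ _).trans (add_le_add ((abs_add_le _ _).trans (add_le_add le_rfl ?_)) ?_)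
    · rw [abs_mul]; exact mul_le_of_le_one_right (abs_nonneg _) h1
    · rw [abs_mul]; exact mul_le_of_le_one_right (abs_nonneg _) h2
  · have e : a + b * p.1 + c * p.2 - (a + b * q.1 + c * q.2) =
      b * (p.1 - q.1) + c * (p.2 - q.2) := by ring
    rw [e]
    refine (abs_add_le _ _).trans ?_
    rw [abs_mul, abs_mul]
    nlinarith [mul_nonneg (abs_nonneg a) (abs_nonneg (p.1 - q.1)),
      mul_nonneg (abs_nonneg a) (abs_nonneg (p.2 - q.2)),
      mul_nonneg (abs_nonneg b) (abs_nonneg (p.2 - q.2)),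
      mul_nonneg (abs_nonneg c) (abs_nonneg (p.1 - q.1))]

lemma LipB_Nw (ℓ k : ℕ) : LipB (fun p => Nw ℓ k p.1) ∧ LipB (fun p => Nw ℓ k p.2) := by
  induction k with
  | zero =>
    have := LipB_affine 1 0 0
    simp only [zero_mul, add_zero] at this
    simpa [Nw] using this
  | succ k ih =>
    simp only [Nw, Finset.prod_range_succ]
    have h1 := LipB_affine (-(k : ℝ)) ℓ 0
    have h2 := LipB_affine (-(k : ℝ)) 0 ℓ
    constructor
    · convert ih.1.mul h1 using 2
      simp only [Nw]; ring
    · convert ih.2.mul h2 using 2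
      simp only [Nw]; ring

lemma LipB_eN (ℓ k m : ℕ) : LipB (eN ℓ k m) := (LipB_Nw ℓ k).1.mul (LipB_Nw ℓ m).2

lemma Nw_node {ℓ : ℕ} (hℓ : 1 ≤ ℓ) {k i : ℕ} : Nw ℓ k ((i : ℝ) / ℓ) = (i.descFactorial k : ℝ) := by
  have hℓ0 : (ℓ : ℝ) ≠ 0 := by positivity
  unfold Nw
  rw [Nat.descFactorial_eq_prod_range]
  rw [mul_div_cancel₀ _ hℓ0]
  by_cases h : k ≤ i
  · push_cast
    refine Finset.prod_congr rfl fun r hr => ?_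
    rw [Nat.cast_sub (by have := Finset.mem_range.1 hr; omega)]
  · rw [Finset.prod_eq_zero (i := i) (Finset.mem_range.2 (by omega)) (by simp),
      Finset.prod_eq_zero (i := i) (Finset.mem_range.2 (by omega)) (by simp)]
    simp

/-- evaluation matrix at nodes -/
def evN (ℓ : ℕ) : (Idx ℓ → ℝ) →ₗ[ℝ] (Idx ℓ → ℝ) where
  toFun c := fun q => ∑ p : Idx ℓ, c p * eN ℓ p.1.1 p.1.2 ((q.1.1 : ℝ) / ℓ, (q.1.2 : ℝ) / ℓ)
  map_add' := by intro a b; funext q; simp [add_mul, Finset.sum_add_distrib]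
  map_smul' := by intro a b; funext q; simp [Finset.mul_sum, mul_assoc]

lemma evN_inj {ℓ : ℕ} (hℓ : 1 ≤ ℓ) : LinearMap.ker (evN ℓ) = ⊥ := by
  rw [LinearMap.ker_eq_bot']
  intro c hc
  have key : ∀ n : ℕ, ∀ p : Idx ℓ, (p.1.1 : ℕ) + (p.1.2 : ℕ) = n → c p = 0 := by
    intro n
    induction n using Nat.strong_induction_on with
    | _ n ih =>
      intro q hq
      have h1 : ∑ p : Idx ℓ, c p * eN ℓ p.1.1 p.1.2 ((q.1.1 : ℝ) / ℓ, (q.1.2 : ℝ) / ℓ) = 0 :=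
        congrFun hc q
      rw [Finset.sum_eq_single q] at h1
      · simp only [eN] at h1
        rw [Nw_node hℓ, Nw_node hℓ] at h1
        have : ((q.1.1 : ℕ).descFactorial (q.1.1 : ℕ) : ℝ) * ((q.1.2 : ℕ).descFactorial (q.1.2 : ℕ) : ℝ) ≠ 0 := by
          rw [Nat.descFactorial_self, Nat.descFactorial_self]
          positivity
        exact (mul_eq_zero.1 h1).resolve_right this
      · intro p _ hpq
        by_cases h2 : (p.1.1 : ℕ) ≤ q.1.1 ∧ (p.1.2 : ℕ) ≤ q.1.2
        · have h3 : (p.1.1 : ℕ) + (p.1.2 : ℕ) < n := by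
            by_contra hcon
            apply hpq
            apply Subtype.ext
            apply Prod.ext <;> apply Fin.ext <;> omega
          rw [ih _ h3 p rfl, zero_mul]
        · simp only [eN]
          rw [Nw_node hℓ, Nw_node hℓ]
          rw [not_and_or, not_le, not_le] at h2
          rcases h2 with h2 | h2
          · rw [(Nat.descFactorial_eq_zero_iff_lt).2 h2]; simp
          · rw [(Nat.descFactorial_eq_zero_iff_lt (n := (q.1.2 : ℕ))).2 h2]; simp
      · simp
  funext p
  exact key _ p rfl

theorem interp_bound {ℓ : ℕ} (hℓ : 1 ≤ ℓ) : ∃ C : ℝ, 0 < C ∧ ∀ f ∈ VN ℓ ℓ, ∀ B : ℝ,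
    (∀ i j : ℕ, i + j ≤ ℓ → |f ((i : ℝ) / ℓ, (j : ℝ) / ℓ)| ≤ B) →
    ∀ p ∈ Icc (0 : ℝ) 1 ×ˢ Icc (0 : ℝ) 1, ∀ q ∈ Icc (0 : ℝ) 1 ×ˢ Icc (0 : ℝ) 1,
      |f p - f q| ≤ C * B * (|p.1 - q.1| + |p.2 - q.2|) := by
  obtain ⟨K, hK, hanti⟩ := LinearMap.exists_antilipschitzWith (evN ℓ) (evN_inj hℓ)
  choose L hL0 hL using fun p : Idx ℓ => LipB_eN ℓ p.1.1 p.1.2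
  refine ⟨K * ∑ p, L p + 1, by have := Finset.sum_nonneg fun p (_ : p ∈ Finset.univ) => hL0 p; positivity, ?_⟩
  intro f hf B hB p hp q hq
  have hB0 : 0 ≤ B := (abs_nonneg _).trans (hB 0 0 (by omega))
  obtain ⟨c, rfl⟩ := (Submodule.mem_span_range_iff_exists_fun ℝ).1 hf
  have hc : ‖c‖ ≤ K * B := by
    have h1 := hanti.le_mul_dist c 0
    rw [map_zero, dist_zero_right, dist_zero_right] at h1
    refine h1.trans (mul_le_mul_of_nonneg_left ?_ K.2)
    rw [pi_norm_le_iff_of_nonneg hB0]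
    intro x
    have := hB x.1.1 x.1.2 x.2
    simpa [evN] using this
  have e : (∑ i, c i • eN ℓ i.1.1 i.1.2) p - (∑ i, c i • eN ℓ i.1.1 i.1.2) q =
      ∑ i, c i * (eN ℓ i.1.1 i.1.2 p - eN ℓ i.1.1 i.1.2 q) := by
    simp [Finset.sum_apply, mul_sub]
  rw [e]
  refine (Finset.abs_sum_le_sum_abs _ _).trans ?_
  set d := |p.1 - q.1| + |p.2 - q.2| with hd
  have hd0 : 0 ≤ d := by positivity
  calc ∑ i, |c i * (eN ℓ i.1.1 i.1.2 p - eN ℓ i.1.1 i.1.2 q)| ≤ ∑ i, (K * B) * (L i * d) := by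
        refine Finset.sum_le_sum fun i _ => ?_
        rw [abs_mul]
        refine mul_le_mul ?_ (hL i p hp q hq).2 (abs_nonneg _) (by positivity)
        exact (norm_le_pi_norm c i).trans hc
    _ = (K * ∑ i, L i) * B * d := by rw [← Finset.mul_sum, ← Finset.sum_mul]; ring
    _ ≤ _ := by
        have := mul_nonneg hB0 hd0
        nlinarith

end

section

/-- planar determinant -/
def det2 (u v : E2) : ℝ := u 0 * v 1 - u 1 * v 0

/-- signed double area -/
def DT (t : Fin 3 → E2) : ℝ := det2 (t 1 - t 0) (t 2 - t 0)

/-- perimeter -/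
def dT (t : Fin 3 → E2) : ℝ := dist (t 0) (t 1) + dist (t 1) (t 2) + dist (t 2) (t 0)

/-- barycentric coordinates -/
def lam (t : Fin 3 → E2) (i : Fin 3) (x : E2) : ℝ := det2 (t (i + 1) - x) (t (i + 2) - x) / DT t

lemma ext2 {x y : E2} (h0 : x 0 = y 0) (h1 : x 1 = y 1) : x = y := by
  ext i; fin_cases i <;> assumption

lemma det2_sq (u v : E2) : det2 u v ^ 2 + (inner ℝ u v : ℝ) ^ 2 = ‖u‖ ^ 2 * ‖v‖ ^ 2 := by
  simp only [det2, EuclideanSpace.real_norm_sq_eq, PiLp.inner_apply, Fin.sum_univ_two,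
    RCLike.inner_apply, conj_trivial]
  ring

lemma abs_det2_le (u v : E2) : |det2 u v| ≤ ‖u‖ * ‖v‖ := by
  apply abs_le_of_sq_le_sq _ (by positivity)
  have := det2_sq u v
  nlinarith [sq_nonneg (inner ℝ u v : ℝ)]

lemma det2_eq_sin (u v : E2) :
    |det2 u v| = Real.sin (InnerProductGeometry.angle u v) * (‖u‖ * ‖v‖) := by
  rw [InnerProductGeometry.sin_angle_mul_norm_mul_norm, ← Real.sqrt_sq_eq_abs]
  congr 1
  have := det2_sq u v
  rw [real_inner_self_eq_norm_sq, real_inner_self_eq_norm_sq]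
  nlinarith

lemma DT_cyc (t : Fin 3 → E2) (i : Fin 3) : det2 (t (i + 1) - t i) (t (i + 2) - t i) = DT t := by
  fin_cases i <;> simp [DT, det2] <;> ring

lemma lam_sum {t : Fin 3 → E2} (hD : DT t ≠ 0) (x : E2) : ∑ i, lam t i x = 1 := by
  simp only [Fin.sum_univ_three, lam, ← add_div]
  rw [div_eq_one_iff_eq hD]
  simp [det2, DT]
  ring

lemma lam_comb {t : Fin 3 → E2} (hD : DT t ≠ 0) (x : E2) : ∑ i, lam t i x • t i = x := by
  simp only [Fin.sum_univ_three, lam]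
  apply ext2 <;>
  · simp only [PiLp.add_apply, PiLp.smul_apply, smul_eq_mul]
    field_simp
    simp [det2, DT]
    ring

lemma lam_of_comb {t : Fin 3 → E2} (hD : DT t ≠ 0) {l : Fin 3 → ℝ} (hl : ∑ i, l i = 1) (i : Fin 3) :
    lam t i (∑ j, l j • t j) = l i := by
  rw [lam, div_eq_iff hD]
  rw [Fin.sum_univ_three] at hl
  have h0 : l 0 = 1 - l 1 - l 2 := by linarith
  fin_cases i <;> simp [det2, DT, Fin.sum_univ_three, h0] <;> ring

lemma lam_vertex {t : Fin 3 → E2} (hD : DT t ≠ 0) (i j : Fin 3) :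
    lam t i (t j) = if i = j then 1 else 0 := by
  have := lam_of_comb hD (l := fun k => if k = j then 1 else 0) (by simp) i
  simpa using this

lemma lam_affine (t : Fin 3 → E2) (i : Fin 3) (a b : ℝ) (hab : a + b = 1) (x y : E2) :
    lam t i (a • x + b • y) = a * lam t i x + b * lam t i y := by
  have hb : b = 1 - a := by linarith
  subst hb
  simp only [lam, mul_div_assoc', ← add_div]
  congr 1
  simp [det2]; ring

lemma lam_hom (t : Fin 3 → E2) (i : Fin 3) (s : ℝ) (z x : E2) :
    lam t i (z + s • (x - z)) = (1 - s) * lam t i z + s * lam t i x := by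
  rw [← lam_affine t i (1 - s) s (by ring)]
  congr 1; module

lemma mem_tri {t : Fin 3 → E2} (hD : DT t ≠ 0) {x : E2} : x ∈ triSet t ↔ ∀ i, 0 ≤ lam t i x := by
  constructor
  · intro hx
    have hconv : Convex ℝ {x | ∀ i, 0 ≤ lam t i x} := by
      intro x hx y hy a b ha hb hab i
      rw [lam_affine t i a b hab]
      have := hx i
      have := hy i
      positivity
    refine convexHull_min ?_ hconv hx
    rintro _ ⟨j, rfl⟩ i
    rw [lam_vertex hD]; split_ifs <;> norm_num
  · intro h
    rw [← lam_comb hD x]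
    exact (convex_convexHull ℝ _).sum_mem (fun i _ => h i) (lam_sum hD x)
      fun i _ => subset_convexHull ℝ _ ⟨i, rfl⟩

lemma continuous_lam (t : Fin 3 → E2) (i : Fin 3) : Continuous (lam t i) := by
  unfold lam det2
  fun_prop

lemma compact_tri (t : Fin 3 → E2) : IsCompact (triSet t) :=
  (finite_range t).isCompact_convexHull (𝕜 := ℝ)

lemma convex_tri (t : Fin 3 → E2) : Convex ℝ (triSet t) := convex_convexHull ℝ _

lemma vertex_mem (t : Fin 3 → E2) (i : Fin 3) : t i ∈ triSet t := subset_convexHull ℝ _ ⟨i, rfl⟩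

lemma interior_tri {t : Fin 3 → E2} (hD : DT t ≠ 0) {x : E2} (h : ∀ i, 0 < lam t i x) :
    x ∈ interior (triSet t) := by
  rw [mem_interior]
  refine ⟨{x | ∀ i, 0 < lam t i x}, fun y hy => (mem_tri hD).2 fun i => (hy i).le, ?_, h⟩
  simp only [Set.ofPred_forall]
  exact isOpen_iInter_of_finite fun i => isOpen_lt continuous_const (continuous_lam t i)

lemma exists_interior_tri {t : Fin 3 → E2} (hD : DT t ≠ 0) : ∃ x, x ∈ interior (triSet t) := by
  refine ⟨∑ j, (1 / 3 : ℝ) • t j, interior_tri hD fun i => ?_⟩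
  rw [lam_of_comb hD (l := fun _ => 1 / 3) (by norm_num)]
  norm_num

lemma DT_ne {t : Fin 3 → E2} (h : AffineIndependent ℝ t) : DT t ≠ 0 := by
  intro hD
  rw [affineIndependent_iff] at h
  have hinj : t 1 - t 0 ≠ 0 := by
    intro h0
    have := h Finset.univ ![-1, 1, 0] (by simp [Fin.sum_univ_three]) (by
      simp [Fin.sum_univ_three]
      rw [← h0]; abel) 0 (Finset.mem_univ _)
    simp at this
  have key : ∀ k : Fin 2, (t 2 - t 0) k • (t 1 - t 0) - (t 1 - t 0) k • (t 2 - t 0) = 0 := by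
    intro k
    simp only [DT, det2] at hD
    fin_cases k <;> apply ext2 <;> simp at hD ⊢ <;> linarith
  have z : ∀ k : Fin 2, (t 1 - t 0) k = 0 := by
    intro k
    set a := (t 2 - t 0) k with ha
    set b := (t 1 - t 0) k with hb
    have := h Finset.univ ![b - a, a, -b] (by simp [Fin.sum_univ_three]) (by
      simp [Fin.sum_univ_three]
      rw [← key k]; module) 2 (Finset.mem_univ _)
    simpa using this
  exact hinj (ext2 (z 0) (z 1))

lemma edge_le_dT (t : Fin 3 → E2) (i j : Fin 3) : dist (t i) (t j) ≤ dT t := by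
  have h0 := dist_nonneg (x := t 0) (y := t 1)
  have h1 := dist_nonneg (x := t 1) (y := t 2)
  have h2 := dist_nonneg (x := t 2) (y := t 0)
  unfold dT
  have e := dist_comm (t 1) (t 0)
  have e1 := dist_comm (t 2) (t 1)
  have e2 := dist_comm (t 0) (t 2)
  fin_cases i <;> fin_cases j <;> simp <;> linarith

lemma dT_pos {t : Fin 3 → E2} (hD : DT t ≠ 0) : 0 < dT t := by
  have h0 := dist_nonneg (x := t 0) (y := t 1)
  have h1 := dist_nonneg (x := t 1) (y := t 2)
  have h2 := dist_nonneg (x := t 2) (y := t 0)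
  have : 0 < dist (t 0) (t 1) := by
    rw [dist_pos]; intro h
    apply hD; simp [DT, det2, h]
  unfold dT; linarith

/-- shape regularity -/
def Reg (κ : ℝ) (t : Fin 3 → E2) : Prop := DT t ≠ 0 ∧ κ * dT t ^ 2 ≤ |DT t|

lemma Reg.pos {κ : ℝ} {t : Fin 3 → E2} (h : Reg κ t) : 0 < dT t := dT_pos h.1

lemma Reg.edge {κ : ℝ} {t : Fin 3 → E2} (h : Reg κ t) {i j : Fin 3} (hij : i ≠ j) :
    κ * dT t ≤ dist (t i) (t j) := by
  have hd := h.pos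
  have key : ∀ i j : Fin 3, ((j = i + 1) ∨ (j = i + 2)) → κ * dT t ≤ dist (t i) (t j) := by
    intro i j hj
    have h1 := h.2
    rw [← DT_cyc t i] at h1
    have h2 := abs_det2_le (t (i + 1) - t i) (t (i + 2) - t i)
    rw [← dist_eq_norm, ← dist_eq_norm, dist_comm _ (t i), dist_comm _ (t i)] at h2
    have h3 := edge_le_dT t i (i + 1)
    have h4 := edge_le_dT t i (i + 2)
    have h5 := dist_nonneg (x := t i) (y := t (i + 1))
    have h6 := dist_nonneg (x := t i) (y := t (i + 2))
    rcases hj with rfl | rfl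
    · have : (κ * dT t) * dT t ≤ dist (t i) (t (i + 1)) * dT t := by nlinarith
      exact le_of_mul_le_mul_right this hd
    · have : (κ * dT t) * dT t ≤ dist (t i) (t (i + 2)) * dT t := by nlinarith
      exact le_of_mul_le_mul_right this hd
  apply key
  revert hij; fin_cases i <;> fin_cases j <;> decide

lemma Reg.lam_lip {κ : ℝ} (hκ : 0 < κ) {t : Fin 3 → E2} (h : Reg κ t) (i : Fin 3) (x y : E2) :
    |lam t i x - lam t i y| ≤ dist x y / (κ * dT t) := by
  have hd := h.pos
  have e : lam t i x - lam t i y = det2 (x - y) (t (i + 1) - t (i + 2)) / DT t := by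
    simp only [lam, ← sub_div]
    congr 1
    simp [det2]; ring
  rw [e, abs_div, div_le_div_iff₀ (abs_pos.2 h.1) (by positivity)]
  have h1 := abs_det2_le (x - y) (t (i + 1) - t (i + 2))
  rw [← dist_eq_norm, ← dist_eq_norm] at h1
  calc |det2 (x - y) (t (i + 1) - t (i + 2))| * (κ * dT t) ≤ (dist x y * dT t) * (κ * dT t) := by
        gcongr
        exact h1.trans (mul_le_mul_of_nonneg_left (edge_le_dT _ _ _) dist_nonneg)
    _ = dist x y * (κ * dT t ^ 2) := by ring
    _ ≤ _ := mul_le_mul_of_nonneg_left h.2 dist_nonneg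

lemma Reg.kap_le {κ : ℝ} {t : Fin 3 → E2} (h : Reg κ t) : κ ≤ 1 := by
  have hd := h.pos
  have h1 := h.edge (i := 0) (j := 1) (by decide)
  have h2 := edge_le_dT t 0 1
  by_contra hc
  nlinarith

lemma tri_diam (t : Fin 3 → E2) {x y : E2} (hx : x ∈ triSet t) (hy : y ∈ triSet t) :
    dist x y ≤ dT t := by
  have h0 : (0 : ℝ) ≤ dT t := dist_nonneg.trans (edge_le_dT t 0 1)
  have h1 : triSet t ⊆ closedBall x (dT t) := by
    refine convexHull_min ?_ (convex_closedBall _ _)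
    rintro _ ⟨j, rfl⟩
    have h2 : triSet t ⊆ closedBall (t j) (dT t) := by
      refine convexHull_min ?_ (convex_closedBall _ _)
      rintro _ ⟨i, rfl⟩
      exact edge_le_dT t i j
    have := h2 hx
    rwa [mem_closedBall, dist_comm] at this
  rw [dist_comm]; exact h1 hy

lemma exists_reg {σ : ℝ} (hσ : 0 < σ) : ∃ κ : ℝ, 0 < κ ∧ ∀ t : Fin 3 → E2,
    AffineIndependent ℝ t → angleLB σ t → Reg κ t := by
  set s := min σ 1 with hs
  have hs0 : 0 < s := lt_min hσ one_pos
  have hs1 : s ≤ 1 := min_le_right _ _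
  have hpi : s ≤ Real.pi / 2 := by have := Real.pi_gt_three; linarith
  set S := Real.sin s with hS
  have hS0 : 0 < S := Real.sin_pos_of_pos_of_lt_pi hs0 (by have := Real.pi_gt_three; linarith)
  have hS1 : S ≤ 1 := Real.sin_le_one _
  refine ⟨S ^ 3 / 9, by positivity, fun t ht hang => ⟨DT_ne ht, ?_⟩⟩
  have hinj := ht.injective
  have hne : ∀ i j : Fin 3, i ≠ j → t i ≠ t j := fun i j hij h => hij (hinj h)
  have hsum := EuclideanGeometry.angle_add_angle_add_angle_eq_pi (p₁ := t 0) (p₂ := t 1) (t 2)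
    (hne 1 0 (by decide))
  have a0 := hang 0
  have a1 := hang 1
  have a2 := hang 2
  simp only [Fin.isValue, zero_add, show (1 : Fin 3) + 1 = 2 from rfl, show (1 : Fin 3) + 2 = 0 from rfl,
    show (2 : Fin 3) + 1 = 0 from rfl, show (2 : Fin 3) + 2 = 1 from rfl] at a0 a1 a2
  have c0 : EuclideanGeometry.angle (t 2) (t 0) (t 1) = EuclideanGeometry.angle (t 1) (t 0) (t 2) :=
    EuclideanGeometry.angle_comm _ _ _
  have c1 : EuclideanGeometry.angle (t 2) (t 1) (t 0) = EuclideanGeometry.angle (t 0) (t 1) (t 2) :=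
    EuclideanGeometry.angle_comm _ _ _
  have c2 : EuclideanGeometry.angle (t 0) (t 2) (t 1) = EuclideanGeometry.angle (t 1) (t 2) (t 0) :=
    EuclideanGeometry.angle_comm _ _ _
  have hss : s ≤ σ := min_le_left _ _
  have sinlb : ∀ A : ℝ, s ≤ A → A ≤ Real.pi - s → S ≤ Real.sin A := by
    intro A h1 h2
    rcases le_total A (Real.pi / 2) with h | h
    · exact Real.sin_le_sin_of_le_of_le_pi_div_two (by linarith) h h1
    · rw [← Real.sin_pi_sub A]
      exact Real.sin_le_sin_of_le_of_le_pi_div_two (by linarith) (by linarith) (by linarith)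
  set D := |DT t| with hD
  set a := dist (t 0) (t 1) with ha
  set b := dist (t 1) (t 2) with hb
  set c := dist (t 2) (t 0) with hc
  have D0 : D = Real.sin (EuclideanGeometry.angle (t 1) (t 0) (t 2)) * (a * c) := by
    have := det2_eq_sin (t 1 - t 0) (t 2 - t 0)
    rw [hD, DT, this, EuclideanGeometry.angle, ← dist_eq_norm, ← dist_eq_norm, ha, hc, dist_comm (t 0)]
    rfl
  have D1 : D = Real.sin (EuclideanGeometry.angle (t 2) (t 1) (t 0)) * (b * a) := by
    have := det2_eq_sin (t 2 - t 1) (t 0 - t 1)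
    have e := DT_cyc t 1
    rw [hD, ← e]
    simp only [show (1 : Fin 3) + 1 = 2 from rfl, show (1 : Fin 3) + 2 = 0 from rfl]
    rw [this, EuclideanGeometry.angle, ← dist_eq_norm, ← dist_eq_norm, ha, hb, dist_comm (t 1) (t 2)]
    rfl
  have D2 : D = Real.sin (EuclideanGeometry.angle (t 0) (t 2) (t 1)) * (c * b) := by
    have := det2_eq_sin (t 0 - t 2) (t 1 - t 2)
    have e := DT_cyc t 2
    rw [hD, ← e]
    simp only [show (2 : Fin 3) + 1 = 0 from rfl, show (2 : Fin 3) + 2 = 1 from rfl]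
    rw [this, EuclideanGeometry.angle, ← dist_eq_norm, ← dist_eq_norm, hc, hb, dist_comm (t 2) (t 0)]
    rfl
  have s0 : S ≤ Real.sin (EuclideanGeometry.angle (t 1) (t 0) (t 2)) :=
    sinlb _ (by linarith) (by linarith)
  have s1 : S ≤ Real.sin (EuclideanGeometry.angle (t 2) (t 1) (t 0)) :=
    sinlb _ (by linarith) (by linarith)
  have s2 : S ≤ Real.sin (EuclideanGeometry.angle (t 0) (t 2) (t 1)) :=
    sinlb _ (by linarith) (by linarith)
  have a0' : 0 < a := dist_pos.2 (hne 0 1 (by decide))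
  have b0' : 0 < b := dist_pos.2 (hne 1 2 (by decide))
  have c0' : 0 < c := dist_pos.2 (hne 2 0 (by decide))
  have le1 : ∀ A : ℝ, Real.sin A ≤ 1 := Real.sin_le_one
  have p0 : S * (a * c) ≤ D := by rw [D0]; gcongr
  have p1 : S * (b * a) ≤ D := by rw [D1]; gcongr
  have p2 : S * (c * b) ≤ D := by rw [D2]; gcongr
  have q0 : D ≤ a * c := by rw [D0]; exact mul_le_of_le_one_left (by positivity) (le1 _)
  have q1 : D ≤ b * a := by rw [D1]; exact mul_le_of_le_one_left (by positivity) (le1 _)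
  have q2 : D ≤ c * b := by rw [D2]; exact mul_le_of_le_one_left (by positivity) (le1 _)
  -- edge comparisons
  have e1 : S * b ≤ c := le_of_mul_le_mul_right (by linarith : (S * b) * a ≤ c * a) a0'
  have e2 : S * c ≤ b := le_of_mul_le_mul_right (by linarith : (S * c) * a ≤ b * a) a0'
  have e3 : S * a ≤ b := le_of_mul_le_mul_right (by linarith : (S * a) * c ≤ b * c) c0'
  have e4 : S * b ≤ a := le_of_mul_le_mul_right (by linarith : (S * b) * c ≤ a * c) c0'
  have e5 : S * a ≤ c := le_of_mul_le_mul_right (by linarith : (S * a) * b ≤ c * b) b0'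
  have e6 : S * c ≤ a := le_of_mul_le_mul_right (by linarith : (S * c) * b ≤ a * b) b0'
  have hd : dT t = a + b + c := rfl
  have f1 : S * dT t ≤ 3 * a := by
    rw [hd]; nlinarith
  have f2 : S * dT t ≤ 3 * c := by
    rw [hd]; nlinarith
  have hdpos : 0 < dT t := by rw [hd]; positivity
  have : (S * dT t) * (S * dT t) ≤ (3 * a) * (3 * c) := by
    apply mul_le_mul f1 f2 <;> positivity
  calc S ^ 3 / 9 * dT t ^ 2 = S * ((S * dT t) * (S * dT t)) / 9 := by ring
    _ ≤ S * ((3 * a) * (3 * c)) / 9 := by gcongr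
    _ = S * (a * c) := by ring
    _ ≤ D := p0

end

section

/-- reference triangle -/
def refT : Fin 3 → E2 := ![0, EuclideanSpace.single 0 1, EuclideanSpace.single 1 1]

lemma DT_refT : DT refT = 1 := by simp [DT, det2, refT]

/-- linear map with columns u v -/
def colMap (u v : E2) : E2 →ₗ[ℝ] E2 where
  toFun p := p 0 • u + p 1 • v
  map_add' := by intro p q; simp only [PiLp.add_apply]; module
  map_smul' := by intro r p; simp only [PiLp.smul_apply, smul_eq_mul, RingHom.id_apply]; module

lemma det_colMap (u v : E2) : LinearMap.det (colMap u v) = det2 u v := by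
  rw [← LinearMap.det_toMatrix (EuclideanSpace.basisFun (Fin 2) ℝ).toBasis, Matrix.det_fin_two]
  simp [LinearMap.toMatrix_apply, colMap, det2]
  ring

open scoped Pointwise in
lemma tri_image (t : Fin 3 → E2) :
    triSet t = t 0 +ᵥ (colMap (t 1 - t 0) (t 2 - t 0) '' triSet refT) := by
  have h1 : colMap (t 1 - t 0) (t 2 - t 0) '' triSet refT =
      convexHull ℝ (colMap (t 1 - t 0) (t 2 - t 0) '' range refT) :=
    LinearMap.image_convexHull _ _
  rw [h1, ← convexHull_vadd, triSet]
  congr 1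
  rw [← range_comp, ← image_vadd, ← range_comp]
  congr 1
  funext i
  fin_cases i <;> simp [colMap, refT]

lemma vol_tri (t : Fin 3 → E2) :
    volume.real (triSet t) = |DT t| * volume.real (triSet refT) := by
  rw [tri_image t, Measure.real, measure_vadd, Measure.addHaar_image_linearMap, ENNReal.toReal_mul,
    ENNReal.toReal_ofReal (abs_nonneg _), det_colMap, DT, Measure.real]

/-- area of the reference triangle -/
def v0 : ℝ := volume.real (triSet refT)

lemma v0_pos : 0 < v0 := by
  obtain ⟨x, hx⟩ := exists_interior_tri (t := refT) (by rw [DT_refT]; norm_num)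
  have h1 : 0 < volume (interior (triSet refT)) := isOpen_interior.measure_pos _ ⟨x, hx⟩
  have h2 : volume (triSet refT) ≠ ⊤ := (compact_tri refT).measure_lt_top.ne
  exact ENNReal.toReal_pos (h1.trans_le (measure_mono interior_subset)).ne' h2

lemma Reg.vol {κ : ℝ} {t : Fin 3 → E2} (h : Reg κ t) :
    v0 * κ * dT t ^ 2 ≤ volume.real (triSet t) := by
  rw [vol_tri]
  have := mul_le_mul_of_nonneg_left h.2 v0_pos.le
  unfold v0 at *
  nlinarith

lemma lagNode_mem {ℓ : ℕ} (hℓ : 1 ≤ ℓ) (t : Fin 3 → E2) {x : E2} (hx : x ∈ lagNodes ℓ t) :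
    x ∈ triSet t := by
  obtain ⟨a, ha, rfl⟩ := hx
  have hℓ0 : (ℓ : ℝ) ≠ 0 := by positivity
  rw [Finset.smul_sum]
  simp_rw [smul_smul]
  refine (convex_tri t).sum_mem (fun i _ => by positivity) ?_ fun i _ => vertex_mem t i
  rw [← Finset.mul_sum]
  have : ((∑ i, a i : ℕ) : ℝ) = ℓ := by rw [ha]
  push_cast at this
  rw [this]; field_simp

theorem tri_est {ℓ : ℕ} (hℓ : 1 ≤ ℓ) {θ κ : ℝ} (hθ : 0 < θ) (hθ1 : θ < 1) (hκ : 0 < κ) :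
    ∃ C : ℝ, 0 < C ∧ ∀ t : Fin 3 → E2, Reg κ t → ∀ (w W : E2 → ℝ) (g : Fin 2 → E2 → ℝ) (M : ℝ),
      0 < M → ContinuousOn w (triSet t) →
      (∀ i, HasWeakPD (interior (triSet t)) i w (g i)) → (∀ i, Measurable (g i)) →
      (∀ i, IntegrableOn (g i) (interior (triSet t))) →
      (∀ i, gagE θ (interior (triSet t)) (g i) ≤ ENNReal.ofReal (M ^ 2)) →
      (∃ p : MvPolynomial (Fin 2) ℝ, p.totalDegree ≤ ℓ ∧ ∀ x ∈ triSet t, W x = pfun p x) →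
      (∀ x ∈ lagNodes ℓ t, W x = w x) →
      ∀ x ∈ triSet t, ∀ y ∈ triSet t,
        |(w x - W x) - (w y - W y)| ≤ C * dist x y ^ θ * M := by
  obtain ⟨C1, hC1, hIntg⟩ := interp_bound hℓ
  set c := v0 * κ with hc
  have hc0 : 0 < c := mul_pos v0_pos hκ
  have hcB := cB_pos hθ hθ1 hc0
  refine ⟨cB θ c + C1 * cB θ c * (2 / κ), by positivity, ?_⟩
  intro t ht w W g M hM hw hweak hgm hgi hgag hW hnode x hx y hy
  have hd := ht.pos
  have hD := ht.1
  obtain ⟨x0, hx0⟩ := exists_interior_tri hD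
  obtain ⟨a, ha⟩ := morrey_tri (convex_tri t) (compact_tri t) hθ hθ1 hd hc0 hM ht.vol
    (fun a ha b hb => tri_diam t ha hb) hw hweak hgm hgi hgag hx0
  obtain ⟨p, hp, hWp⟩ := hW
  set z := t 0 with hz
  have hzT : z ∈ triSet t := vertex_mem t 0
  set u := t 1 - t 0 with hu
  set v := t 2 - t 0 with hv
  set F : ℝ × ℝ → ℝ := fun q => pfun p (z + q.1 • u + q.2 • v) -
    (w z + (inner ℝ a u : ℝ) * q.1 + (inner ℝ a v : ℝ) * q.2) with hF
  have hFV : F ∈ VN ℓ ℓ := by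
    refine sub_mem (pfun_mem_VN hℓ p hp z u v) ?_
    have := VN_mono (ℓ := ℓ) (n' := ℓ) (by omega)
      (pow_mem_VN hℓ (w z) (inner ℝ a u : ℝ) (inner ℝ a v : ℝ) 0 0 0 1 0)
    simpa using this
  have rep : ∀ x : E2, x = z + lam t 1 x • u + lam t 2 x • v := by
    intro x
    have h1 := lam_comb hD x
    have h2 := lam_sum hD x
    rw [Fin.sum_univ_three] at h1 h2
    have h3 : lam t 0 x = 1 - lam t 1 x - lam t 2 x := by linarith
    rw [h3] at h1
    conv_lhs => rw [← h1]
    rw [hu, hv, hz]; module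
  have hFx : ∀ x ∈ triSet t, F (lam t 1 x, lam t 2 x) = W x - w z - (inner ℝ a (x - z) : ℝ) := by
    intro x hx
    have h1 : (inner ℝ a (x - z) : ℝ) = (inner ℝ a u : ℝ) * lam t 1 x + (inner ℝ a v : ℝ) * lam t 2 x := by
      have : x - z = lam t 1 x • u + lam t 2 x • v := by
        conv_lhs => rw [rep x]
        abel
      rw [this, inner_add_right, inner_smul_right, inner_smul_right]; ring
    simp only [hF]
    rw [← rep x, h1, hWp x hx]; ring
  set B := cB θ c * dT t ^ θ * M with hB
  have hnodeB : ∀ i j : ℕ, i + j ≤ ℓ → |F ((i : ℝ) / ℓ, (j : ℝ) / ℓ)| ≤ B := by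
    intro i j hij
    have hℓ0 : (ℓ : ℝ) ≠ 0 := by positivity
    set n : E2 := (ℓ : ℝ)⁻¹ • ∑ k, ((![ℓ - i - j, i, j] k : ℕ) : ℝ) • t k with hn
    have hmem : n ∈ lagNodes ℓ t := ⟨![ℓ - i - j, i, j], by
      simp [Fin.sum_univ_three]; omega, rfl⟩
    have hnT := lagNode_mem hℓ t hmem
    have hl : ∀ k, lam t k n = ((![ℓ - i - j, i, j] k : ℕ) : ℝ) / ℓ := by
      intro k
      rw [hn, Finset.smul_sum]
      simp_rw [smul_smul]
      rw [lam_of_comb hD]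
      · field_simp
      · rw [← Finset.mul_sum, ← Nat.cast_sum]
        have : (∑ k, ![ℓ - i - j, i, j] k) = ℓ := by simp [Fin.sum_univ_three]; omega
        rw [this]; field_simp
    have h1 := hFx n hnT
    rw [hl 1, hl 2] at h1
    simp only [Matrix.cons_val_one, Matrix.cons_val_zero, Matrix.cons_val] at h1
    rw [h1, hnode n hmem]
    refine (ha n hnT z hzT).trans ?_
    rw [hB]; gcongr
    exact tri_diam t hnT hzT
  have hsq : ∀ x ∈ triSet t, (lam t 1 x, lam t 2 x) ∈ Icc (0 : ℝ) 1 ×ˢ Icc (0 : ℝ) 1 := by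
    intro x hx
    have h1 := (mem_tri hD).1 hx
    have h2 := lam_sum hD x
    rw [Fin.sum_univ_three] at h2
    exact ⟨⟨h1 1, by simp only; linarith [h1 0, h1 2]⟩, ⟨h1 2, by simp only; linarith [h1 0, h1 1]⟩⟩
  have h1 := hIntg F hFV B hnodeB _ (hsq x hx) _ (hsq y hy)
  rw [hFx x hx, hFx y hy] at h1
  simp only at h1
  have h2 := ha x hx y hy
  have e : (w x - W x) - (w y - W y) = (w x - w y - (inner ℝ a (x - y) : ℝ)) -
      ((W x - w z - (inner ℝ a (x - z) : ℝ)) - (W y - w z - (inner ℝ a (y - z) : ℝ))) := by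
    have : (inner ℝ a (x - y) : ℝ) = inner ℝ a (x - z) - inner ℝ a (y - z) := by
      rw [← inner_sub_right]; congr 1; abel
    rw [this]; ring
  rw [e]
  refine (abs_sub _ _).trans ?_
  have hxy := tri_diam t hx hy
  have h3 : |lam t 1 x - lam t 1 y| + |lam t 2 x - lam t 2 y| ≤ (2 / κ) * (dist x y / dT t) := by
    have a1 := ht.lam_lip hκ 1 x y
    have a2 := ht.lam_lip hκ 2 x y
    have : (2 / κ) * (dist x y / dT t) = dist x y / (κ * dT t) + dist x y / (κ * dT t) := by
      field_simp; ring
    linarith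
  have h4 : dist x y / dT t ≤ (dist x y / dT t) ^ θ := by
    have b0 : 0 ≤ dist x y / dT t := by positivity
    have b1 : dist x y / dT t ≤ 1 := (div_le_one hd).2 hxy
    conv_lhs => rw [← Real.rpow_one (dist x y / dT t)]
    rcases b0.eq_or_lt with h | h
    · rw [← h, Real.zero_rpow one_ne_zero, Real.zero_rpow hθ.ne']
    · exact Real.rpow_le_rpow_of_exponent_ge h b1 hθ1.le
  have h5 : dT t ^ θ * (dist x y / dT t) ^ θ = dist x y ^ θ := by
    rw [← Real.mul_rpow hd.le (by positivity), mul_div_cancel₀ _ hd.ne']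
  have hB0 : 0 ≤ B := by positivity
  calc _ ≤ cB θ c * dist x y ^ θ * M + C1 * B * ((2 / κ) * (dist x y / dT t) ^ θ) := by
        refine add_le_add h2 (h1.trans ?_)
        gcongr
        exact h3.trans (mul_le_mul_of_nonneg_left h4 (by positivity))
    _ = cB θ c * dist x y ^ θ * M + C1 * cB θ c * M * (2 / κ) * (dT t ^ θ * (dist x y / dT t) ^ θ) := by
        rw [hB]; ring
    _ = _ := by rw [h5]; ring

end

section

/-- simplified boundary chart valid near `z` -/
def ChartAt (Ω : Set E2) (Λ : ℝ) (z : E2) : Prop :=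
  ∃ (ν : E2) (φ : E2 → ℝ) (U : Set E2), ‖ν‖ = 1 ∧ IsOpen U ∧ z ∈ U ∧
    (∀ y y', |φ y - φ y'| ≤ Λ * dist y y') ∧ (∀ y s, φ (y + s • ν) = φ y + s) ∧
    ∀ y ∈ U, (y ∈ Ω ↔ 0 < φ y)

lemma chart_of_lip {Ω : Set E2} (h : HasLipschitzBoundary Ω) {x : E2} (hx : x ∈ frontier Ω) :
    ∃ (Λ : ℝ) (U : Set E2), 0 < Λ ∧ IsOpen U ∧ x ∈ U ∧ ∀ z ∈ U, ChartAt Ω Λ z := by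
  obtain ⟨ν, L, γ, U, hν, hγ, hU, hxU, hΩ⟩ := h x hx
  refine ⟨1 + L, U, by positivity, hU, hxU, fun z hz =>
    ⟨ν, fun y => (inner ℝ y ν : ℝ) - γ (y - (inner ℝ y ν : ℝ) • ν), U, hν, hU, hz, ?_, ?_, ?_⟩⟩
  · intro y y'
    have h1 : |(inner ℝ y ν : ℝ) - inner ℝ y' ν| ≤ dist y y' := by
      rw [← inner_sub_left, dist_eq_norm]
      have := abs_real_inner_le_norm (y - y') ν
      rwa [hν, mul_one] at this
    have h2 : dist (y - (inner ℝ y ν : ℝ) • ν) (y' - (inner ℝ y' ν : ℝ) • ν) ≤ dist y y' := by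
      rw [dist_eq_norm, dist_eq_norm]
      have e : y - (inner ℝ y ν : ℝ) • ν - (y' - (inner ℝ y' ν : ℝ) • ν) =
        (y - y') - (inner ℝ (y - y') ν : ℝ) • ν := by rw [inner_sub_left]; module
      rw [e]
      set d := y - y'
      apply le_of_sq_le_sq _ (norm_nonneg _)
      rw [norm_sub_sq_real, norm_smul, inner_smul_right, hν, Real.norm_eq_abs]
      have := sq_abs (inner ℝ d ν : ℝ)
      nlinarith [sq_nonneg (inner ℝ d ν : ℝ)]
    have h3 := hγ.dist_le_mul (y - (inner ℝ y ν : ℝ) • ν) (y' - (inner ℝ y' ν : ℝ) • ν)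
    rw [Real.dist_eq] at h3
    have h4 : (L : ℝ) * dist (y - (inner ℝ y ν : ℝ) • ν) (y' - (inner ℝ y' ν : ℝ) • ν) ≤ L * dist y y' :=
      mul_le_mul_of_nonneg_left h2 L.2
    have h5 := abs_le.1 h1
    have h6 := abs_le.1 (h3.trans h4)
    simp only
    rw [abs_le]
    constructor <;> nlinarith [h5.1, h5.2, h6.1, h6.2]
  · intro y s
    have hνν : (inner ℝ ν ν : ℝ) = 1 := by rw [real_inner_self_eq_norm_sq, hν]; norm_num
    have e : (inner ℝ (y + s • ν) ν : ℝ) = inner ℝ y ν + s := by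
      rw [inner_add_left, real_inner_smul_left, hνν, mul_one]
    simp only [e]
    have : y + s • ν - ((inner ℝ y ν : ℝ) + s) • ν = y - (inner ℝ y ν : ℝ) • ν := by module
    rw [this]; ring
  · intro y hy
    have := Set.ext_iff.1 hΩ y
    simp only [mem_inter_iff, hy, and_true, Set.mem_ofPred_eq, true_and] at this
    rw [this]
    exact sub_pos.symm

lemma uniform_chart {Ω : Set E2} (hb : Bornology.IsBounded Ω) (h : HasLipschitzBoundary Ω) :
    ∃ Λ : ℝ, 0 < Λ ∧ ∀ x ∈ frontier Ω, ChartAt Ω Λ x := by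
  have hc : IsCompact (frontier Ω) :=
    Metric.isCompact_of_isClosed_isBounded isClosed_frontier (hb.closure.subset frontier_subset_closure)
  refine hc.induction_on (p := fun s => ∃ Λ : ℝ, 0 < Λ ∧ ∀ x ∈ s, ChartAt Ω Λ x)
    ⟨1, one_pos, by simp⟩ ?_ ?_ ?_
  · rintro s t hst ⟨Λ, h0, h1⟩
    exact ⟨Λ, h0, fun x hx => h1 x (hst hx)⟩
  · rintro s t ⟨Λ, h0, h1⟩ ⟨Λ', h0', h1'⟩
    refine ⟨max Λ Λ', lt_max_of_lt_left h0, ?_⟩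
    have mono : ∀ a b : ℝ, a ≤ b → ∀ x, ChartAt Ω a x → ChartAt Ω b x := by
      rintro a b hab x ⟨ν, φ, U, h1, h2, h3, h4, h5, h6⟩
      exact ⟨ν, φ, U, h1, h2, h3, fun y y' => (h4 y y').trans
        (mul_le_mul_of_nonneg_right hab dist_nonneg), h5, h6⟩
    rintro x (hx | hx)
    · exact mono _ _ (le_max_left _ _) x (h1 x hx)
    · exact mono _ _ (le_max_right _ _) x (h1' x hx)
  · intro x hx
    obtain ⟨Λ, U, h0, hU, hxU, h1⟩ := chart_of_lip h hx
    exact ⟨U, mem_nhdsWithin_of_mem_nhds (hU.mem_nhds hxU), Λ, h0, h1⟩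

lemma chart_closure {Ω : Set E2} {Λ : ℝ} {ν : E2} {φ : E2 → ℝ} {U : Set E2}
    (hU : IsOpen U) (h4 : ∀ y y', |φ y - φ y'| ≤ Λ * dist y y')
    (h5 : ∀ y s, φ (y + s • ν) = φ y + s) (h6 : ∀ y ∈ U, (y ∈ Ω ↔ 0 < φ y)) {y : E2} (hy : y ∈ U) :
    y ∈ closure Ω ↔ 0 ≤ φ y := by
  have hcont : Continuous φ := by
    have : LipschitzWith (Real.toNNReal Λ) φ := LipschitzWith.of_dist_le_mul fun a b => by
      rw [Real.dist_eq]
      exact (h4 a b).trans (mul_le_mul_of_nonneg_right (Real.le_coe_toNNReal Λ) dist_nonneg)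
    exact this.continuous
  constructor
  · intro hcl
    by_contra hneg
    push Not at hneg
    have hop : IsOpen (U ∩ {x | φ x < 0}) := hU.inter (isOpen_lt hcont continuous_const)
    obtain ⟨p, ⟨hp1, hp2⟩, hp3⟩ := mem_closure_iff.1 hcl _ hop ⟨hy, hneg⟩
    have := (h6 p hp1).1 hp3
    simp only [Set.mem_ofPred_eq] at hp2
    linarith
  · intro h0
    have hc : Tendsto (fun n : ℕ => y + (1 / ((n : ℝ) + 1)) • ν) atTop (𝓝 y) := by
      have := (tendsto_one_div_add_atTop_nhds_zero_nat (𝕜 := ℝ)).smul_const ν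
      simpa using this.const_add y
    refine mem_closure_of_tendsto hc ?_
    filter_upwards [hc.eventually (hU.mem_nhds hy)] with n hn
    rw [h6 _ hn, h5]
    have : 0 < 1 / ((n : ℝ) + 1) := by positivity
    linarith

lemma interior_closure_eq {Ω : Set E2} (ho : IsOpen Ω) (hb : Bornology.IsBounded Ω)
    (h : HasLipschitzBoundary Ω) : interior (closure Ω) = Ω := by
  refine Subset.antisymm ?_ (interior_maximal subset_closure ho)
  intro x hx
  by_contra hxΩ
  have hfr : x ∈ frontier Ω := by
    rw [ho.frontier_eq]; exact ⟨interior_subset hx, hxΩ⟩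
  obtain ⟨Λ, -, hch⟩ := uniform_chart hb h
  obtain ⟨ν, φ, U, h1, h2, h3, h4, h5, h6⟩ := hch x hfr
  have hφ : φ x ≤ 0 := by
    by_contra hc; push Not at hc
    exact hxΩ ((h6 x h3).2 hc)
  have hc : Tendsto (fun n : ℕ => x + (-(1 / ((n : ℝ) + 1))) • ν) atTop (𝓝 x) := by
    have := (tendsto_one_div_add_atTop_nhds_zero_nat (𝕜 := ℝ)).neg.smul_const ν
    simpa using this.const_add x
  obtain ⟨n, hn1, hn2⟩ := ((hc.eventually (h2.mem_nhds h3)).and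
    (hc.eventually (isOpen_interior.mem_nhds hx))).exists
  have := (chart_closure h2 h4 h5 h6 hn1).1 (interior_subset hn2)
  rw [h5] at this
  have h7 : 0 < 1 / ((n : ℝ) + 1) := by positivity
  linarith

/-- three-segment local paths in the closure of `Ω`. -/
theorem path_lemma {Ω : Set E2} (ho : IsOpen Ω) (hb : Bornology.IsBounded Ω)
    (h : HasLipschitzBoundary Ω) : ∃ K : ℝ, 1 ≤ K ∧ ∀ z ∈ closure Ω, ∀ r : ℝ, 0 < r → ∃ δ : ℝ, 0 < δ ∧
      ∀ x ∈ closure Ω ∩ ball z δ, ∀ y ∈ closure Ω ∩ ball z δ, ∃ a b : E2,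
        segment ℝ x a ⊆ closure Ω ∩ ball z r ∧ segment ℝ a b ⊆ closure Ω ∩ ball z r ∧
        segment ℝ b y ⊆ closure Ω ∩ ball z r ∧
        dist x a ≤ K * dist x y ∧ dist a b ≤ K * dist x y ∧ dist b y ≤ K * dist x y ∧
        (x ≠ z → y ≠ z → z ∉ segment ℝ x y →
          z ∉ segment ℝ x a ∧ z ∉ segment ℝ a b ∧ z ∉ segment ℝ b y) := by
  obtain ⟨Λ, hΛ, hch⟩ := uniform_chart hb h
  refine ⟨Λ + 1, by linarith, fun z hz r hr => ?_⟩
  by_cases hzΩ : z ∈ Ω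
  · obtain ⟨δ, hδ, hδΩ⟩ := Metric.isOpen_iff.1 ho z hzΩ
    refine ⟨min δ r, lt_min hδ hr, ?_⟩
    rintro x ⟨hx, hxz⟩ y ⟨hy, hyz⟩
    have hmem : ∀ p ∈ ball z (min δ r), p ∈ closure Ω ∩ ball z r := fun p hp =>
      ⟨subset_closure (hδΩ (ball_subset_ball (min_le_left _ _) hp)),
        ball_subset_ball (min_le_right _ _) hp⟩
    have hd := dist_nonneg (x := x) (y := y)
    refine ⟨x, y, ?_, ?_, ?_, ?_, ?_, ?_, ?_⟩
    · rw [segment_same]; rintro p rfl; exact hmem _ hxz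
    · exact fun p hp => hmem p ((convex_ball z _).segment_subset hxz hyz hp)
    · rw [segment_same]; rintro p rfl; exact hmem _ hyz
    · rw [dist_self]; positivity
    · nlinarith
    · rw [dist_self]; positivity
    · intro h1 h2 h3
      rw [segment_same, segment_same]
      exact ⟨fun h => h1 h.symm, h3, fun h => h2 h.symm⟩
  · have hfr : z ∈ frontier Ω := by rw [ho.frontier_eq]; exact ⟨hz, hzΩ⟩
    obtain ⟨ν, φ, U, h1, h2, h3, h4, h5, h6⟩ := hch z hfr
    obtain ⟨r1, hr1, hr1U⟩ := Metric.isOpen_iff.1 h2 z h3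
    set ρ := min r1 r with hρ
    have hρ0 : 0 < ρ := lt_min hr1 hr
    set δ := ρ / (2 * Λ + 3) with hδ
    have hδ0 : 0 < δ := by positivity
    have hδe : δ * (2 * Λ + 3) = ρ := by rw [hδ]; field_simp
    have hδρ : δ ≤ ρ := by nlinarith
    have hφz : φ z ≤ 0 := by
      by_contra hc; push Not at hc
      exact hzΩ ((h6 z h3).2 hc)
    refine ⟨δ, hδ0, ?_⟩
    rintro x ⟨hx, hxz⟩ y ⟨hy, hyz⟩
    have hbU : ∀ p ∈ ball z ρ, p ∈ U := fun p hp => hr1U (ball_subset_ball (min_le_left _ _) hp)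
    have hcl : ∀ p ∈ ball z ρ, 0 ≤ φ p → p ∈ closure Ω ∩ ball z r := fun p hp h0 =>
      ⟨(chart_closure h2 h4 h5 h6 (hbU p hp)).2 h0, ball_subset_ball (min_le_right _ _) hp⟩
    have hφ : ∀ p ∈ closure Ω ∩ ball z δ, 0 ≤ φ p := fun p hp =>
      (chart_closure h2 h4 h5 h6 (hbU p (ball_subset_ball hδρ hp.2))).1 hp.1
    set D := dist x y with hD
    have hD0 : 0 ≤ D := dist_nonneg
    have hDδ : D ≤ 2 * δ := by
      have := dist_triangle_right x y z
      rw [mem_ball] at hxz hyz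
      linarith
    set k := (Λ + 1) * D with hk
    have hk0 : 0 ≤ k := by positivity
    have hup : ∀ p ∈ ball z δ, ∀ s : ℝ, 0 ≤ s → s ≤ k → p + s • ν ∈ ball z ρ := by
      intro p hp s hs0 hsk
      rw [mem_ball] at hp ⊢
      have : dist (p + s • ν) z ≤ dist p z + s := by
        have := dist_triangle (p + s • ν) p z
        have e : dist (p + s • ν) p = s := by
          rw [dist_eq_norm, add_sub_cancel_left, norm_smul, h1, mul_one, Real.norm_eq_abs, abs_of_nonneg hs0]
        linarith
      nlinarith
    have seg_up : ∀ p ∈ closure Ω ∩ ball z δ, ∀ q ∈ segment ℝ p (p + k • ν),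
        q ∈ closure Ω ∩ ball z r ∧ (p ≠ z → q ≠ z) := by
      intro p hp q hq
      rw [segment_eq_image'] at hq
      obtain ⟨τ, ⟨hτ0, hτ1⟩, rfl⟩ := hq
      have e : p + τ • (p + k • ν - p) = p + (τ * k) • ν := by module
      simp only [e]
      have hτk : 0 ≤ τ * k := by positivity
      have hτk1 : τ * k ≤ k := by nlinarith
      have hφp := hφ p hp
      refine ⟨hcl _ (hup p hp.2 _ hτk hτk1) (by rw [h5]; linarith), fun hpz hqz => ?_⟩
      have h7 : φ (p + (τ * k) • ν) = φ p + τ * k := h5 _ _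
      rw [hqz] at h7
      have : τ * k = 0 := by linarith
      rw [this, zero_smul, add_zero] at hqz
      exact hpz hqz
    have seg_mid : ∀ q ∈ segment ℝ (x + k • ν) (y + k • ν),
        q ∈ closure Ω ∩ ball z r ∧ (x ≠ y → q ≠ z) := by
      intro q hq
      have hqb : q ∈ ball z ρ := (convex_ball z ρ).segment_subset
        (hup x hxz k hk0 le_rfl) (hup y hyz k hk0 le_rfl) hq
      have hd : dist (x + k • ν) q ≤ D := by
        rw [segment_eq_image'] at hq
        obtain ⟨τ, ⟨hτ0, hτ1⟩, rfl⟩ := hq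
        have e : x + k • ν - (x + k • ν + τ • (y + k • ν - (x + k • ν))) = τ • (x - y) := by module
        rw [dist_eq_norm, e, norm_smul, Real.norm_eq_abs, abs_of_nonneg hτ0, ← dist_eq_norm]
        nlinarith
      have h7 := abs_le.1 (h4 (x + k • ν) q)
      rw [h5] at h7
      have h8 := hφ x ⟨hx, hxz⟩
      have h9 : Λ * dist (x + k • ν) q ≤ Λ * D := mul_le_mul_of_nonneg_left hd hΛ.le
      have h10 : D ≤ φ q := by rw [hk] at h7; nlinarith [h7.1, h7.2]
      refine ⟨hcl q hqb (by linarith), fun hxy hqz => ?_⟩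
      have : 0 < D := dist_pos.2 hxy
      rw [hqz] at h10
      linarith
    have hdist : ∀ p : E2, dist p (p + k • ν) = k := by
      intro p
      rw [dist_eq_norm, sub_add_cancel_left, norm_neg, norm_smul, h1, mul_one, Real.norm_eq_abs,
        abs_of_nonneg hk0]
    refine ⟨x + k • ν, y + k • ν, fun q hq => (seg_up x ⟨hx, hxz⟩ q hq).1,
      fun q hq => (seg_mid q hq).1, ?_, ?_, ?_, ?_, ?_⟩
    · rw [segment_symm]; exact fun q hq => (seg_up y ⟨hy, hyz⟩ q hq).1
    · rw [hdist]
    · rw [dist_add_right]; nlinarith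
    · rw [dist_comm, hdist]
    · intro hxz' hyz' hseg
      refine ⟨fun hq => (seg_up x ⟨hx, hxz⟩ z hq).2 hxz' rfl, fun hq => (seg_mid z hq).2 ?_ rfl, ?_⟩
      · rintro rfl
        rw [hD, dist_self] at hk
        simp only [mul_zero] at hk
        rw [hk, zero_smul, add_zero, segment_same] at hq
        exact hxz' hq.symm
      · rw [segment_symm]; exact fun hq => (seg_up y ⟨hy, hyz⟩ z hq).2 hyz' rfl

end

section

lemma seg_end {a b c d : E2} (h : segment ℝ a b = segment ℝ c d) : c = a ∨ c = b := by
  have hc : c ∈ segment ℝ a b := by rw [h]; exact left_mem_segment ℝ c d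
  have ha : a ∈ segment ℝ c d := by rw [← h]; exact left_mem_segment ℝ a b
  have hb : b ∈ segment ℝ c d := by rw [← h]; exact right_mem_segment ℝ a b
  by_cases hcd : d - c = 0
  · have : d = c := sub_eq_zero.1 hcd
    rw [this, segment_same] at ha
    exact Or.inl ha.symm
  rw [segment_eq_image'] at hc ha hb
  obtain ⟨α, ⟨hα0, hα1⟩, hα⟩ := hc
  obtain ⟨β, ⟨hβ0, hβ1⟩, hβ⟩ := ha
  obtain ⟨γ, ⟨hγ0, hγ1⟩, hγ⟩ := hb
  simp only at hα hβ hγ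
  have e : ((1 - α) * β + α * γ) • (d - c) = 0 := by
    have : a + α • (b - a) - c = 0 := by rw [hα, sub_self]
    rw [← hβ, ← hγ] at this
    rw [← this]; module
  have e2 := (smul_eq_zero.1 e).resolve_right hcd
  have e3 : (1 - α) * β = 0 := by
    nlinarith [mul_nonneg (sub_nonneg.2 hα1) hβ0, mul_nonneg hα0 hγ0]
  rcases mul_eq_zero.1 e3 with h1 | h1
  · right
    have : α = 1 := by linarith
    rw [← hα, this]; module
  · left
    rw [← hβ, h1]; module

lemma seg_end' {a b c d : E2} (h : segment ℝ a b = segment ℝ c d) (hac : a = c) (hcd : c ≠ d) :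
    b = d := by
  subst hac
  rw [segment_symm ℝ a d] at h
  rcases seg_end h with h1 | h1
  · exact absurd h1.symm hcd
  · exact h1.symm

lemma fin3_cases (k i : Fin 3) : i = k ∨ i = k + 1 ∨ i = k + 2 := by
  revert k i; decide

lemma fin3_ne (k : Fin 3) : k ≠ k + 1 ∧ k ≠ k + 2 ∧ k + 1 ≠ k + 2 := by
  revert k; decide

/-- An edge containing the vertex `t i` is a segment from `t i` to another vertex. -/
lemma edge_vertex {t : Fin 3 → E2} (hD : DT t ≠ 0) {i k : Fin 3} (h : t i ∈ edgeSeg t k) :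
    ∃ m, m ≠ i ∧ edgeSeg t k = segment ℝ (t i) (t m) := by
  have hk := fin3_ne k
  have hl : ∀ p ∈ edgeSeg t k, lam t k p = 0 := by
    intro p hp
    obtain ⟨a, b, ha, hb, hab, rfl⟩ := hp
    rw [lam_affine t k a b hab, lam_vertex hD, lam_vertex hD, if_neg hk.1, if_neg hk.2.1]
    simp
  have h1 := hl _ h
  rw [lam_vertex hD] at h1
  have hki : k ≠ i := by
    intro h; rw [if_pos h] at h1; exact one_ne_zero h1
  rcases fin3_cases k i with h | h | h
  · exact absurd h.symm hki
  · exact ⟨k + 2, by rw [h]; exact hk.2.2.symm, by rw [h]; rfl⟩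
  · exact ⟨k + 1, by rw [h]; exact hk.2.2, by rw [h, segment_symm]; rfl⟩

lemma edge_sub (t : Fin 3 → E2) (k : Fin 3) : edgeSeg t k ⊆ triSet t :=
  (convex_tri t).segment_subset (vertex_mem _ _) (vertex_mem _ _)

lemma tri_inj {t : Fin 3 → E2} (hD : DT t ≠ 0) {i j : Fin 3} (h : t i = t j) : i = j := by
  have h1 := lam_vertex hD i j
  rw [← h, lam_vertex hD, if_pos rfl] at h1
  by_contra hij
  rw [if_neg hij] at h1
  exact one_ne_zero h1

variable {Ω : Set E2}

lemma tri_D (𝒯 : Triangulation Ω) {t : Fin 3 → E2} (ht : t ∈ 𝒯.tris) : DT t ≠ 0 :=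
  DT_ne (𝒯.nondeg t ht)

/-- a mesh vertex lying in a triangle is a vertex of that triangle -/
lemma vertex_of_mem (𝒯 : Triangulation Ω) {t t' : Fin 3 → E2} (ht : t ∈ 𝒯.tris) (ht' : t' ∈ 𝒯.tris)
    {i : Fin 3} (h : t' i ∈ triSet t) : ∃ j, t j = t' i := by
  by_cases he : t = t'
  · exact ⟨i, by rw [he]⟩
  have hm : t' i ∈ triSet t ∩ triSet t' := ⟨h, vertex_mem _ _⟩
  rcases 𝒯.conform t ht t' ht' he with h1 | ⟨k, l, h1, h2⟩ | ⟨k, l, h1, h2⟩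
  · rw [h1] at hm; exact absurd hm (notMem_empty _)
  · rw [h2] at hm; exact ⟨k, hm.symm⟩
  · rw [h2, h1] at hm
    obtain ⟨m, hm1, hm2⟩ := edge_vertex (tri_D 𝒯 ht') hm
    rw [← h1] at hm2
    rcases seg_end hm2 with h3 | h3
    · exact ⟨k + 1, h3.symm⟩
    · exact ⟨k + 2, h3.symm⟩

/-- two triangles at `z` sharing a point other than `z` share an edge -/
lemma share (𝒯 : Triangulation Ω) {t t' : Fin 3 → E2} (ht : t ∈ 𝒯.tris) (ht' : t' ∈ 𝒯.tris)
    {i i' : Fin 3} (hz : t i = t' i') {p : E2} (hp : p ∈ triSet t) (hp' : p ∈ triSet t')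
    (hpz : p ≠ t i) (hne : t ≠ t') :
    ∃ k k', k ≠ i ∧ k' ≠ i' ∧ t k = t' k' ∧ p ∈ segment ℝ (t i) (t k) := by
  have hm : p ∈ triSet t ∩ triSet t' := ⟨hp, hp'⟩
  have hzm : t i ∈ triSet t ∩ triSet t' := ⟨vertex_mem _ _, by rw [hz]; exact vertex_mem _ _⟩
  rcases 𝒯.conform t ht t' ht' hne with h1 | ⟨k, l, h1, h2⟩ | ⟨k, l, h1, h2⟩
  · rw [h1] at hm; exact absurd hm (notMem_empty _)
  · rw [h2] at hm hzm
    exact absurd ((mem_singleton_iff.1 hm).trans (mem_singleton_iff.1 hzm).symm) hpz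
  · rw [h2] at hm hzm
    have hzm' := hzm
    rw [h1, hz] at hzm'
    obtain ⟨m, hm1, hm2⟩ := edge_vertex (tri_D 𝒯 ht) hzm
    obtain ⟨m', hm1', hm2'⟩ := edge_vertex (tri_D 𝒯 ht') hzm'
    refine ⟨m, m', hm1, hm1', ?_, by rw [← hm2]; exact hm⟩
    refine seg_end' (hm2.symm.trans (h1.trans hm2')) hz ?_
    intro h; exact hm1' (tri_inj (tri_D 𝒯 ht') h).symm

lemma lam_agree (𝒯 : Triangulation Ω) {t t' : Fin 3 → E2} (ht : t ∈ 𝒯.tris) (ht' : t' ∈ 𝒯.tris)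
    {i i' : Fin 3} (hz : t i = t' i') {p : E2} (hp : p ∈ triSet t) (hp' : p ∈ triSet t') :
    lam t i p = lam t' i' p := by
  have hD := tri_D 𝒯 ht
  have hD' := tri_D 𝒯 ht'
  by_cases hne : t = t'
  · subst hne; rw [tri_inj hD hz]
  by_cases hpz : p = t i
  · have e1 : lam t i p = 1 := by rw [hpz, lam_vertex hD, if_pos rfl]
    have e2 : lam t' i' p = 1 := by rw [hpz, hz, lam_vertex hD', if_pos rfl]
    rw [e1, e2]
  obtain ⟨k, k', hk, hk', hkk, hseg⟩ := share 𝒯 ht ht' hz hp hp' hpz hne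
  obtain ⟨a, b, ha, hb, hab, rfl⟩ := hseg
  rw [lam_affine t i a b hab, lam_affine t' i' a b hab, lam_vertex hD, lam_vertex hD, if_pos rfl,
    if_neg hk.symm, hz, hkk, lam_vertex hD', lam_vertex hD', if_pos rfl, if_neg hk'.symm]

lemma size_share (𝒯 : Triangulation Ω) {κ : ℝ} (hκ : 0 < κ) (hreg : ∀ t ∈ 𝒯.tris, Reg κ t)
    {t t' : Fin 3 → E2} (ht : t ∈ 𝒯.tris) (ht' : t' ∈ 𝒯.tris)
    {i i' : Fin 3} (hz : t i = t' i') {p : E2} (hp : p ∈ triSet t) (hp' : p ∈ triSet t')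
    (hpz : p ≠ t i) : κ * dT t ≤ dT t' := by
  by_cases hne : t = t'
  · subst hne
    have := (hreg t ht).kap_le
    have := (hreg t ht).pos
    nlinarith
  obtain ⟨k, k', hk, hk', hkk, hseg⟩ := share 𝒯 ht ht' hz hp hp' hpz hne
  refine ((hreg t ht).edge hk.symm).trans ?_
  rw [hz, hkk]
  exact edge_le_dT _ _ _

open Classical in
/-- triangles at `z` -/
def St (𝒯 : Triangulation Ω) (z : E2) : Finset (Fin 3 → E2) := 𝒯.tris.filter fun t => ∃ i, t i = z

lemma mem_St {𝒯 : Triangulation Ω} {z : E2} {t : Fin 3 → E2} :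
    t ∈ St 𝒯 z ↔ t ∈ 𝒯.tris ∧ ∃ i, t i = z := by simp [St]

lemma mem_starZ {𝒯 : Triangulation Ω} {z x : E2} : x ∈ starZ 𝒯 z ↔ ∃ t ∈ St 𝒯 z, x ∈ triSet t := by
  simp only [starZ, mem_iUnion, mem_St, exists_prop]
  constructor
  · rintro ⟨t, h1, h2, h3⟩
    exact ⟨t, ⟨h1, h2⟩, h3⟩
  · rintro ⟨t, ⟨h1, h2⟩, h3⟩
    exact ⟨t, h1, h2, h3⟩

lemma mem_verts {𝒯 : Triangulation Ω} {z : E2} : z ∈ 𝒯.verts ↔ ∃ t ∈ 𝒯.tris, ∃ i, t i = z := by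
  simp only [Triangulation.verts, Finset.mem_biUnion, Finset.mem_insert, Finset.mem_singleton]
  refine exists_congr fun t => and_congr_right fun _ => ?_
  constructor
  · rintro (h | h | h)
    · exact ⟨0, h.symm⟩
    · exact ⟨1, h.symm⟩
    · exact ⟨2, h.symm⟩
  · rintro ⟨i, hi⟩
    fin_cases i
    · exact Or.inl hi.symm
    · exact Or.inr (Or.inl hi.symm)
    · exact Or.inr (Or.inr hi.symm)

lemma tri_sub_closure (𝒯 : Triangulation Ω) {t : Fin 3 → E2} (ht : t ∈ 𝒯.tris) :
    triSet t ⊆ closure Ω := by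
  rw [← 𝒯.cover]
  exact subset_biUnion_of_mem (u := fun t => triSet t) ht

/-- near `z`, the closure is covered by the star -/
lemma near_star (𝒯 : Triangulation Ω) {z : E2} (hz : z ∈ 𝒯.verts) :
    ∃ r : ℝ, 0 < r ∧ ∀ x ∈ closure Ω ∩ ball z r, ∃ t ∈ St 𝒯 z, x ∈ triSet t := by
  obtain ⟨t', ht', i', hi'⟩ := mem_verts.1 hz
  set A : Set E2 := ⋃ t ∈ 𝒯.tris.filter (fun t => t ∉ St 𝒯 z), triSet t with hA
  have hAc : IsClosed A := isClosed_biUnion_finset fun t _ => (compact_tri t).isClosed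
  have hzA : z ∉ A := by
    intro h
    simp only [hA, mem_iUnion, Finset.mem_filter] at h
    obtain ⟨t, ⟨ht, hts⟩, hzt⟩ := h
    rw [← hi'] at hzt
    obtain ⟨j, hj⟩ := vertex_of_mem 𝒯 ht ht' hzt
    exact hts (mem_St.2 ⟨ht, j, hj.trans hi'⟩)
  obtain ⟨r, hr, hrA⟩ := Metric.isOpen_iff.1 hAc.isOpen_compl z hzA
  refine ⟨r, hr, fun x hx => ?_⟩
  have h1 := hx.1
  rw [← 𝒯.cover] at h1
  simp only [mem_iUnion] at h1
  obtain ⟨t, ht, hxt⟩ := h1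
  refine ⟨t, ?_, hxt⟩
  by_contra hc
  apply hrA hx.2
  simp only [hA, mem_iUnion, Finset.mem_filter]
  exact ⟨t, ⟨ht, hc⟩, hxt⟩

lemma strict_disj (𝒯 : Triangulation Ω) {t t' : Fin 3 → E2} (ht : t ∈ 𝒯.tris) (ht' : t' ∈ 𝒯.tris)
    (hne : t ≠ t') {p : E2} (hp : ∀ i, 0 < lam t i p) (hp' : p ∈ triSet t') : False := by
  have hD := tri_D 𝒯 ht
  have hm : p ∈ triSet t ∩ triSet t' := ⟨(mem_tri hD).2 fun i => (hp i).le, hp'⟩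
  rcases 𝒯.conform t ht t' ht' hne with h1 | ⟨k, l, h1, h2⟩ | ⟨k, l, h1, h2⟩
  · rw [h1] at hm; exact absurd hm (notMem_empty _)
  · rw [h2] at hm
    have := hp (k + 1)
    rw [mem_singleton_iff.1 hm, lam_vertex hD, if_neg (fin3_ne k).1.symm] at this
    exact lt_irrefl _ this
  · rw [h2] at hm
    obtain ⟨a, b, ha, hb, hab, rfl⟩ := hm
    have := hp k
    rw [lam_affine t k a b hab, lam_vertex hD, lam_vertex hD, if_neg (fin3_ne k).1,
      if_neg (fin3_ne k).2.1] at this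
    simp at this

lemma vol_hom (x : E2) {s : ℝ} (hs : 0 < s) (A : Set E2) :
    volume.real (hom x s '' A) = s ^ 2 * volume.real A := by
  have ehom : hom x s = AffineMap.homothety x s := by
    funext y; simp [hom, AffineMap.homothety_apply, add_comm]
  rw [ehom, Measure.real, Measure.addHaar_image_homothety, ENNReal.toReal_mul,
    ENNReal.toReal_ofReal (abs_nonneg _)]
  simp only [finrank_euclideanSpace, Fintype.card_fin, abs_of_pos (pow_pos hs 2)]
  rfl

/-- bounded number of triangles in a star -/
lemma card_St {κ : ℝ} (hκ : 0 < κ) : ∃ N : ℕ, ∀ (Ω : Set E2) (𝒯 : Triangulation Ω),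
    (∀ t ∈ 𝒯.tris, Reg κ t) → ∀ z, (St 𝒯 z).card ≤ N := by
  set vB := volume.real (closedBall (0 : E2) 1) with hvB
  have hv := v0_pos
  refine ⟨⌊vB / (v0 * κ / 4)⌋₊, fun Ω 𝒯 hreg z => ?_⟩
  apply Nat.le_floor
  rw [le_div_iff₀ (by positivity)]
  by_cases hS : (St 𝒯 z).Nonempty
  swap
  · rw [Finset.not_nonempty_iff_eq_empty] at hS
    rw [hS]; simp only [Finset.card_empty, Nat.cast_zero, zero_mul]
    exact measureReal_nonneg
  obtain ⟨t0, ht0, hmin⟩ := (St 𝒯 z).exists_min_image dT hS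
  set ρ := dT t0 with hρ
  have hρ0 : 0 < ρ := (hreg t0 (mem_St.1 ht0).1).pos
  set g : (Fin 3 → E2) → E2 := fun t => ∑ j, (1 / 3 : ℝ) • t j with hg
  set Q : (Fin 3 → E2) → Set E2 := fun t => hom z (ρ / dT t) '' (hom (g t) (1 / 2) '' triSet t) with hQ
  have hQc : ∀ t, IsCompact (Q t) := fun t =>
    ((compact_tri t).image (continuous_hom _ _)).image (continuous_hom _ _)
  have hQlam : ∀ t ∈ St 𝒯 z, ∀ p ∈ Q t, ∀ i, 0 < lam t i p := by
    rintro t ht _ ⟨_, ⟨p, hp, rfl⟩, rfl⟩ i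
    obtain ⟨htt, j, hj⟩ := mem_St.1 ht
    have hD := tri_D 𝒯 htt
    have hd := (hreg t htt).pos
    have h1 := (mem_tri hD).1 hp i
    have h2 : lam t i (g t) = 1 / 3 := lam_of_comb hD (l := fun _ => 1 / 3) (by norm_num) i
    have h3 : 0 ≤ lam t i z := by rw [← hj]; exact (mem_tri hD).1 (vertex_mem t j) i
    have h4 : ρ / dT t ≤ 1 := (div_le_one hd).2 (hmin t ht)
    have h5 : 0 < ρ / dT t := by positivity
    simp only [hom]
    rw [lam_hom, lam_hom, h2]
    have h6 : 0 ≤ (1 - ρ / dT t) * lam t i z := mul_nonneg (by linarith) h3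
    have h7 : 0 < ρ / dT t * ((1 - 1 / 2) * (1 / 3) + 1 / 2 * lam t i p) := by positivity
    linarith
  have hdisj : (St 𝒯 z : Set (Fin 3 → E2)).PairwiseDisjoint Q := by
    intro t ht t' ht' hne
    refine Set.disjoint_left.2 fun p hp hp' => ?_
    have a := (mem_St.1 ht).1
    have b := (mem_St.1 ht').1
    exact strict_disj 𝒯 a b hne (hQlam t ht p hp)
      ((mem_tri (tri_D 𝒯 b)).2 fun i => (hQlam t' ht' p hp' i).le)
  have hsub : (⋃ t ∈ St 𝒯 z, Q t) ⊆ closedBall z ρ := by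
    refine iUnion₂_subset fun t ht => ?_
    rintro _ ⟨_, ⟨p, hp, rfl⟩, rfl⟩
    obtain ⟨htt, j, hj⟩ := mem_St.1 ht
    have hd := (hreg t htt).pos
    have hgT : g t ∈ triSet t := (convex_tri t).sum_mem (fun i _ => by norm_num) (by norm_num)
      fun i _ => vertex_mem t i
    have hq : hom (g t) (1 / 2) p ∈ triSet t :=
      hom_mem (convex_tri t) hgT hp (by norm_num) (by norm_num)
    have hzT : z ∈ triSet t := by rw [← hj]; exact vertex_mem t j
    have h1 := tri_diam t hq hzT
    rw [mem_closedBall]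
    set q := hom (g t) (1 / 2) p
    have : dist (hom z (ρ / dT t) q) z = ρ / dT t * dist q z := by
      simp only [hom]
      rw [dist_eq_norm, add_sub_cancel_left, norm_smul, ← dist_eq_norm, Real.norm_eq_abs,
        abs_of_pos (by positivity)]
    rw [this]
    calc ρ / dT t * dist q z ≤ ρ / dT t * dT t := by gcongr
      _ = ρ := by field_simp
  have hvol : ∀ t ∈ St 𝒯 z, ρ ^ 2 * (v0 * κ / 4) ≤ volume.real (Q t) := by
    intro t ht
    have hr := hreg t (mem_St.1 ht).1
    have hd := hr.pos
    rw [hQ]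
    simp only
    rw [vol_hom _ (by positivity), vol_hom _ (by norm_num)]
    calc ρ ^ 2 * (v0 * κ / 4) = (ρ / dT t) ^ 2 * ((1 / 2) ^ 2 * (v0 * κ * dT t ^ 2)) := by
          field_simp; ring
      _ ≤ _ := by gcongr; exact hr.vol
  have hsum : ∑ t ∈ St 𝒯 z, volume.real (Q t) ≤ volume.real (closedBall z ρ) := by
    rw [← measureReal_biUnion_finset hdisj (fun t _ => (hQc t).isClosed.measurableSet)
      (fun t _ => (hQc t).measure_lt_top.ne)]
    exact measureReal_mono hsub (isCompact_closedBall z ρ).measure_lt_top.ne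
  have hball : volume.real (closedBall z ρ) = ρ ^ 2 * vB := by
    rw [Measure.real, Measure.addHaar_closedBall' _ _ hρ0.le, ENNReal.toReal_mul,
      ENNReal.toReal_ofReal (by positivity), hvB, finrank_euclideanSpace, Fintype.card_fin]
    rfl
  have h1 := (Finset.card_nsmul_le_sum _ _ _ hvol).trans hsum
  rw [hball, nsmul_eq_mul] at h1
  have : ρ ^ 2 * ((St 𝒯 z).card * (v0 * κ / 4)) ≤ ρ ^ 2 * vB := by linarith
  exact le_of_mul_le_mul_left this (by positivity)

end

section

lemma cover_chain {ι : Type*} (A : ι → Set ℝ) (hA : ∀ j, IsClosed (A j)) (f : ℝ → ℝ) {c : ℝ}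
    (hc : 0 ≤ c) (b : ℝ) : ∀ (n : ℕ) (S : Finset ι), S.card = n → ∀ a ≤ b,
      (∀ x ∈ Icc a b, ∃ j ∈ S, x ∈ A j) →
      (∀ j ∈ S, ∀ x ∈ A j ∩ Icc a b, ∀ y ∈ A j ∩ Icc a b, |f x - f y| ≤ c) →
      |f a - f b| ≤ n * c := by
  classical
  intro n
  induction n with
  | zero =>
    intro S hS a hab hcov _
    obtain ⟨j, hj, _⟩ := hcov a (left_mem_Icc.2 hab)
    rw [Finset.card_eq_zero.1 hS] at hj
    simp at hj
  | succ n ih =>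
    intro S hS a hab hcov hosc
    obtain ⟨j, hj, haj⟩ := hcov a (left_mem_Icc.2 hab)
    have hcpt : IsCompact (A j ∩ Icc a b) := isCompact_Icc.inter_left (hA j)
    have hne : (A j ∩ Icc a b).Nonempty := ⟨a, haj, left_mem_Icc.2 hab⟩
    set e := sSup (A j ∩ Icc a b) with he
    have hem : e ∈ A j ∩ Icc a b := hcpt.sSup_mem hne
    have h1 : |f a - f e| ≤ c := hosc j hj a ⟨haj, left_mem_Icc.2 hab⟩ e hem
    rcases eq_or_lt_of_le hem.2.2 with heb | heb
    · rw [heb] at h1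
      push_cast
      have : 0 ≤ (n : ℝ) * c := by positivity
      linarith
    · have hcl : IsClosed (⋃ k ∈ S.erase j, A k) :=
        isClosed_biUnion_finset fun k _ => hA k
      have hsub : Ioc e b ⊆ ⋃ k ∈ S.erase j, A k := by
        intro x hx
        have hxI : x ∈ Icc a b := ⟨hem.2.1.trans hx.1.le, hx.2⟩
        obtain ⟨k, hk, hxk⟩ := hcov x hxI
        have hkj : k ≠ j := by
          rintro rfl
          have : x ≤ e := le_csSup hcpt.bddAbove ⟨hxk, hxI⟩
          exact absurd hx.1 (not_lt.2 this)
        exact mem_biUnion (Finset.mem_coe.2 (Finset.mem_erase.2 ⟨hkj, hk⟩)) hxk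
      have hsub2 : Icc e b ⊆ ⋃ k ∈ S.erase j, A k := by
        rw [← closure_Ioc heb.ne]
        exact closure_minimal hsub hcl
      have h2 := ih (S.erase j) (by rw [Finset.card_erase_of_mem hj, hS]; rfl) e heb.le
        (fun x hx => by
          obtain ⟨k, hk, hxk⟩ := mem_iUnion₂.1 (hsub2 hx)
          exact ⟨k, hk, hxk⟩)
        (fun k hk x hx y hy => hosc k (Finset.mem_of_mem_erase hk)
          x ⟨hx.1, hem.2.1.trans hx.2.1, hx.2.2⟩ y ⟨hy.1, hem.2.1.trans hy.2.1, hy.2.2⟩)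
      push_cast
      have := abs_sub_le (f a) (f e) (f b)
      linarith

lemma seg_chain {S : Finset (Fin 3 → E2)} {p q : E2}
    (hcov : ∀ x ∈ segment ℝ p q, ∃ t ∈ S, x ∈ triSet t) (F : E2 → ℝ) {c : ℝ} (hc : 0 ≤ c)
    (h : ∀ t ∈ S, ∀ x ∈ triSet t, x ∈ segment ℝ p q → ∀ y ∈ triSet t, y ∈ segment ℝ p q →
      |F x - F y| ≤ c) : |F p - F q| ≤ S.card * c := by
  have hL : Continuous fun s : ℝ => AffineMap.lineMap p q s :=
    AffineMap.lineMap_continuous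
  have hm : ∀ s ∈ Icc (0 : ℝ) 1, AffineMap.lineMap p q s ∈ segment ℝ p q := by
    intro s hs
    rw [segment_eq_image_lineMap]
    exact ⟨s, hs, rfl⟩
  have := cover_chain (fun t : Fin 3 → E2 => (fun s : ℝ => AffineMap.lineMap p q s) ⁻¹' triSet t)
    (fun t => (compact_tri t).isClosed.preimage hL) (fun s => F (AffineMap.lineMap p q s)) hc 1
    S.card S rfl 0 zero_le_one (fun s hs => hcov _ (hm s hs))
    (fun t ht x hx y hy => h t ht _ hx.1 (hm x hx.2) _ hy.1 (hm y hy.2))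
  simpa using this

section star
variable {Ω : Set E2}

/-- common data: three-segment path near the vertex -/
lemma path_chain (𝒯 : Triangulation Ω) {K : ℝ} {z : E2} {N : ℕ} (hN : (St 𝒯 z).card ≤ N)
    (hz : z ∈ 𝒯.verts)
    (hpath : ∀ z ∈ closure Ω, ∀ r > 0, ∃ δ > 0, ∀ x ∈ closure Ω ∩ ball z δ,
      ∀ y ∈ closure Ω ∩ ball z δ, ∃ a b, segment ℝ x a ⊆ closure Ω ∩ ball z r ∧
        segment ℝ a b ⊆ closure Ω ∩ ball z r ∧ segment ℝ b y ⊆ closure Ω ∩ ball z r ∧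
        dist x a ≤ K * dist x y ∧ dist a b ≤ K * dist x y ∧ dist b y ≤ K * dist x y ∧
        (x ≠ z → y ≠ z → z ∉ segment ℝ x y →
          z ∉ segment ℝ x a ∧ z ∉ segment ℝ a b ∧ z ∉ segment ℝ b y)) :
    ∃ δ > 0, ∀ x ∈ closure Ω ∩ ball z δ, ∀ y ∈ closure Ω ∩ ball z δ, ∀ (F : E2 → ℝ) (c : ℝ),
      0 ≤ c →
      ((∀ t ∈ St 𝒯 z, ∀ p ∈ triSet t, ∀ q ∈ triSet t, dist p q ≤ K * dist x y →
        |F p - F q| ≤ c) ∨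
       (x ≠ z ∧ y ≠ z ∧ z ∉ segment ℝ x y ∧ ∀ t ∈ St 𝒯 z, ∀ p ∈ triSet t, ∀ q ∈ triSet t,
        p ≠ z → q ≠ z → |F p - F q| ≤ c)) → |F x - F y| ≤ 3 * N * c := by
  obtain ⟨r, hr, hcov⟩ := near_star 𝒯 hz
  have hzc : z ∈ closure Ω := by
    obtain ⟨t, ht, i, rfl⟩ := mem_verts.1 hz
    exact tri_sub_closure 𝒯 ht (vertex_mem t i)
  obtain ⟨δ, hδ, hp⟩ := hpath z hzc r hr
  refine ⟨δ, hδ, fun x hx y hy F c hc hF => ?_⟩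
  obtain ⟨a, b, h1, h2, h3, d1, d2, d3, hav⟩ := hp x hx y hy
  have hNc : ((St 𝒯 z).card : ℝ) * c ≤ N * c := by
    gcongr
  have key : ∀ p q, segment ℝ p q ⊆ closure Ω ∩ ball z r → dist p q ≤ K * dist x y →
      (x ≠ z → y ≠ z → z ∉ segment ℝ x y → z ∉ segment ℝ p q) → |F p - F q| ≤ N * c := by
    intro p q hs hd hzs
    refine (seg_chain (S := St 𝒯 z) (fun u hu => hcov u (hs hu)) F hc ?_).trans hNc
    intro t ht u hu hus v hv hvs
    rcases hF with hF | ⟨g1, g2, g3, hF⟩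
    · refine hF t ht u hu v hv (le_trans ?_ hd)
      obtain ⟨s, hs, rfl⟩ := (segment_eq_image_lineMap ℝ p q ▸ hus :)
      obtain ⟨s', hs', rfl⟩ := (segment_eq_image_lineMap ℝ p q ▸ hvs :)
      rw [dist_lineMap_lineMap]
      have : dist s s' ≤ 1 := by
        rw [Real.dist_eq, abs_le]; constructor <;> linarith [hs.1, hs.2, hs'.1, hs'.2]
      exact mul_le_of_le_one_left dist_nonneg this
    · have := hzs g1 g2 g3
      exact hF t ht u hu v hv (fun h => this (h ▸ hus)) (fun h => this (h ▸ hvs))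
  have k1 := key x a h1 d1 fun g1 g2 g3 => (hav g1 g2 g3).1
  have k2 := key a b h2 d2 fun g1 g2 g3 => (hav g1 g2 g3).2.1
  have k3 := key b y h3 d3 fun g1 g2 g3 => (hav g1 g2 g3).2.2
  have e1 := abs_sub_le (F x) (F a) (F y)
  have e2 := abs_sub_le (F a) (F b) (F y)
  linarith

end star
end

section

section star
variable {Ω : Set E2}

/-- chaining property at the vertex `z` -/
def ChainProp (𝒯 : Triangulation Ω) (z : E2) (K : ℝ) (N : ℕ) : Prop :=
    ∃ δ > 0, ∀ x ∈ closure Ω ∩ ball z δ, ∀ y ∈ closure Ω ∩ ball z δ, ∀ (F : E2 → ℝ) (c : ℝ),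
      0 ≤ c →
      ((∀ t ∈ St 𝒯 z, ∀ p ∈ triSet t, ∀ q ∈ triSet t, dist p q ≤ K * dist x y →
        |F p - F q| ≤ c) ∨
       (x ≠ z ∧ y ≠ z ∧ z ∉ segment ℝ x y ∧ ∀ t ∈ St 𝒯 z, ∀ p ∈ triSet t, ∀ q ∈ triSet t,
        p ≠ z → q ≠ z → |F p - F q| ≤ c)) → |F x - F y| ≤ 3 * N * c

lemma scale_exists {δ : ℝ} (hδ : 0 < δ) (z x y : E2) : ∃ s : ℝ, 0 < s ∧ s ≤ 1 ∧
    z + s • (x - z) ∈ ball z δ ∧ z + s • (y - z) ∈ ball z δ := by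
  have hx := norm_nonneg (x - z)
  have hy := norm_nonneg (y - z)
  refine ⟨δ / (δ + ‖x - z‖ + ‖y - z‖), by positivity, ?_, ?_, ?_⟩
  · rw [div_le_one (by positivity)]; linarith
  · rw [mem_ball, dist_eq_norm, add_sub_cancel_left, norm_smul, Real.norm_eq_abs,
      abs_of_pos (by positivity), div_mul_eq_mul_div, div_lt_iff₀ (by positivity)]
    nlinarith
  · rw [mem_ball, dist_eq_norm, add_sub_cancel_left, norm_smul, Real.norm_eq_abs,
      abs_of_pos (by positivity), div_mul_eq_mul_div, div_lt_iff₀ (by positivity)]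
    nlinarith

lemma scale_mem {t : Fin 3 → E2} {i : Fin 3} {s : ℝ} (hs0 : 0 < s) (hs1 : s ≤ 1) {x : E2}
    (hx : x ∈ triSet t) : t i + s • (x - t i) ∈ triSet t :=
  (convex_tri t).add_smul_sub_mem (vertex_mem t i) hx ⟨hs0.le, hs1⟩

lemma vertex_dist {κ : ℝ} {t : Fin 3 → E2} (h : Reg κ t) (i : Fin 3) {q : E2} (hq : q ∈ triSet t) :
    ‖q - t i‖ ≤ dT t * (1 - lam t i q) := by
  have hl := (mem_tri h.1).1 hq
  have hsum := lam_sum h.1 q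
  have hc := lam_comb h.1 q
  have e : q - t i = ∑ k, lam t k q • (t k - t i) := by
    simp only [smul_sub, Finset.sum_sub_distrib, ← Finset.sum_smul, hsum, one_smul, hc]
  rw [e]
  have e2 : dT t * (1 - lam t i q) = ∑ k, if k = i then 0 else lam t k q * dT t := by
    rw [← hsum, ← Finset.add_sum_erase _ _ (Finset.mem_univ i),
      ← Finset.add_sum_erase Finset.univ (fun k => if k = i then 0 else lam t k q * dT t) (Finset.mem_univ i)]
    simp only [if_true, zero_add, add_sub_cancel_left, Finset.mul_sum]
    refine Finset.sum_congr rfl fun k hk => ?_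
    rw [if_neg (Finset.ne_of_mem_erase hk), mul_comm]
  rw [e2]
  refine norm_sum_le_of_le _ fun k _ => ?_
  split_ifs with hk
  · simp [hk]
  · rw [norm_smul, Real.norm_eq_abs, abs_of_nonneg (hl k), ← dist_eq_norm]
    exact mul_le_mul_of_nonneg_left (edge_le_dT t k i) (hl k)

lemma star_m (𝒯 : Triangulation Ω) (z : E2) : ∃ m : E2 → ℝ, ∀ t ∈ St 𝒯 z, ∀ i, t i = z →
    ∀ p ∈ triSet t, m p = 1 - lam t i p := by
  have : ∀ p : E2, ∃ v : ℝ, ∀ t ∈ St 𝒯 z, ∀ i, t i = z → p ∈ triSet t → v = 1 - lam t i p := by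
    intro p
    by_cases h : ∃ t ∈ St 𝒯 z, p ∈ triSet t
    · obtain ⟨t, ht, hp⟩ := h
      obtain ⟨ht1, i, hi⟩ := mem_St.1 ht
      refine ⟨1 - lam t i p, fun t' ht' i' hi' hp' => ?_⟩
      rw [lam_agree 𝒯 ht1 (mem_St.1 ht').1 (hi.trans hi'.symm) hp hp']
    · exact ⟨0, fun t ht i _ hp => absurd ⟨t, ht, hp⟩ h⟩
  choose m hm using this
  exact ⟨m, fun t ht i hi p hp => hm p t ht i hi hp⟩

lemma star_holder (𝒯 : Triangulation Ω) {κ K θ B : ℝ} {N : ℕ} (hκ : 0 < κ)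
    (hreg : ∀ t ∈ 𝒯.tris, Reg κ t) (hK : 0 ≤ K) (hθ : 0 < θ) (hB : 0 ≤ B) {z : E2}
    (hch : ChainProp 𝒯 z K N) (f : E2 → ℝ)
    (hf : ∀ t ∈ St 𝒯 z, ∀ x ∈ triSet t, ∀ y ∈ triSet t, |f x - f y| ≤ B * dist x y ^ θ)
    {x y : E2} (hx : x ∈ starZ 𝒯 z) (hy : y ∈ starZ 𝒯 z) :
    |f x - f y| ≤ 3 * N * (B * ((1 + 1 / κ) * K * dist x y) ^ θ) := by
  obtain ⟨δ, hδ, hch⟩ := hch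
  obtain ⟨m, hm⟩ := star_m 𝒯 z
  obtain ⟨s, hs0, hs1, hxs, hys⟩ := scale_exists hδ z x y
  obtain ⟨t, ht, hxt⟩ := mem_starZ.1 hx
  obtain ⟨t', ht', hyt'⟩ := mem_starZ.1 hy
  set R : E2 → E2 := fun p => z + (max s (m p))⁻¹ • (p - z) with hR
  have hRs : ∀ t ∈ St 𝒯 z, ∀ x ∈ triSet t, R (z + s • (x - z)) = x := by
    intro t ht x hx
    obtain ⟨ht1, i, hi⟩ := mem_St.1 ht
    have hD := tri_D 𝒯 ht1
    have h1 : z + s • (x - z) ∈ triSet t := by rw [← hi]; exact scale_mem hs0 hs1 hx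
    have h2 : m (z + s • (x - z)) ≤ s := by
      rw [hm t ht i hi _ h1, lam_hom, ← hi, lam_vertex hD, if_pos rfl]
      nlinarith [(mem_tri hD).1 hx i]
    simp only [hR, max_eq_left h2, add_sub_cancel_left, smul_smul, inv_mul_cancel₀ hs0.ne', one_smul]
    abel
  have hRm : ∀ t ∈ St 𝒯 z, ∀ p ∈ triSet t, R p ∈ triSet t := by
    intro t ht p hp
    obtain ⟨ht1, i, hi⟩ := mem_St.1 ht
    have hD := tri_D 𝒯 ht1
    have hmp := hm t ht i hi p hp
    have hu : 0 < max s (m p) := lt_max_of_lt_left hs0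
    rw [mem_tri hD]
    intro k
    simp only [hR]
    rw [lam_hom, ← hi, lam_vertex hD]
    have hpk := (mem_tri hD).1 hp k
    split_ifs with hk
    · subst hk
      have h3 : (max s (m p))⁻¹ * m p ≤ 1 := by
        rw [inv_mul_le_iff₀ hu, mul_one]; exact le_max_right _ _
      rw [hmp] at h3 ⊢
      linarith
    · have : 0 ≤ (max s (m p))⁻¹ * lam t k p := by positivity
      linarith
  have hRl : ∀ t ∈ St 𝒯 z, ∀ p ∈ triSet t, ∀ q ∈ triSet t,
      dist (R p) (R q) ≤ (1 + 1 / κ) / s * dist p q := by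
    intro t ht p hp q hq
    obtain ⟨ht1, i, hi⟩ := mem_St.1 ht
    have hD := tri_D 𝒯 ht1
    have hr := hreg t ht1
    have hmp := hm t ht i hi p hp
    have hmq := hm t ht i hi q hq
    set u := max s (m p) with hu
    set v := max s (m q) with hv
    have hus : s ≤ u := le_max_left _ _
    have hvs : s ≤ v := le_max_left _ _
    have hu0 : 0 < u := hs0.trans_le hus
    have hv0 : 0 < v := hs0.trans_le hvs
    have hd := hr.pos
    have e : R p - R q = u⁻¹ • (p - q) + (u⁻¹ - v⁻¹) • (q - z) := by
      simp only [hR, ← hu, ← hv]; module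
    have hq1 : ‖q - z‖ ≤ dT t * v := by
      have := vertex_dist hr i hq
      rw [hi, ← hmq] at this
      exact this.trans (mul_le_mul_of_nonneg_left (le_max_right _ _) hd.le)
    have huv : |u - v| ≤ dist p q / (κ * dT t) := by
      have h1 : |u - v| ≤ |m p - m q| := by
        rw [hu, hv, max_comm s, max_comm s]
        exact abs_max_sub_max_le_abs (m p) (m q) s
      have h2 := hr.lam_lip hκ i p q
      have h3 : |m p - m q| = |lam t i p - lam t i q| := by
        rw [hmp, hmq, ← abs_neg]; congr 1; ring
      linarith
    rw [dist_eq_norm, e]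
    refine (norm_add_le _ _).trans ?_
    rw [norm_smul, norm_smul, Real.norm_eq_abs, Real.norm_eq_abs, abs_of_pos (inv_pos.2 hu0),
      ← dist_eq_norm]
    have h1 : u⁻¹ ≤ 1 / s := by rw [one_div]; exact inv_anti₀ hs0 hus
    have h2 : |u⁻¹ - v⁻¹| = |u - v| / (u * v) := by
      rw [inv_sub_inv hu0.ne' hv0.ne', abs_div, abs_of_pos (mul_pos hu0 hv0), abs_sub_comm]
    have h3 : |u⁻¹ - v⁻¹| * ‖q - z‖ ≤ dist p q / (κ * dT t) / (u * v) * (dT t * v) := by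
      rw [h2]
      gcongr
    have h4 : dist p q / (κ * dT t) / (u * v) * (dT t * v) = 1 / κ * dist p q * u⁻¹ := by
      field_simp
    have h5 : 1 / κ * dist p q * u⁻¹ ≤ 1 / κ * dist p q * (1 / s) := by gcongr
    have h6 : u⁻¹ * dist p q ≤ 1 / s * dist p q := by gcongr
    have h7 : (1 + 1 / κ) / s * dist p q = 1 / s * dist p q + 1 / κ * dist p q * (1 / s) := by
      field_simp
    linarith
  have hcl : ∀ t ∈ St 𝒯 z, ∀ x ∈ triSet t, z + s • (x - z) ∈ closure Ω := by
    intro t ht x hx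
    obtain ⟨ht1, i, hi⟩ := mem_St.1 ht
    refine tri_sub_closure 𝒯 ht1 ?_
    rw [← hi]; exact scale_mem hs0 hs1 hx
  have hdist : dist (z + s • (x - z)) (z + s • (y - z)) = s * dist x y := by
    rw [dist_add_left, dist_smul₀, dist_sub_right, Real.norm_eq_abs, abs_of_pos hs0]
  have hfin := hch _ ⟨hcl t ht x hxt, hxs⟩ _ ⟨hcl t' ht' y hyt', hys⟩ (fun p => f (R p))
    (B * ((1 + 1 / κ) * K * dist x y) ^ θ) (by positivity) (Or.inl ?_)
  · simp only [hRs t ht x hxt, hRs t' ht' y hyt'] at hfin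
    exact hfin
  · intro t ht p hp q hq hpq
    refine (hf t ht _ (hRm t ht p hp) _ (hRm t ht q hq)).trans ?_
    refine mul_le_mul_of_nonneg_left (Real.rpow_le_rpow dist_nonneg ?_ hθ.le) hB
    refine (hRl t ht p hp q hq).trans ?_
    rw [hdist] at hpq
    calc (1 + 1 / κ) / s * dist p q ≤ (1 + 1 / κ) / s * (K * (s * dist x y)) := by gcongr
      _ = (1 + 1 / κ) * K * dist x y := by field_simp

lemma star_F (𝒯 : Triangulation Ω) {κ : ℝ} (hκ : 0 < κ)
    (hreg : ∀ t ∈ 𝒯.tris, Reg κ t) (z : E2) : ∃ F : E2 → ℝ, ∀ t ∈ St 𝒯 z,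
    ∀ p ∈ triSet t, p ≠ z → |F p - Real.log (dT t)| ≤ - Real.log κ := by
  have : ∀ p : E2, ∃ v : ℝ, ∀ t ∈ St 𝒯 z, p ∈ triSet t → p ≠ z →
      |v - Real.log (dT t)| ≤ - Real.log κ := by
    intro p
    by_cases h : ∃ t ∈ St 𝒯 z, p ∈ triSet t
    · obtain ⟨t, ht, hp⟩ := h
      obtain ⟨ht1, i, hi⟩ := mem_St.1 ht
      refine ⟨Real.log (dT t), fun t' ht' hp' hpz => ?_⟩
      obtain ⟨ht1', i', hi'⟩ := mem_St.1 ht'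
      have h1 := size_share 𝒯 hκ hreg ht1 ht1' (hi.trans hi'.symm) hp hp' (by rwa [hi])
      have h2 := size_share 𝒯 hκ hreg ht1' ht1 (hi'.trans hi.symm) hp' hp (by rwa [hi'])
      have p1 := (hreg t ht1).pos
      have p2 := (hreg t' ht1').pos
      have l1 := Real.log_le_log (mul_pos hκ p1) h1
      have l2 := Real.log_le_log (mul_pos hκ p2) h2
      rw [Real.log_mul hκ.ne' p1.ne'] at l1
      rw [Real.log_mul hκ.ne' p2.ne'] at l2
      rw [abs_le]; constructor <;> linarith
    · exact ⟨0, fun t ht hp => absurd ⟨t, ht, hp⟩ h⟩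
  choose F hF using this
  exact ⟨F, fun t ht p hp hpz => hF p t ht hp hpz⟩

lemma good_point {t' : Fin 3 → E2} (hD : DT t' ≠ 0) (i' : Fin 3) {x : E2} (hx : x ≠ t' i') :
    ∃ k, k ≠ i' ∧ t' i' ∉ segment ℝ x (t' k) := by
  by_contra hcon
  push Not at hcon
  have key : ∀ k, k ≠ i' → ∀ l, l ≠ i' → l ≠ k → lam t' l x = 0 := by
    intro k hk l hl hlk
    obtain ⟨a, b, ha, hb, hab, he⟩ := hcon k hk
    have h1 := lam_affine t' l a b hab x (t' k)
    rw [he, lam_vertex hD, lam_vertex hD, if_neg hl, if_neg hlk, mul_zero, add_zero] at h1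
    rcases mul_eq_zero.1 h1.symm with h2 | h2
    · exfalso
      subst h2
      have hb1 : b = 1 := by linarith
      rw [zero_smul, zero_add, hb1, one_smul] at he
      exact hk (tri_inj hD he)
    · exact h2
  have h3 := fin3_ne i'
  have e1 := key (i' + 1) h3.1.symm (i' + 2) h3.2.1.symm h3.2.2.symm
  have e2 := key (i' + 2) h3.2.1.symm (i' + 1) h3.1.symm h3.2.2
  have hs := lam_sum hD x
  have hc := lam_comb hD x
  have hz : ∀ k, k ≠ i' → lam t' k x = 0 := by
    intro k hk
    rcases fin3_cases i' k with h | h | h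
    · exact absurd h hk
    · rw [h]; exact e2
    · rw [h]; exact e1
  rw [Finset.sum_eq_single i' (fun k _ hk => hz k hk) (by simp)] at hs
  rw [Finset.sum_eq_single i' (fun k _ hk => by rw [hz k hk, zero_smul]) (by simp), hs, one_smul] at hc
  exact hx hc.symm

lemma star_comp (𝒯 : Triangulation Ω) {κ K : ℝ} {N : ℕ} (hκ : 0 < κ)
    (hreg : ∀ t ∈ 𝒯.tris, Reg κ t) {z : E2}
    (hch : ChainProp 𝒯 z K N) {t t' : Fin 3 → E2} (ht : t ∈ St 𝒯 z) (ht' : t' ∈ St 𝒯 z) :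
    dT t' ≤ Real.exp ((6 * N + 2) * (- Real.log κ)) * dT t := by
  obtain ⟨δ, hδ, hch⟩ := hch
  obtain ⟨F, hF⟩ := star_F 𝒯 hκ hreg z
  obtain ⟨ht1, i, hi⟩ := mem_St.1 ht
  obtain ⟨ht1', i', hi'⟩ := mem_St.1 ht'
  have hD := tri_D 𝒯 ht1
  have hD' := tri_D 𝒯 ht1'
  have hlog : 0 ≤ - Real.log κ := by
    have := Real.log_nonpos hκ.le (hreg t ht1).kap_le
    linarith
  have hne : t (i + 1) ≠ t' i' := by
    rw [hi', ← hi]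
    exact fun h => (fin3_ne i).1 (tri_inj hD h).symm
  obtain ⟨k, hk, hseg⟩ := good_point hD' i' hne
  rw [hi'] at hseg hne
  have hnek : t' k ≠ z := by rw [← hi']; exact fun h => hk (tri_inj hD' h)
  obtain ⟨s, hs0, hs1, hxs, hys⟩ := scale_exists hδ z (t (i + 1)) (t' k)
  set x := z + s • (t (i + 1) - z) with hx
  set y := z + s • (t' k - z) with hy
  have hxt : x ∈ triSet t := by
    rw [hx, ← hi]; exact scale_mem hs0 hs1 (vertex_mem _ _)
  have hyt : y ∈ triSet t' := by
    rw [hy, ← hi']; exact scale_mem hs0 hs1 (vertex_mem _ _)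
  have hxz : x ≠ z := by
    rw [hx]; intro h
    rw [add_eq_left, smul_eq_zero, sub_eq_zero] at h
    exact h.elim hs0.ne' hne
  have hyz : y ≠ z := by
    rw [hy]; intro h
    rw [add_eq_left, smul_eq_zero, sub_eq_zero] at h
    exact h.elim hs0.ne' hnek
  have hzs : z ∉ segment ℝ x y := by
    rintro ⟨a, b, ha, hb, hab, he⟩
    refine hseg ⟨a, b, ha, hb, hab, ?_⟩
    have hb' : b = 1 - a := by linarith
    subst hb'
    have e : a • x + (1 - a) • y = z + s • (a • t (i + 1) + (1 - a) • t' k - z) := by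
      rw [hx, hy]; module
    rw [e, add_eq_left, smul_eq_zero, sub_eq_zero] at he
    exact he.resolve_left hs0.ne'
  have h := hch x ⟨tri_sub_closure 𝒯 ht1 hxt, hxs⟩ y ⟨tri_sub_closure 𝒯 ht1' hyt, hys⟩ F
    (2 * (- Real.log κ)) (by positivity) (Or.inr ⟨hxz, hyz, hzs, ?_⟩)
  · have h1 := abs_le.1 (hF t ht x hxt hxz)
    have h2 := abs_le.1 (hF t' ht' y hyt hyz)
    have h3 := abs_le.1 h
    have p1 := (hreg t ht1).pos
    have p2 := (hreg t' ht1').pos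
    rw [← Real.log_le_log_iff p2 (by positivity), Real.log_mul (Real.exp_pos _).ne' p1.ne', Real.log_exp]
    linarith [h1.1, h1.2, h2.1, h2.2, h3.1, h3.2]
  · intro t ht p hp q hq hpz hqz
    have h1 := abs_le.1 (hF t ht p hp hpz)
    have h2 := abs_le.1 (hF t ht q hq hqz)
    rw [abs_le]
    constructor <;> linarith [h1.1, h1.2, h2.1, h2.2]

end star
end


lemma gagSq_eq {θ : ℝ} {Ω H : Set E2} {g : E2 → ℝ} (hfin : GagFin θ Ω g) (hH : H ⊆ Ω) :
    gagE θ H g = ENNReal.ofReal (gagSq θ H g) := by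
  have hIntg : Integrable (gk θ g) ((volume.restrict H).prod (volume.restrict H)) := by
    have h1 : IntegrableOn (gk θ g) (Ω ×ˢ Ω) ((volume : Measure E2).prod volume) := by
      rw [IntegrableOn, ← Measure.prod_restrict]; exact hfin
    rw [Measure.prod_restrict]
    exact h1.mono_set (prod_mono hH hH)
  have e1 : gagSq θ H g = ∫ p, gk θ g p ∂((volume.restrict H).prod (volume.restrict H)) := by
    rw [integral_prod _ hIntg]; rfl
  rw [e1, ofReal_integral_eq_lintegral_ofReal hIntg (ae_of_all _ fun p => gk_nonneg θ g p),
    lintegral_prod _ hIntg.aestronglyMeasurable.aemeasurable.ennreal_ofReal]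
  rfl

lemma gagE_congr {θ : ℝ} {H : Set E2} {g g' : E2 → ℝ} (h : g =ᵐ[volume.restrict H] g') :
    gagE θ H g = gagE θ H g' := by
  unfold gagE
  refine lintegral_congr_ae ?_
  filter_upwards [h] with x hx
  refine lintegral_congr_ae ?_
  filter_upwards [h] with y hy
  simp [gk, hx, hy]

lemma gagE_mono {θ : ℝ} {G H : Set E2} (h : G ⊆ H) (g : E2 → ℝ) : gagE θ G g ≤ gagE θ H g := by
  unfold gagE
  refine (lintegral_mono_set h).trans (lintegral_mono fun x => lintegral_mono_set h)

lemma weak_restrict {Ω G : Set E2} (hΩ : IsOpen Ω) (hG : IsOpen G) (h : G ⊆ Ω) {i : Fin 2}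
    {v g g' : E2 → ℝ} (hw : HasWeakPD Ω i v g) (hg : g =ᵐ[volume.restrict Ω] g') :
    HasWeakPD G i v g' := by
  intro φ hφ
  have h0 := hw φ ⟨hφ.1, hφ.2.1, hφ.2.2.trans h⟩
  have hz : ∀ x ∈ Ω \ G, φ x = 0 := fun x hx =>
    image_eq_zero_of_notMem_tsupport fun hx' => hx.2 (hφ.2.2 hx')
  have hz2 : ∀ x ∈ Ω \ G, pd i φ x = 0 := fun x hx => by
    have : fderiv ℝ φ x = 0 := by
      by_contra hne
      exact hx.2 (hφ.2.2 (support_fderiv_subset ℝ hne))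
    simp [pd, this]
  have hgG : g =ᵐ[volume.restrict G] g' := ae_restrict_of_ae_restrict_of_subset h hg
  have i1 := setIntegral_eq_of_subset_of_forall_sdiff_eq_zero (μ := volume)
    (f := fun x => v x * pd i φ x) hΩ.measurableSet h (fun x hx => by simp only [hz2 x hx, mul_zero])
  have i2 := setIntegral_eq_of_subset_of_forall_sdiff_eq_zero (μ := volume)
    (f := fun x => g x * φ x) hΩ.measurableSet h (fun x hx => by simp only [hz x hx, mul_zero])
  rw [i1, i2] at h0
  rw [h0]
  congr 1
  refine integral_congr_ae ?_
  filter_upwards [hgG] with x hx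
  rw [hx]

lemma lim_le {a A S : ℝ} (h : ∀ M > S, a ≤ A * M) : a ≤ A * S := by
  have ht : Tendsto (fun M => A * M) (𝓝[>] S) (𝓝 (A * S)) :=
    ((continuous_const.mul continuous_id).tendsto S).mono_left nhdsWithin_le_nhds
  exact ge_of_tendsto ht (by filter_upwards [self_mem_nhdsWithin] with M hM using h M hM)

lemma L2_bound {μ : Measure E2} {A : Set E2} (hA : MeasurableSet A) (hfin : μ A < ⊤) {F : E2 → ℝ}
    {Q : ℝ} (hQ : 0 ≤ Q) (hF : ∀ x ∈ A, |F x| ≤ Q) :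
    Real.sqrt (∫ x in A, F x ^ 2 ∂μ) ≤ Q * Real.sqrt (μ A).toReal := by
  have h := norm_setIntegral_le_of_norm_le_const (μ := μ) (s := A) (f := fun x => F x ^ 2)
    (C := Q ^ 2) hfin (fun x hx => by
      rw [Real.norm_eq_abs, abs_pow]
      exact pow_le_pow_left₀ (abs_nonneg _) (hF x hx) 2)
  have h2 : (∫ x in A, F x ^ 2 ∂μ) ≤ Q ^ 2 * (μ A).toReal := (le_abs_self _).trans h
  refine (Real.sqrt_le_sqrt h2).trans ?_
  rw [Real.sqrt_mul (by positivity), Real.sqrt_sq hQ]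

lemma gagSq_nonneg (θ : ℝ) (G : Set E2) (g : E2 → ℝ) : 0 ≤ gagSq θ G g :=
  integral_nonneg fun x => integral_nonneg fun y => gk_nonneg θ g (x, y)

lemma holder_part (Ω : Set E2) (hΩo : IsOpen Ω) (hΩb : Bornology.IsBounded Ω)
    (hΩl : HasLipschitzBoundary Ω) {θ κ K C1 : ℝ} (hθ0 : 0 < θ) (hκ : 0 < κ)
    (hK : 0 ≤ K) {N ℓ : ℕ} (hℓ : 1 ≤ ℓ) (hC1 : 0 < C1)
    (htri : ∀ t : Fin 3 → E2, Reg κ t → ∀ (w W : E2 → ℝ) (g : Fin 2 → E2 → ℝ) (M : ℝ),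
      0 < M → ContinuousOn w (triSet t) →
      (∀ i, HasWeakPD (interior (triSet t)) i w (g i)) → (∀ i, Measurable (g i)) →
      (∀ i, IntegrableOn (g i) (interior (triSet t))) →
      (∀ i, gagE θ (interior (triSet t)) (g i) ≤ ENNReal.ofReal (M ^ 2)) →
      (∃ p : MvPolynomial (Fin 2) ℝ, p.totalDegree ≤ ℓ ∧ ∀ x ∈ triSet t, W x = pfun p x) →
      (∀ x ∈ lagNodes ℓ t, W x = w x) →
      ∀ x ∈ triSet t, ∀ y ∈ triSet t,
        |(w x - W x) - (w y - W y)| ≤ C1 * dist x y ^ θ * M)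
    (𝒯 : Triangulation Ω) (hreg : ∀ t ∈ 𝒯.tris, Reg κ t)
    (w : E2 → ℝ) (g : Fin 2 → E2 → ℝ) (W : E2 → ℝ)
    (hweak : ∀ i, HasWeakPD Ω i w (g i))
    (hg2 : ∀ i, MemLp (g i) 2 (volume.restrict Ω))
    (hgag : ∀ i, GagFin θ Ω (g i))
    (hwc : ContinuousOn w (closure Ω))
    (hw0 : ∀ x ∈ frontier Ω, w x = 0)
    (hW : MemV Ω 𝒯 ℓ W)
    (hnode : ∀ x ∈ nodes Ω 𝒯 ℓ, W x = w x) {z : E2}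
    (hch : ChainProp 𝒯 z K N) :
    ∀ x ∈ starZ 𝒯 z, ∀ y ∈ starZ 𝒯 z, |(w x - W x) - (w y - W y)| ≤
      3 * N * C1 * ((1 + 1 / κ) * K) ^ θ * dist x y ^ θ *
        Real.sqrt (∑ i : Fin 2, gagSq θ (interior (starZ 𝒯 z)) (g i)) := by
  intro x hx y hy
  refine lim_le fun M hM => ?_
  have hM0 : 0 < M := (Real.sqrt_nonneg _).trans_lt hM
  set H := interior (starZ 𝒯 z) with hH
  have hsub : starZ 𝒯 z ⊆ closure Ω := by
    intro p hp
    obtain ⟨t, ht, hpt⟩ := mem_starZ.1 hp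
    exact tri_sub_closure 𝒯 (mem_St.1 ht).1 hpt
  have hHΩ : H ⊆ Ω := by
    rw [← interior_closure_eq hΩo hΩb hΩl]
    exact interior_mono hsub
  have hgM : ∀ i, gagSq θ H (g i) ≤ M ^ 2 := by
    intro i
    have h1 : gagSq θ H (g i) ≤ ∑ i : Fin 2, gagSq θ H (g i) :=
      Finset.single_le_sum (f := fun i => gagSq θ H (g i))
        (fun i _ => gagSq_nonneg θ H (g i)) (Finset.mem_univ i)
    exact h1.trans (Real.sqrt_le_left hM0.le |>.1 hM.le)
  have haem : ∀ i, AEMeasurable (g i) (volume.restrict Ω) := fun i =>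
    (hg2 i).aestronglyMeasurable.aemeasurable
  set g' : Fin 2 → E2 → ℝ := fun i => (haem i).mk (g i) with hg'
  have hgg' : ∀ i, g i =ᵐ[volume.restrict Ω] g' i := fun i => (haem i).ae_eq_mk
  have hloc : ∀ t ∈ St 𝒯 z, ∀ x ∈ triSet t, ∀ y ∈ triSet t,
      |(w x - W x) - (w y - W y)| ≤ C1 * M * dist x y ^ θ := by
    intro t ht x hx y hy
    have ht1 := (mem_St.1 ht).1
    have hintH : interior (triSet t) ⊆ H := interior_mono fun p hp => mem_starZ.2 ⟨t, ht, hp⟩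
    have hIntgΩ := hintH.trans hHΩ
    have h := htri t (hreg t ht1) w W g' M hM0 (hwc.mono (tri_sub_closure 𝒯 ht1))
      (fun i => weak_restrict hΩo isOpen_interior hIntgΩ (hweak i) (hgg' i))
      (fun i => (haem i).measurable_mk)
      (fun i => by
        have h2 : IntegrableOn (g' i) Ω := by
          have : IsFiniteMeasure (volume.restrict Ω) :=
            ⟨by rw [Measure.restrict_apply_univ]; exact hΩb.measure_lt_top⟩
          exact ((hg2 i).integrable (by norm_num)).congr (hgg' i)
        exact h2.mono_set hIntgΩ)
      (fun i => by
        refine (gagE_mono hintH _).trans ?_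
        rw [← gagE_congr (ae_restrict_of_ae_restrict_of_subset hHΩ (hgg' i)), gagSq_eq (hgag i) hHΩ]
        exact ENNReal.ofReal_le_ofReal (hgM i))
      (hW.2.2 t ht1)
      (fun p hp => by
        have hpc := tri_sub_closure 𝒯 ht1 (lagNode_mem hℓ t hp)
        by_cases hpΩ : p ∈ Ω
        · exact hnode p ⟨hpΩ, t, ht1, hp⟩
        · have hpf : p ∈ frontier Ω := by
            rw [hΩo.frontier_eq]; exact ⟨hpc, hpΩ⟩
          rw [hW.2.1 p hpf, hw0 p hpf])
      x hx y hy
    linarith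
  have h := star_holder 𝒯 hκ hreg hK hθ0 (by positivity) hch (fun x => w x - W x) hloc hx hy
  refine h.trans (le_of_eq ?_)
  rw [Real.mul_rpow (by positivity) dist_nonneg]
  ring

/-- **Interpolation error estimates** (Lemma 3.4): with `w̃ := w − I_𝒯 w` for the
Lagrange interpolant `I_𝒯 w ∈ V_𝒯` of `w ∈ H^{1+θ}(Ω) ∩ C(Ω̄)` with `w = 0` on `∂Ω`:
for every vertex `z` and `x, y ∈ ω_z`, `|w̃(x) − w̃(y)| ≤ C |x−y|^θ |w|_{1+θ,ω_z}`, and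
if `c = w̃(x^z)` for some `x^z ∈ ω_z`, then `‖w̃ − c‖_{0,T} ≤ C h_T^{1+θ} |w|_{1+θ,ω_z}`
and `‖w̃ − c‖_{0,E} ≤ C h_E^{1/2+θ} |w|_{1+θ,ω_z}` for all triangles `T` and edges `E`
containing `z`.  Here `g i` are the weak partial derivatives of `w`. -/
theorem interpolation_error (Ω : Set E2) (hΩo : IsOpen Ω) (hΩc : IsConnected Ω)
    (hΩb : Bornology.IsBounded Ω) (hΩp : IsPolygonal Ω)
    (hΩl : HasLipschitzBoundary Ω)
    (θ : ℝ) (hθ0 : 0 < θ) (hθ : θ < 1 / 2) (ℓ : ℕ) (hℓ : 1 ≤ ℓ) (σ : ℝ) (hσ : 0 < σ) :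
    ∃ C : ℝ, 0 < C ∧ ∀ (𝒯 : Triangulation Ω), 𝒯.angleGE σ →
      ∀ (w : E2 → ℝ) (g : Fin 2 → E2 → ℝ) (W : E2 → ℝ),
        MemLp w 2 (volume.restrict Ω) →
        (∀ i, HasWeakPD Ω i w (g i)) →
        (∀ i, MemLp (g i) 2 (volume.restrict Ω)) →
        (∀ i, GagFin θ Ω (g i)) →
        ContinuousOn w (closure Ω) →
        (∀ x ∈ frontier Ω, w x = 0) →
        MemV Ω 𝒯 ℓ W →
        (∀ x ∈ nodes Ω 𝒯 ℓ, W x = w x) →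
        ∀ z ∈ 𝒯.verts,
          (∀ x ∈ starZ 𝒯 z, ∀ y ∈ starZ 𝒯 z,
            |(w x - W x) - (w y - W y)| ≤
              C * dist x y ^ θ *
                Real.sqrt (∑ i : Fin 2, gagSq θ (interior (starZ 𝒯 z)) (g i))) ∧
          ∀ (c : ℝ), (∃ xz ∈ starZ 𝒯 z, c = w xz - W xz) →
            (∀ t ∈ 𝒯.tris, z ∈ triSet t →
              Real.sqrt (∫ x in triSet t, ((w x - W x) - c) ^ 2) ≤
                C * hT t ^ (1 + θ) *
                  Real.sqrt (∑ i : Fin 2, gagSq θ (interior (starZ 𝒯 z)) (g i))) ∧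
            (∀ t ∈ 𝒯.tris, ∀ j : Fin 3, z ∈ edgeSeg t j →
              Real.sqrt (∫ x in edgeSeg t j, ((w x - W x) - c) ^ 2 ∂(μH[1])) ≤
                C * dist (t (j + 1)) (t (j + 2)) ^ ((1 : ℝ) / 2 + θ) *
                  Real.sqrt (∑ i : Fin 2, gagSq θ (interior (starZ 𝒯 z)) (g i))) := by
  obtain ⟨κ, hκ, hreg0⟩ := exists_reg hσ
  obtain ⟨N, hN⟩ := card_St hκ
  obtain ⟨K, hK, hpath⟩ := path_lemma hΩo hΩb hΩl
  obtain ⟨C1, hC1, htri⟩ := tri_est hℓ hθ0 (by linarith : θ < 1) hκ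
  set CH := 3 * N * C1 * ((1 + 1 / κ) * K) ^ θ with hCH
  have hCH0 : 0 ≤ CH := by positivity
  set E := Real.exp ((6 * N + 2) * (- Real.log κ)) with hE
  have hE0 : 0 < E := Real.exp_pos _
  have hv := v0_pos
  set ρ := Real.sqrt (v0 * κ) with hρ
  have hρ0 : 0 < ρ := Real.sqrt_pos.2 (by positivity)
  set A1 := CH * ((1 + E) / ρ) ^ θ with hA1
  set A2 := CH * ((1 + E) / κ) ^ θ with hA2
  have hA10 : 0 ≤ A1 := by positivity
  have hA20 : 0 ≤ A2 := by positivity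
  refine ⟨CH + A1 + A2 + 1, by positivity, ?_⟩
  intro 𝒯 hang w g W _ hweak hg2 hgag hwc hw0 hW hnode z hz
  have hreg : ∀ t ∈ 𝒯.tris, Reg κ t := fun t ht => hreg0 t (𝒯.nondeg t ht) (hang t ht)
  have hch : ChainProp 𝒯 z K N := path_chain 𝒯 (hN Ω 𝒯 hreg z) hz hpath
  have hhol := holder_part Ω hΩo hΩb hΩl hθ0 hκ (by linarith) hℓ hC1 htri 𝒯 hreg w g W hweak hg2
    hgag hwc hw0 hW hnode hch
  rw [← hCH] at hhol
  set S := Real.sqrt (∑ i : Fin 2, gagSq θ (interior (starZ 𝒯 z)) (g i)) with hS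
  have hS0 : 0 ≤ S := Real.sqrt_nonneg _
  refine ⟨fun x hx y hy => (hhol x hx y hy).trans ?_, ?_⟩
  · gcongr
    linarith
  rintro c ⟨xz, hxz, rfl⟩
  have hinSt : ∀ t ∈ 𝒯.tris, z ∈ triSet t → t ∈ St 𝒯 z := by
    intro t ht hzt
    obtain ⟨t', ht', i', hi'⟩ := mem_verts.1 hz
    rw [← hi'] at hzt ⊢
    exact mem_St.2 ⟨ht, vertex_of_mem 𝒯 ht ht' hzt⟩
  have hsup : ∀ t ∈ St 𝒯 z, ∀ x ∈ triSet t,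
      |(w x - W x) - (w xz - W xz)| ≤ CH * ((1 + E) * dT t) ^ θ * S := by
    intro t ht x hx
    obtain ⟨t', ht', hx'⟩ := mem_starZ.1 hxz
    have hd : dist x xz ≤ (1 + E) * dT t := by
      have hc := star_comp 𝒯 hκ hreg hch ht ht'
      rw [← hE] at hc
      obtain ⟨ht1, i, hi⟩ := mem_St.1 ht
      obtain ⟨ht1', i', hi'⟩ := mem_St.1 ht'
      have h1 : dist x z ≤ dT t := tri_diam t hx (hi ▸ vertex_mem t i)
      have h2 : dist z xz ≤ dT t' := tri_diam t' (hi' ▸ vertex_mem t' i') hx'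
      have := dist_triangle x z xz
      linarith
    refine (hhol x (mem_starZ.2 ⟨t, ht, hx⟩) xz hxz).trans ?_
    gcongr
  constructor
  · intro t ht hzt
    have hr := hreg t ht
    have hd := hr.pos
    have hvol := hr.vol
    have hh : ρ * dT t ≤ hT t := by
      rw [hT, hρ, ← Real.sqrt_sq hd.le, ← Real.sqrt_mul (by positivity)]
      exact Real.sqrt_le_sqrt hvol
    have hT0 : 0 < hT t := lt_of_lt_of_le (by positivity) hh
    have hQ : ∀ x ∈ triSet t, |(w x - W x) - (w xz - W xz)| ≤ A1 * hT t ^ θ * S := by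
      intro x hx
      refine (hsup t (hinSt t ht hzt) x hx).trans ?_
      rw [hA1, mul_assoc CH (((1 + E) / ρ) ^ θ), ← Real.mul_rpow (by positivity) hT0.le]
      have : (1 + E) * dT t ≤ (1 + E) / ρ * hT t := by
        rw [div_mul_eq_mul_div, le_div_iff₀ hρ0]
        nlinarith
      gcongr
    refine (L2_bound (compact_tri t).measurableSet (compact_tri t).measure_lt_top
      (by positivity) hQ).trans ?_
    rw [← hT, Real.rpow_add hT0, Real.rpow_one]
    have : A1 * hT t ^ θ * S * hT t = A1 * (hT t * hT t ^ θ) * S := by ring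
    rw [this]
    gcongr
    linarith
  · intro t ht j hzj
    have hr := hreg t ht
    have hd := hr.pos
    have hzt := edge_sub t j hzj
    set e := dist (t (j + 1)) (t (j + 2)) with he
    have hh : κ * dT t ≤ e := hr.edge (fin3_ne j).2.2
    have he0 : 0 < e := lt_of_lt_of_le (by positivity) hh
    have hQ : ∀ x ∈ edgeSeg t j, |(w x - W x) - (w xz - W xz)| ≤ A2 * e ^ θ * S := by
      intro x hx
      refine (hsup t (hinSt t ht hzt) x (edge_sub t j hx)).trans ?_
      rw [hA2, mul_assoc CH (((1 + E) / κ) ^ θ), ← Real.mul_rpow (by positivity) he0.le]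
      have : (1 + E) * dT t ≤ (1 + E) / κ * e := by
        rw [div_mul_eq_mul_div, le_div_iff₀ hκ]
        nlinarith
      gcongr
    have hμ : μH[1] (edgeSeg t j) = edist (t (j + 1)) (t (j + 2)) := hausdorffMeasure_segment _ _
    have hcl : MeasurableSet (edgeSeg t j) := by
      have : IsCompact (edgeSeg t j) := by
        rw [edgeSeg, segment_eq_image_lineMap]
        exact isCompact_Icc.image AffineMap.lineMap_continuous
      exact this.measurableSet
    refine (L2_bound hcl (by rw [hμ]; exact edist_lt_top _ _) (by positivity) hQ).trans ?_
    rw [hμ, ← dist_edist, ← he, Real.rpow_add he0, ← Real.sqrt_eq_rpow]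
    have : A2 * e ^ θ * S * Real.sqrt e = A2 * (Real.sqrt e * e ^ θ) * S := by ring
    rw [this]
    gcongr
    linarith

end
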